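/- arXiv:2107.12126 — 4 statements merged into one kernel-verified Lean document; each statement's English description precedes it below -/
import Mathlib

section
/- If (G, σ) is a signed 2-degenerate simple graph on n vertices (n ≥ 3), then χ_c(G, σ) ≤ 4 − 2/⌊(n+1)/2⌋. -/
/-!
Work on a circle of circumference `4`: an edge `uv` asks for distance `> 1` if it is positive and
for distance `< 1` if it is negative. A new vertex with two already placed neighbours can be placed
as soon as these neighbours are neither equal nor antipodal, because the two open half circles it
must lie in then meet; the intersection is open, so the new point can be chosen in general
position. Hence every signed 2-degenerate graph has such a strict placement in general position
(`exists_strict_placement`).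

Write the point of `v` as a quarter `m v ∈ {0, 1, 2, 3}` plus an offset `a v` in that quarter, the
offsets being distinct. Only the quarters and the order of the offsets decide which edges are
satisfied, so the offsets may be replaced by integers: run through the vertices by increasing
offset and let `h` be the least nondecreasing sequence of naturals with `h ≡ m` modulo `2`
(`parityLift`), which grows by at most `1` per vertex. On a circle with `4 (2k - 1)` equally spaced
points, `2k` of them per unit of length, put `v` at `h v + (2k - 1) m v`. The circumference is
`4 - 2 / k`, and since `h` varies by at most `n - 1 ≤ 2k - 1`, all distances are as required: this
is the arithmetic of `gridPos_edge`.
-/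


open scoped ENNReal

/-- A circular `r`-coloring of the signed graph `(G, σ)` (`σ e = true` meaning the edge `e`
is positive): a map `f : V → [0, r)` such that positive edges `uv` satisfy
`1 ≤ |f u - f v| ≤ r - 1` and negative edges satisfy
`|f u - f v| ≤ r/2 - 1` or `|f u - f v| ≥ r/2 + 1`. -/
def IsCircularColoring {V : Type*} (G : SimpleGraph V) (σ : Sym2 V → Bool) (r : ℝ)
    (f : V → ℝ) : Prop :=
  (∀ v, 0 ≤ f v ∧ f v < r) ∧
  ∀ u v, G.Adj u v →
    (if σ s(u, v) then 1 ≤ |f u - f v| ∧ |f u - f v| ≤ r - 1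
     else |f u - f v| ≤ r / 2 - 1 ∨ r / 2 + 1 ≤ |f u - f v|)

def HasCircularColoring {V : Type*} (G : SimpleGraph V) (σ : Sym2 V → Bool) (r : ℝ) : Prop :=
  ∃ f : V → ℝ, IsCircularColoring G σ r f

/-- The circular chromatic number of a signed graph, as an element of `ℝ≥0∞`:
the infimum of all real numbers `r ≥ 2` admitting a circular `r`-coloring
(`⊤` if there is none). -/
noncomputable def circChrom {V : Type*} (G : SimpleGraph V) (σ : Sym2 V → Bool) : ℝ≥0∞ :=
  sInf (ENNReal.ofReal '' {r : ℝ | 2 ≤ r ∧ HasCircularColoring G σ r})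

/-- A graph is planar if it has an embedding in the plane: points for vertices and
injective continuous arcs for edges, where an arc joins the endpoints of its edge,
the interior of an arc avoids all vertex points, and two distinct arcs meet only
at vertex points (hence only at common endpoints). -/
def IsPlanar {V : Type*} (G : SimpleGraph V) : Prop :=
  ∃ (p : V → ℝ × ℝ) (γ : Sym2 V → unitInterval → ℝ × ℝ),
    Function.Injective p ∧
    (∀ e ∈ G.edgeSet, Continuous (γ e) ∧ Function.Injective (γ e)) ∧
    (∀ u v, G.Adj u v → ({γ s(u, v) 0, γ s(u, v) 1} : Set (ℝ × ℝ)) = {p u, p v}) ∧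
    (∀ e ∈ G.edgeSet, ∀ t : unitInterval, t ≠ 0 → t ≠ 1 → γ e t ∉ Set.range p) ∧
    (∀ e ∈ G.edgeSet, ∀ e' ∈ G.edgeSet, e ≠ e' → ∀ s t : unitInterval,
      γ e s = γ e' t → γ e s ∈ Set.range p)

/-- A graph is bipartite if its vertex set splits into a part `A` and its complement
such that every edge joins the two parts. -/
def IsBipartiteGraph {V : Type*} (G : SimpleGraph V) : Prop :=
  ∃ A : Set V, ∀ u v, G.Adj u v → (u ∈ A ↔ v ∉ A)

/-- A graph is 2-degenerate if every nonempty (induced) subgraph has a vertex of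
degree at most 2 in it. -/
def TwoDegenerate {V : Type*} (G : SimpleGraph V) : Prop :=
  ∀ s : Set V, s.Nonempty → ∃ v ∈ s, ({u ∈ s | G.Adj v u}).ncard ≤ 2

/-! ### Strict placement on the circle of circumference 4 -/

/-- For points in quarters `p` and `q` of the circle, the first with the smaller offset: whether
their distance exceeds a quarter turn. -/
def farQuarters (p q : Fin 4) : Bool := decide (q - p = 1 ∨ q - p = 2)

lemma farQuarters_eq : ∀ p q : Fin 4, farQuarters p q =
    decide ((q.val + 4 - p.val) % 4 = 1 ∨ (q.val + 4 - p.val) % 4 = 2) := by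
  decide

/-- Whether two points of the circle, each given by its offset within a quarter and by the index of
that quarter, are more than a quarter turn apart. Meaningful when the offsets differ. -/
noncomputable def far (p q : ℝ × Fin 4) : Bool :=
  if p.1 < q.1 then farQuarters p.2 q.2 else farQuarters q.2 p.2

lemma far_comm {p q : ℝ × Fin 4} (h : p.1 ≠ q.1) : far p q = far q p := by
  rcases lt_or_gt_of_ne h with h | h
  · simp [far, h, h.not_gt]
  · simp [far, h, h.not_gt]

/-- A new point with offset below those of two given points, or between them, can realise any
pattern of being far from or near to each of them. -/
lemma exists_quarter : ∀ (m₁ m₂ : Fin 4) (e₁ e₂ : Bool), ∃ m : Fin 4,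
    (farQuarters m m₁ = e₁ ∧ farQuarters m m₂ = e₂) ∨
      (farQuarters m₁ m = e₁ ∧ farQuarters m m₂ = e₂) := by
  decide

/-- Two open half circles with distinct, non-antipodal centres meet, and their intersection
contains points whose offset avoids a given finite set. -/
lemma exists_point_of_lt (F : Set ℝ) (hF : F.Finite) (p q : ℝ × Fin 4) (hpq : p.1 < q.1)
    (e₁ e₂ : Bool) : ∃ x : ℝ × Fin 4, x.1 ∉ F ∧ far x p = e₁ ∧ far x q = e₂ := by
  obtain ⟨m, ⟨h1, h2⟩ | ⟨h1, h2⟩⟩ := exists_quarter p.2 q.2 e₁ e₂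
  · obtain ⟨a, ha, haF⟩ := (Set.Iio_infinite p.1).exists_notMem_finite hF
    refine ⟨(a, m), haF, ?_, ?_⟩
    · simpa [far, Set.mem_Iio.1 ha] using h1
    · simpa [far, (Set.mem_Iio.1 ha).trans hpq] using h2
  · obtain ⟨a, ha, haF⟩ := (Set.Ioo_infinite hpq).exists_notMem_finite hF
    refine ⟨(a, m), haF, ?_, ?_⟩
    · simpa [far, ha.1.not_gt] using h1
    · simpa [far, ha.2] using h2

lemma exists_point (F : Set ℝ) (hF : F.Finite) (p q : ℝ × Fin 4) (hpq : p.1 ≠ q.1)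
    (e₁ e₂ : Bool) : ∃ x : ℝ × Fin 4, x.1 ∉ F ∧ far x p = e₁ ∧ far x q = e₂ := by
  rcases lt_or_gt_of_ne hpq with h | h
  · exact exists_point_of_lt F hF p q h e₁ e₂
  · obtain ⟨x, hx, h1, h2⟩ := exists_point_of_lt F hF q p h e₂ e₁
    exact ⟨x, hx, h2, h1⟩

/-- The greedy step: a vertex with at most two neighbours among vertices placed in general position
can be placed too. -/
lemma exists_point_of_ncard_le_two {V : Type*} [Finite V] (T : Set V) (hT : T.ncard ≤ 2)
    (x : V → ℝ × Fin 4) (hx : Set.InjOn (fun v => (x v).1) T) (F : Set ℝ) (hF : F.Finite)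
    (e : V → Bool) : ∃ y : ℝ × Fin 4, y.1 ∉ F ∧ ∀ u ∈ T, far y (x u) = e u := by
  obtain h | h | h : T.ncard = 0 ∨ T.ncard = 1 ∨ T.ncard = 2 := by omega
  · rw [Set.ncard_eq_zero] at h
    subst h
    obtain ⟨a, ha⟩ := hF.exists_notMem
    exact ⟨(a, 0), ha, by simp⟩
  · obtain ⟨u, rfl⟩ := Set.ncard_eq_one.1 h
    -- The second centre is a dummy, with an offset different from that of `u`.
    obtain ⟨y, hy, h1, -⟩ := exists_point F hF (x u) ((x u).1 + 1, 0) (by simp) (e u) true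
    exact ⟨y, hy, by simpa using h1⟩
  · obtain ⟨u, w, huw, rfl⟩ := Set.ncard_eq_two.1 h
    obtain ⟨y, hy, h1, h2⟩ := exists_point F hF (x u) (x w)
      (fun h => huw (hx (by simp) (by simp) h)) (e u) (e w)
    exact ⟨y, hy, by simp [h1, h2]⟩

/-- A signed 2-degenerate graph has a strict placement in general position on the circle of
circumference `4`: the offsets of the vertices within their quarters are distinct, and adjacent
vertices are more than a quarter turn apart exactly when the edge is positive. -/
lemma exists_strict_placement {V : Type*} [Finite V] (G : SimpleGraph V) (σ : Sym2 V → Bool)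
    (hdeg : TwoDegenerate G) (s : Finset V) : ∃ x : V → ℝ × Fin 4,
      Set.InjOn (fun v => (x v).1) s ∧
        ∀ u ∈ s, ∀ v ∈ s, G.Adj u v → far (x u) (x v) = σ s(u, v) := by
  classical
  induction s using Finset.strongInduction with
  | H s ih =>
    rcases s.eq_empty_or_nonempty with rfl | hs
    · exact ⟨fun _ => (0, 0), by simp, by simp⟩
    obtain ⟨v, hv, hd⟩ := hdeg (s : Set V) (by simpa using hs)
    rw [Finset.mem_coe] at hv
    obtain ⟨x, hinj, hx⟩ := ih (s.erase v) (Finset.erase_ssubset hv)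
    have hsub : {u ∈ (s : Set V) | G.Adj v u} ⊆ (s.erase v : Finset V) := by
      rintro u ⟨hu, hvu⟩
      simpa [hvu.ne'] using hu
    obtain ⟨y, hy, hyT⟩ := exists_point_of_ncard_le_two _ hd x (hinj.mono hsub)
      (Set.range fun u => (x u).1) (Set.finite_range _) (fun u => σ s(v, u))
    have hy' : ∀ u, y.1 ≠ (x u).1 := fun u h => hy ⟨u, h.symm⟩
    refine ⟨Function.update x v y, ?_, ?_⟩
    · intro u hu w hw h
      by_cases huv : u = v <;> by_cases hwv : w = v
      · rw [huv, hwv]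
      · subst huv
        simp only [Function.update_self, Function.update_of_ne hwv] at h
        exact absurd h (hy' w)
      · subst hwv
        simp only [Function.update_self, Function.update_of_ne huv] at h
        exact absurd h.symm (hy' u)
      · simp only [Function.update_of_ne hwv, Function.update_of_ne huv] at h
        exact hinj (by simpa [huv] using hu) (by simpa [hwv] using hw) h
    · intro u hu w hw hadj
      by_cases huv : u = v <;> by_cases hwv : w = v
      · exact absurd (huv.trans hwv.symm) hadj.ne
      · subst huv
        rw [Function.update_self, Function.update_of_ne hwv]
        exact hyT w ⟨hw, hadj⟩
      · subst hwv
        rw [Function.update_self, Function.update_of_ne huv, far_comm (hy' u).symm, Sym2.eq_swap]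
        exact hyT u ⟨hu, hadj.symm⟩
      · rw [Function.update_of_ne hwv, Function.update_of_ne huv]
        exact hx u (by simp [huv, hu]) w (by simp [hwv, hw]) hadj

/-! ### Compression to a circle of circumference `4 - 2 / k` -/

/-- The least nondecreasing sequence of naturals with the same parities as `μ`. -/
def parityLift (μ : ℕ → ℕ) : ℕ → ℕ
  | 0 => μ 0 % 2
  | i + 1 => parityLift μ i + (μ (i + 1) + parityLift μ i) % 2

lemma parityLift_mod_two (μ : ℕ → ℕ) (i : ℕ) : parityLift μ i % 2 = μ i % 2 := by
  cases i <;> simp only [parityLift] <;> omega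

lemma parityLift_le (μ : ℕ → ℕ) (i : ℕ) : parityLift μ i ≤ i + 1 := by
  induction i with
  | zero => simp only [parityLift]; omega
  | succ i ih => simp only [parityLift]; omega

lemma parityLift_add (μ : ℕ → ℕ) (i d : ℕ) :
    parityLift μ i ≤ parityLift μ (i + d) ∧ parityLift μ (i + d) ≤ parityLift μ i + d := by
  induction d with
  | zero => simp
  | succ d ih => rw [← add_assoc, parityLift]; omega

/-- The grid point `h + (2k - 1) m`, reduced modulo the number `4 (2k - 1)` of grid points. A single
subtraction suffices for `m ≤ 3` and `h ≤ 2k`. -/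
def gridPos (k h m : ℕ) : ℤ :=
  if (h : ℤ) + (2 * k - 1) * m < 8 * k - 4 then h + (2 * k - 1) * m
  else h + (2 * k - 1) * m - (8 * k - 4)

lemma gridPos_range (k h m : ℕ) (hk : 2 ≤ k) (hh : h ≤ 2 * k) (hm : m < 4) :
    0 ≤ gridPos k h m ∧ gridPos k h m < 8 * k - 4 := by
  unfold gridPos
  interval_cases m <;> push_cast <;> split_ifs <;> omega

/-- If the offsets satisfy `h₁ ≤ h₂ < h₁ + 2k` and have the parities of their quarters, then the
grid points are at circular distance at least `2k` when `farQuarters` holds and at most `2k - 2`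
otherwise. -/
lemma gridPos_edge (k h₁ h₂ : ℕ) (m₁ m₂ : Fin 4) (hk : 2 ≤ k) (h12 : h₁ ≤ h₂)
    (h21 : h₂ ≤ h₁ + (2 * k - 1)) (hh : h₂ ≤ 2 * k) (p₁ : h₁ % 2 = m₁.val % 2)
    (p₂ : h₂ % 2 = m₂.val % 2) :
    if farQuarters m₁ m₂ then
      2 * (k : ℤ) ≤ |gridPos k h₁ m₁ - gridPos k h₂ m₂| ∧
        |gridPos k h₁ m₁ - gridPos k h₂ m₂| ≤ 6 * k - 4
    else |gridPos k h₁ m₁ - gridPos k h₂ m₂| ≤ 2 * k - 2 ∨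
      6 * (k : ℤ) - 2 ≤ |gridPos k h₁ m₁ - gridPos k h₂ m₂| := by
  rw [farQuarters_eq]
  rcases abs_cases (gridPos k h₁ m₁ - gridPos k h₂ m₂) with h | h <;> rw [h.1] <;>
    replace h := h.2 <;> unfold gridPos at h ⊢ <;> fin_cases m₁ <;> fin_cases m₂ <;>
    simp at p₁ p₂ h ⊢ <;> split_ifs <;> omega

/-- The grid distances of `gridPos_edge`, read with `2k` grid points per unit of length, are those
of a circular coloring with `r = 4 - 2 / k`. -/
lemma edge_condition_of_grid (k : ℕ) (hk : 2 ≤ k) (a b : ℤ) (e : Bool)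
    (h : if e then 2 * (k : ℤ) ≤ |a - b| ∧ |a - b| ≤ 6 * k - 4
      else |a - b| ≤ 2 * k - 2 ∨ 6 * (k : ℤ) - 2 ≤ |a - b|) :
    if e then 1 ≤ |(a : ℝ) / (2 * k) - b / (2 * k)| ∧
        |(a : ℝ) / (2 * k) - b / (2 * k)| ≤ (4 - 2 / (k : ℝ)) - 1
      else |(a : ℝ) / (2 * k) - b / (2 * k)| ≤ (4 - 2 / (k : ℝ)) / 2 - 1 ∨
        (4 - 2 / (k : ℝ)) / 2 + 1 ≤ |(a : ℝ) / (2 * k) - b / (2 * k)| := by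
  have hk0 : (0 : ℝ) < k := by exact_mod_cast (by omega : 0 < k)
  have hab : |(a : ℝ) / (2 * k) - b / (2 * k)| = (|a - b| : ℤ) / (2 * k) := by
    rw [← sub_div, abs_div, abs_of_pos (by positivity : (0 : ℝ) < 2 * k)]
    push_cast
    rfl
  rw [hab]
  generalize |a - b| = D at h
  have e1 : (4 - 2 / (k : ℝ)) - 1 = (6 * k - 4) / (2 * k) := by field_simp; ring
  have e2 : (4 - 2 / (k : ℝ)) / 2 - 1 = (2 * k - 2) / (2 * k) := by field_simp; ring
  have e3 : (4 - 2 / (k : ℝ)) / 2 + 1 = (6 * k - 2) / (2 * k) := by field_simp; ring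
  have e4 : (1 : ℝ) = (2 * k) / (2 * k) := by field_simp
  cases e
  · simp only [Bool.false_eq_true, if_false] at h ⊢
    rw [e2, e3]
    refine h.imp (fun h => ?_) (fun h => ?_) <;> gcongr <;> exact_mod_cast h
  · simp only [if_true] at h ⊢
    rw [e1]
    refine ⟨?_, ?_⟩
    · rw [e4]
      gcongr
      exact_mod_cast h.1
    · gcongr
      exact_mod_cast h.2

/-- If `(G, σ)` is a signed 2-degenerate simple graph on `n ≥ 3` vertices, then
`χ_c(G, σ) ≤ 4 - 2/⌊(n+1)/2⌋`. -/
theorem circChrom_le_of_twoDegenerate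
    {V : Type*} [Fintype V] (G : SimpleGraph V) (σ : Sym2 V → Bool) (n : ℕ)
    (hcard : Fintype.card V = n) (hn : 3 ≤ n) (hdeg : TwoDegenerate G) :
    circChrom G σ ≤ ENNReal.ofReal (4 - 2 / (((n + 1) / 2 : ℕ) : ℝ)) := by
  classical
  obtain ⟨x, hinj, hx⟩ := exists_strict_placement G σ hdeg Finset.univ
  let _ : LinearOrder V := LinearOrder.lift' (fun v => (x v).1)
    fun u v h => hinj (by simp) (by simp) h
  let ρ : Fin n ≃o V := monoEquivOfFin V hcard
  set k := (n + 1) / 2 with hk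
  have hk2 : 2 ≤ k := by omega
  -- The quarters of the vertices in the order of increasing offset; `0` is a dummy value past `n`.
  let μ : ℕ → ℕ := fun i => if hi : i < n then (x (ρ ⟨i, hi⟩)).2.val else 0
  let h : V → ℕ := fun v => parityLift μ (ρ.symm v)
  have hpar : ∀ v, h v % 2 = (x v).2.val % 2 := fun v => by
    simp only [h, parityLift_mod_two]
    simp [μ]
  have hle : ∀ v, h v ≤ 2 * k := fun v => by
    have h1 := parityLift_le μ (ρ.symm v)
    have h2 := (ρ.symm v).isLt
    simp only [h]
    omega
  have hk0 : (0 : ℝ) < k := by exact_mod_cast (by omega : 0 < k)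
  have hr : 4 - 2 / (k : ℝ) = (8 * k - 4) / (2 * k) := by field_simp; ring
  have edge : ∀ u v, u < v → G.Adj u v → _ := fun u v huv hadj => by
    have hlt : (x u).1 < (x v).1 := huv
    have hρ : (ρ.symm u).val < (ρ.symm v).val := ρ.symm.lt_iff_lt.2 huv
    have hadd := parityLift_add μ (ρ.symm u) ((ρ.symm v).val - (ρ.symm u).val)
    rw [Nat.add_sub_cancel' hρ.le] at hadd
    have hv := (ρ.symm v).isLt
    have hg := gridPos_edge k (h u) (h v) (x u).2 (x v).2 hk2 hadd.1
      (hadd.2.trans (by simp only [h]; omega)) (hle v) (hpar u) (hpar v)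
    have hσ := hx u (by simp) v (by simp) hadj
    rw [far, if_pos hlt] at hσ
    rw [hσ] at hg
    exact edge_condition_of_grid k hk2 _ _ _ hg
  refine sInf_le ⟨4 - 2 / (k : ℝ), ⟨?_, fun v => (gridPos k (h v) (x v).2 : ℝ) / (2 * k),
    fun v => ?_, fun u v hadj => ?_⟩, rfl⟩
  · have : (2 : ℝ) ≤ k := by exact_mod_cast hk2
    rw [hr, le_div_iff₀ (by positivity)]
    linarith
  · obtain ⟨h0, h1⟩ := gridPos_range k (h v) (x v).2 hk2 (hle v) (x v).2.isLt
    have h0' : (0 : ℝ) ≤ gridPos k (h v) (x v).2 := by exact_mod_cast h0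
    refine ⟨by positivity, ?_⟩
    rw [hr]
    exact div_lt_div_of_pos_right (by exact_mod_cast h1) (by positivity)
  · rcases lt_or_gt_of_ne hadj.ne with huv | huv
    · exact edge u v huv hadj
    · have := edge v u huv hadj.symm
      rwa [Sym2.eq_swap, abs_sub_comm] at this
end

section
/- For every integer n ≥ 3 there exists a signed 2-degenerate simple graph (G, σ) on n vertices with χ_c(G, σ) = 4 − 2/⌊(n+1)/2⌋; that is, the upper bound 4 − 2/⌊(n+1)/2⌋ on the circular chromatic number of signed 2-degenerate simple graphs on n vertices is tight. -/
/-!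
Write `r = 4 - 2δ`. On a circle of circumference `r`, a positive edge keeps its ends at distance
at least `1` and a negative edge keeps them at distance at most `r / 2 - 1 = 1 - δ`.

If `u`, `w` are at distance `x ≤ 1 - δ`, then a vertex joined positively to `u` and negatively to
`w` must lie in an arc of length at most `x - δ`. So two such vertices are at distance at most
`x - δ`, and there is no room for even one if `x < δ` (`closeOn_step`). Starting from a negative edge
(`x ≤ 1 - δ`) and iterating, the `i`-th pair is at distance at most `1 - (i + 1)δ`
(`closeOn_level`). With `k = ⌊(n + 1) / 2⌋` levels, the last of which may consist of a single
vertex, a coloring forces `kδ ≤ 1`, i.e. `r ≥ 4 - 2 / k`.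

Conversely, for `δ = 1 / k` all these arcs are nonempty, and choosing their ends so that successive
levels alternate between the two sides of the circle yields the explicit coloring `ladderColor`,
whose values all lie in `[0, 2)`, so that no reduction modulo `r` is needed.

Each vertex has at most two neighbours among the earlier ones, hence 2-degeneracy.
-/

open scoped ENNReal

/-! ### The signed graph -/

/-- The underlying graph: vertices `2i` and `2i + 1` form level `i`, consecutive levels are
completely joined, and the only edge inside a level is `{0, 1}`. -/
def ladderGraph (n : ℕ) : SimpleGraph (Fin n) where
  Adj a b := a.val / 2 + 1 = b.val / 2 ∨ b.val / 2 + 1 = a.val / 2 ∨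
    (a.val = 0 ∧ b.val = 1) ∨ (a.val = 1 ∧ b.val = 0)
  symm := ⟨fun a b h => by omega⟩
  loopless := ⟨fun a h => by omega⟩

open Classical in
/-- The signature: an edge between consecutive levels is positive exactly when its end in the
lower level is even; the edge `{0, 1}` is negative. -/
noncomputable def ladderSign (n : ℕ) (e : Sym2 (Fin n)) : Bool :=
  decide (∃ a b : Fin n, e = s(a, b) ∧ a.val % 2 = 0 ∧ a.val / 2 + 1 = b.val / 2)

lemma ladderSign_eq_true_iff {n : ℕ} (a b : Fin n) :
    ladderSign n s(a, b) = true ↔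
      (a.val % 2 = 0 ∧ a.val / 2 + 1 = b.val / 2) ∨
        (b.val % 2 = 0 ∧ b.val / 2 + 1 = a.val / 2) := by
  simp only [ladderSign, decide_eq_true_eq, Sym2.eq_iff]
  constructor
  · rintro ⟨c, d, ⟨rfl, rfl⟩ | ⟨rfl, rfl⟩, h1, h2⟩
    · exact Or.inl ⟨h1, h2⟩
    · exact Or.inr ⟨h1, h2⟩
  · rintro (⟨h1, h2⟩ | ⟨h1, h2⟩)
    · exact ⟨a, b, Or.inl ⟨rfl, rfl⟩, h1, h2⟩
    · exact ⟨b, a, Or.inr ⟨rfl, rfl⟩, h1, h2⟩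

lemma ladderGraph_twoDegenerate (n : ℕ) : TwoDegenerate (ladderGraph n) := by
  intro s hs
  obtain ⟨v, hv, hmax⟩ := s.toFinite.exists_maximal hs
  refine ⟨v, hv, ?_⟩
  have hlt := v.isLt
  -- For `v ≤ 1` the subtractions truncate to `0`, the only possible earlier neighbour.
  have hsub : {u ∈ s | (ladderGraph n).Adj v u} ⊆
      {(⟨2 * (v.val / 2) - 2, by omega⟩ : Fin n), ⟨2 * (v.val / 2) - 1, by omega⟩} := by
    rintro u ⟨hu, hadj⟩
    have hle : u.val ≤ v.val := by
      rcases le_total u v with h | h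
      · exact h
      · exact hmax hu h
    have hadj' : v.val / 2 + 1 = u.val / 2 ∨ u.val / 2 + 1 = v.val / 2 ∨
      (v.val = 0 ∧ u.val = 1) ∨ (v.val = 1 ∧ u.val = 0) := hadj
    simp only [Set.mem_insert_iff, Set.mem_singleton_iff, Fin.ext_iff]
    omega
  exact (Set.ncard_le_ncard hsub (Set.toFinite _)).trans (by
    refine (Set.ncard_insert_le _ _).trans ?_
    rw [Set.ncard_singleton])

/-! ### The lower bound -/

lemma constraints_pos {n : ℕ} {r : ℝ} {f : Fin n → ℝ}
    (hf : IsCircularColoring (ladderGraph n) (ladderSign n) r f) (a b : Fin n)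
    (h1 : a.val % 2 = 0) (h2 : a.val / 2 + 1 = b.val / 2) :
    1 ≤ |f a - f b| ∧ |f a - f b| ≤ r - 1 := by
  have h := hf.2 a b (Or.inl h2)
  rwa [if_pos ((ladderSign_eq_true_iff a b).2 (Or.inl ⟨h1, h2⟩))] at h

lemma constraints_neg {n : ℕ} {r : ℝ} {f : Fin n → ℝ}
    (hf : IsCircularColoring (ladderGraph n) (ladderSign n) r f) (a b : Fin n)
    (h : (a.val = 0 ∧ b.val = 1) ∨ (a.val % 2 = 1 ∧ a.val / 2 + 1 = b.val / 2)) :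
    |f a - f b| ≤ r / 2 - 1 ∨ r / 2 + 1 ≤ |f a - f b| := by
  have hadj : a.val / 2 + 1 = b.val / 2 ∨ b.val / 2 + 1 = a.val / 2 ∨
    (a.val = 0 ∧ b.val = 1) ∨ (a.val = 1 ∧ b.val = 0) := by omega
  have h' := hf.2 a b hadj
  rwa [if_neg (by rw [ladderSign_eq_true_iff]; omega)] at h'

/-- `a, b ∈ [0, r)` are at distance at most `x` on the circle of circumference `r`. -/
def CloseOn (r x a b : ℝ) : Prop := |a - b| ≤ x ∨ r - x ≤ |a - b|

set_option maxHeartbeats 4000000 in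
/-- Two vertices `v`, `v'` joined positively to `u` and negatively to `w` both lie in one arc of
length at most `x - δ`, where `δ = 2 - r / 2`. The proof splits on the linear order of the colors
and on which side of the circle realizes each distance. -/
lemma closeOn_step {r x u w v v' : ℝ} (hr4 : r < 4) (hx : x ≤ r / 2 - 1)
    (hu : 0 ≤ u ∧ u < r) (hw : 0 ≤ w ∧ w < r) (hv : 0 ≤ v ∧ v < r) (hv' : 0 ≤ v' ∧ v' < r)
    (huw : CloseOn r x u w)
    (hp : 1 ≤ |u - v| ∧ |u - v| ≤ r - 1)
    (hn : |w - v| ≤ r / 2 - 1 ∨ r / 2 + 1 ≤ |w - v|)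
    (hp' : 1 ≤ |u - v'| ∧ |u - v'| ≤ r - 1)
    (hn' : |w - v'| ≤ r / 2 - 1 ∨ r / 2 + 1 ≤ |w - v'|) :
    CloseOn r (x - (2 - r / 2)) v v' := by
  obtain ⟨hp1, hp2⟩ := hp
  obtain ⟨hp1', hp2'⟩ := hp'
  obtain ⟨hu1, hu2⟩ := hu
  obtain ⟨hw1, hw2⟩ := hw
  obtain ⟨hv1, hv2⟩ := hv
  obtain ⟨hv1', hv2'⟩ := hv'
  unfold CloseOn at *
  rcases abs_cases (u - w) with ⟨e1, h1⟩ | ⟨e1, h1⟩ <;> rw [e1] at huw <;>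
  rcases abs_cases (u - v) with ⟨e2, h2⟩ | ⟨e2, h2⟩ <;> rw [e2] at hp1 hp2 <;>
  rcases abs_cases (w - v) with ⟨e3, h3⟩ | ⟨e3, h3⟩ <;> rw [e3] at hn <;>
  rcases huw with huw | huw <;> rcases hn with hn | hn <;>
  first
  | (exfalso; linarith)
  | (rcases abs_cases (u - v') with ⟨e4, h4⟩ | ⟨e4, h4⟩ <;> rw [e4] at hp1' hp2' <;>
     rcases abs_cases (w - v') with ⟨e5, h5⟩ | ⟨e5, h5⟩ <;> rw [e5] at hn' <;>
     rcases hn' with hn' | hn' <;>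
     first
     | (exfalso; linarith)
     | (left; rw [abs_le]; constructor <;> linarith)
     | (right; rw [le_abs]; left; linarith)
     | (right; rw [le_abs]; right; linarith))

/-- The two vertices of level `i` are at circular distance at most `1 - (i + 1)δ`, where
`δ = 2 - r / 2`. -/
lemma closeOn_level {n : ℕ} {r : ℝ} (hr4 : r < 4) {f : Fin n → ℝ}
    (hf : IsCircularColoring (ladderGraph n) (ladderSign n) r f) (i : ℕ) (hi : 2 * i + 1 < n) :
    CloseOn r (1 - (i + 1) * (2 - r / 2)) (f ⟨2 * i, by omega⟩) (f ⟨2 * i + 1, hi⟩) := by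
  induction i with
  | zero =>
    have h := (constraints_neg hf ⟨0, by omega⟩ ⟨1, by omega⟩ (Or.inl ⟨rfl, rfl⟩))
    unfold CloseOn
    rcases h with h | h
    · left; push_cast; simp only [zero_add]; linarith
    · right; push_cast; simp only [zero_add]; linarith
  | succ i ih =>
    have h := ih (by omega)
    have hx : 1 - ((i : ℝ) + 1) * (2 - r / 2) ≤ r / 2 - 1 := by
      have : 0 ≤ (i : ℝ) * (2 - r / 2) := mul_nonneg (Nat.cast_nonneg i) (by linarith)
      linarith
    have key := closeOn_step hr4 hx (hf.1 _) (hf.1 _)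
      (hf.1 ⟨2 * (i + 1), by omega⟩) (hf.1 ⟨2 * (i + 1) + 1, hi⟩) h
      (constraints_pos hf _ _ (by dsimp only; omega) (by dsimp only; omega))
      (constraints_neg hf _ _ (Or.inr ⟨by dsimp only; omega, by dsimp only; omega⟩))
      (constraints_pos hf _ _ (by dsimp only; omega) (by dsimp only; omega))
      (constraints_neg hf _ _ (Or.inr ⟨by dsimp only; omega, by dsimp only; omega⟩))
    convert key using 1
    push_cast
    ring

lemma ladder_lower_bound {n : ℕ} (hn : 3 ≤ n) {r : ℝ}
    (h : HasCircularColoring (ladderGraph n) (ladderSign n) r) :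
    4 - 2 / (((n + 1) / 2 : ℕ) : ℝ) ≤ r := by
  obtain ⟨f, hf⟩ := h
  obtain ⟨i, hi⟩ : ∃ i, (n + 1) / 2 = i + 2 := ⟨(n + 1) / 2 - 2, by omega⟩
  rw [hi]
  push_cast
  by_contra! hlt
  have hpos : (0 : ℝ) < (i : ℝ) + 2 := by positivity
  have hr4 : r < 4 := by
    have : 0 < 2 / ((i : ℝ) + 2) := by positivity
    linarith
  have hbig : 1 < ((i : ℝ) + 2) * (2 - r / 2) := by
    have h1 : 2 / ((i : ℝ) + 2) < 4 - r := by linarith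
    rw [div_lt_iff₀ hpos] at h1
    linarith
  have h := closeOn_level hr4 hf i (by omega)
  have hx : 1 - ((i : ℝ) + 1) * (2 - r / 2) ≤ r / 2 - 1 := by
    have : 0 ≤ (i : ℝ) * (2 - r / 2) := mul_nonneg (Nat.cast_nonneg i) (by linarith)
    linarith
  have hp := constraints_pos hf ⟨2 * i, by omega⟩ ⟨2 * i + 2, by omega⟩
    (by dsimp only; omega) (by dsimp only; omega)
  have hq := constraints_neg hf ⟨2 * i + 1, by omega⟩ ⟨2 * i + 2, by omega⟩
    (Or.inr ⟨by dsimp only; omega, by dsimp only; omega⟩)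
  -- Taking the same vertex twice shows that the arc available to it has nonnegative length.
  have key := closeOn_step hr4 hx (hf.1 _) (hf.1 _) (hf.1 _) (hf.1 _) h hp hq hp hq
  unfold CloseOn at key
  rw [sub_self, abs_zero] at key
  rcases key with key | key <;> linarith

/-! ### The coloring -/

/-- The color of vertex `j` at `δ`. Writing `m = j / 4`, the even level `2m` receives
`mδ` and `1 - (m + 1)δ`, the odd level `2m + 1` receives `2 - (m + 2)δ` and `1 + mδ`. -/
noncomputable def ladderColor (δ : ℝ) (j : ℕ) : ℝ :=
  if j % 4 = 0 then (j / 4 : ℕ) * δ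
  else if j % 4 = 1 then 1 - ((j / 4 : ℕ) + 1) * δ
  else if j % 4 = 2 then 2 - ((j / 4 : ℕ) + 2) * δ
  else 1 + (j / 4 : ℕ) * δ

lemma ladderColor_mem {δ : ℝ} (hδ : 0 ≤ δ) {j : ℕ} (hj : ((j / 2 : ℕ) + 1 : ℝ) * δ ≤ 1) :
    0 ≤ ladderColor δ j ∧ ladderColor δ j ≤ 2 - 2 * δ := by
  have hp : 0 ≤ ((j / 4 : ℕ) : ℝ) * δ := by positivity
  have h : j / 2 = 2 * (j / 4) + (j % 4) / 2 := by omega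
  rw [h] at hj
  have h4 : j % 4 = 0 ∨ j % 4 = 1 ∨ j % 4 = 2 ∨ j % 4 = 3 := by omega
  rcases h4 with h4 | h4 | h4 | h4 <;> simp only [ladderColor, h4] at hj ⊢ <;>
    norm_num at hj ⊢ <;> constructor <;> linarith

lemma ladderColor_adj {δ : ℝ} (hδ : 0 ≤ δ) {a b : ℕ} (hab : a / 2 + 1 = b / 2)
    (hb : ((b / 2 : ℕ) + 1 : ℝ) * δ ≤ 1) :
    (a % 2 = 0 → 1 ≤ |ladderColor δ a - ladderColor δ b| ∧
      |ladderColor δ a - ladderColor δ b| ≤ 3 - 2 * δ) ∧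
    (a % 2 = 1 → |ladderColor δ a - ladderColor δ b| ≤ 1 - δ) := by
  have hp : 0 ≤ ((a / 4 : ℕ) : ℝ) * δ := by positivity
  have h4 : (a % 4 = 0 ∨ a % 4 = 1) ∧ (b % 4 = 2 ∨ b % 4 = 3) ∧ b / 4 = a / 4 ∧
        b / 2 = 2 * (a / 4) + 1 ∨
      (a % 4 = 2 ∨ a % 4 = 3) ∧ (b % 4 = 0 ∨ b % 4 = 1) ∧ b / 4 = a / 4 + 1 ∧
        b / 2 = 2 * (a / 4) + 2 := by omega
  rcases h4 with ⟨ha | ha, hb' | hb', hq, h2⟩ | ⟨ha | ha, hb' | hb', hq, h2⟩ <;>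
    rw [h2] at hb <;>
    simp only [ladderColor, ha, hb', hq] <;> push_cast at hb ⊢ <;> norm_num <;>
    refine ⟨fun h => ?_, fun h => ?_⟩ <;> first
    | (exfalso; omega)
    | linarith
    | (rw [abs_le]; constructor <;> linarith)
    | (refine ⟨?_, by rw [abs_le]; constructor <;> linarith⟩
       rw [le_abs]
       first
       | (left; linarith)
       | (right; linarith))

lemma ladder_hasCircularColoring {n : ℕ} (hn : 3 ≤ n) :
    HasCircularColoring (ladderGraph n) (ladderSign n)
      (4 - 2 / (((n + 1) / 2 : ℕ) : ℝ)) := by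
  set k := (n + 1) / 2 with hk
  have hk2 : (2 : ℝ) ≤ k := by exact_mod_cast (by omega : 2 ≤ k)
  have hkpos : (0 : ℝ) < k := by linarith
  obtain ⟨δ, hδ⟩ : ∃ δ : ℝ, δ = 1 / k := ⟨_, rfl⟩
  have hδ0 : 0 < δ := by rw [hδ]; positivity
  have hkδ : (k : ℝ) * δ = 1 := by rw [hδ]; field_simp
  have hr : (4 : ℝ) - 2 / k = 4 - 2 * δ := by rw [hδ]; ring
  have hδ2 : 2 * δ ≤ 1 := hkδ ▸ mul_le_mul_of_nonneg_right hk2 hδ0.le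
  have hlevel (v : Fin n) : ((v.val / 2 : ℕ) + 1 : ℝ) * δ ≤ 1 := by
    have h1 : v.val / 2 + 1 ≤ k := by have := v.isLt; omega
    have h2 : ((v.val / 2 : ℕ) + 1 : ℝ) ≤ k := by exact_mod_cast h1
    exact (mul_le_mul_of_nonneg_right h2 hδ0.le).trans hkδ.le
  rw [hr]
  refine ⟨fun v => ladderColor δ v.val, fun v => ?_, fun u v huv => ?_⟩
  · have := ladderColor_mem hδ0.le (hlevel v)
    exact ⟨this.1, by linarith⟩
  · have huv' : u.val / 2 + 1 = v.val / 2 ∨ v.val / 2 + 1 = u.val / 2 ∨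
      (u.val = 0 ∧ v.val = 1) ∨ (u.val = 1 ∧ v.val = 0) := huv
    have h01 : |ladderColor δ 0 - ladderColor δ 1| ≤ 1 - δ := by
      norm_num [ladderColor]
      rw [abs_le]; constructor <;> linarith
    split_ifs with hs
    · rcases (ladderSign_eq_true_iff u v).1 hs with ⟨h1, h2⟩ | ⟨h1, h2⟩
      · have := (ladderColor_adj hδ0.le h2 (hlevel v)).1 h1
        exact ⟨this.1, by linarith⟩
      · have := (ladderColor_adj hδ0.le h2 (hlevel u)).1 h1
        rw [abs_sub_comm] at this
        exact ⟨this.1, by linarith⟩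
    · left
      rw [ladderSign_eq_true_iff] at hs
      have hgoal : |ladderColor δ u.val - ladderColor δ v.val| ≤ 1 - δ := by
        rcases huv' with h | h | ⟨h, h'⟩ | ⟨h, h'⟩
        · exact (ladderColor_adj hδ0.le h (hlevel v)).2 (by omega)
        · rw [abs_sub_comm]
          exact (ladderColor_adj hδ0.le h (hlevel u)).2 (by omega)
        · rw [h, h']; exact h01
        · rw [h, h', abs_sub_comm]; exact h01
      linarith

/-- For every `n ≥ 3` there is a signed 2-degenerate simple graph on `n` vertices whose
circular chromatic number is exactly `4 - 2/⌊(n+1)/2⌋`; i.e. the upper bound for signed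
2-degenerate simple graphs on `n` vertices is tight. -/
theorem exists_twoDegenerate_circChrom_eq (n : ℕ) (hn : 3 ≤ n) :
    ∃ (G : SimpleGraph (Fin n)) (σ : Sym2 (Fin n) → Bool),
      TwoDegenerate G ∧
      circChrom G σ = ENNReal.ofReal (4 - 2 / (((n + 1) / 2 : ℕ) : ℝ)) := by
  refine ⟨ladderGraph n, ladderSign n, ladderGraph_twoDegenerate n, le_antisymm ?_ ?_⟩
  · refine sInf_le ⟨_, ⟨?_, ladder_hasCircularColoring hn⟩, rfl⟩
    have hk : (2 : ℝ) ≤ ((n + 1) / 2 : ℕ) := by exact_mod_cast (by omega : 2 ≤ (n + 1) / 2)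
    have : 2 / (((n + 1) / 2 : ℕ) : ℝ) ≤ 1 := by rw [div_le_one (by linarith)]; exact hk
    linarith
  · refine le_sInf ?_
    rintro _ ⟨r, ⟨-, hcol⟩, rfl⟩
    exact ENNReal.ofReal_le_ofReal (ladder_lower_bound hn hcol)
end

section
/- If (G, σ) is a signed bipartite planar simple graph on n vertices (n ≥ 4), then χ_c(G, σ) ≤ 4 − 4/⌊(n+2)/2⌋. -/
/-!
A circular colouring with `r = 4 - 4 / k` can be read off from signs `s v` and positions `pos v` in
`{0, …, 2 * k - 3}` that are different for adjacent vertices, if each edge `uv` with `u` in the part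
`A` satisfies: it is positive if and only if `s u = s v` is equivalent to `pos u < pos v`
(`circChrom_le_of_positions`). For even `n` a linear order of the vertices gives such positions. For
odd `n` one position must be saved, by letting two cyclically consecutive non-adjacent vertices
share a position; such vertices exist because a bipartite graph has no odd Hamiltonian cycle
(`exists_positions`).

Signs and order exist for every signature of a bipartite plane graph (`exists_signs`). The vertices
are contracted one at a time into a set `S`, and the edges leaving `S` are kept in two blocks,
according to the class of their outer end. The next vertex is the outer end of one of the two edges
at the boundary between the blocks; it is good if at most one of its neighbours outside `S` is
adjacent to `S`. If both candidates were bad, there would be two paths through `S` crossing an odd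
number of times, which planarity forbids (`DartInv.no_double`). Planarity enters only through the
following identity: for a rotation system coming from the plane, the number of crossings at vertices
of two mod 2 cycles has the parity of the number of their common edges.

For an arbitrary topological embedding this identity is proved without the Jordan curve theorem. The
arcs are first replaced by arcs with straight ends (`exists_drawing`). For two arcs without a common
point, the difference of a point of the first and a point of the second never vanishes on the
parameter square, so its turning number around the boundary of the square is zero
(`Drawing.turn_disjoint`). For two arcs with one common end, the corner of the square where they
meet is cut off, and the contribution of the cut records the order of the two initial directions
(`Drawing.turn_adjacent`). In the sum of these relations modulo 2 over all pairs of edges of two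
cycles, all turning numbers cancel and the crossing identity remains (`cross_sum`,
`Drawing.exists_rot`).
-/

open scoped ENNReal

/-! ### Colourings from positions on a circle -/

section Colouring

/-- A rank function: an injective height function on a finite type can be replaced by one with
values in `{0, …, n - 1}` inducing the same order. -/
lemma exists_rank {V : Type*} [Fintype V] (t : V → ℤ) (ht : Function.Injective t) :
    ∃ rk : V → ℕ, Function.Injective rk ∧ (∀ v, rk v < Fintype.card V) ∧
      ∀ u v, rk u < rk v ↔ t u < t v := by
  classical
  have mono : ∀ u v, t u < t v →
      (Finset.univ.filter (fun w => t w < t u)).card <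
        (Finset.univ.filter (fun w => t w < t v)).card := by
    intro u v huv
    apply Finset.card_lt_card
    refine ⟨fun w hw => ?_, fun h => ?_⟩
    · simp only [Finset.mem_filter, Finset.mem_univ, true_and] at hw ⊢
      omega
    · have h1 : u ∈ Finset.univ.filter (fun w => t w < t u) := h (by simpa using huv)
      simp at h1
  refine ⟨fun v => (Finset.univ.filter (fun w => t w < t v)).card, ?_, ?_, ?_⟩
  · intro u v huv
    apply ht
    rcases lt_trichotomy (t u) (t v) with h | h | h
    · have := mono u v h; simp only at huv; omega
    · exact h
    · have := mono v u h; simp only at huv; omega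
  · intro v
    apply Finset.card_lt_univ_of_notMem (x := v)
    simp
  · intro u v
    refine ⟨fun h => ?_, mono u v⟩
    by_contra hc
    rcases lt_or_eq_of_le (not_lt.mp hc) with h' | h'
    · have := mono v u h'; simp only at h; omega
    · simp only [h'] at h; omega

/-- Squeezing the ranks into `2⌊n/2⌋` positions. For odd `n` two cyclically consecutive ranks
are non-adjacent, since otherwise there would be a Hamiltonian cycle of odd length; these two
vertices may share a position. If they are the top and the bottom vertex, the top one is moved
down and its sign is flipped. -/
lemma exists_positions {V : Type*} [Fintype V] (G : SimpleGraph V) (A : Set V)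
    (hA : ∀ u v, G.Adj u v → (u ∈ A ↔ v ∉ A)) (D : V → V → Prop)
    (s : V → Bool) (t : V → ℤ) (ht : Function.Injective t)
    (h : ∀ u v, G.Adj u v → (D u v ↔ ((s u = s v) ↔ t u < t v)))
    (hn : 2 ≤ Fintype.card V) :
    ∃ (pos : V → ℕ) (s' : V → Bool), (∀ v, pos v < 2 * (Fintype.card V / 2)) ∧
      ∀ u v, G.Adj u v → pos u ≠ pos v ∧ (D u v ↔ ((s' u = s' v) ↔ pos u < pos v)) := by
  classical
  obtain ⟨rk, hinj, hlt, hrk⟩ := exists_rank t ht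
  set n := Fintype.card V with hn'
  have hne : ∀ u v, G.Adj u v → rk u ≠ rk v := fun u v huv e => huv.ne (hinj e)
  rcases Nat.even_or_odd' n with ⟨m, hm | hm⟩
  · refine ⟨rk, s, fun v => by have := hlt v; omega, fun u v huv => ⟨hne u v huv, ?_⟩⟩
    rw [hrk]; exact h u v huv
  · have hsurj : ∀ i, i < n → ∃ v, rk v = i := by
      intro i hi
      let e : V → Fin n := fun v => ⟨rk v, hlt v⟩
      have he : Function.Bijective e := by
        rw [Fintype.bijective_iff_injective_and_card]
        refine ⟨fun u v huv => hinj (by simpa [e] using huv), by simp [hn']⟩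
      obtain ⟨v, hv⟩ := he.2 ⟨i, hi⟩
      exact ⟨v, by simpa [e] using hv⟩
    by_cases hc : ∃ u v, rk v = rk u + 1 ∧ ¬ G.Adj u v
    · obtain ⟨a, b, hab, hadj⟩ := hc
      refine ⟨fun v => if rk v ≤ rk a then rk v else rk v - 1, s, fun v => ?_,
        fun u v huv => ?_⟩
      · have := hlt v; have := hlt b; dsimp only; split_ifs <;> omega
      · have h1 := hne u v huv
        have h2 : ¬ (rk u = rk a ∧ rk v = rk a + 1) := by
          rintro ⟨h3, h4⟩
          rw [hinj h3, hinj (h4.trans hab.symm)] at huv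
          exact hadj huv
        have h3 : ¬ (rk v = rk a ∧ rk u = rk a + 1) := by
          rintro ⟨h3, h4⟩
          rw [hinj h3, hinj (h4.trans hab.symm)] at huv
          exact hadj huv.symm
        have key : ((if rk u ≤ rk a then rk u else rk u - 1) <
            (if rk v ≤ rk a then rk v else rk v - 1)) ↔ rk u < rk v := by
          split_ifs <;> omega
        refine ⟨?_, ?_⟩
        · dsimp only; split_ifs <;> omega
        · dsimp only; rw [key, hrk]; exact h u v huv
    · push Not at hc
      obtain ⟨z, hz⟩ := hsurj 0 (by omega)
      obtain ⟨w, hw⟩ := hsurj (2 * m) (by omega)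
      have par : ∀ i, ∀ v, rk v = i → ((v ∈ A) ↔ ((z ∈ A) ↔ Even i)) := by
        intro i
        induction i with
        | zero => intro v hv; rw [hinj (hv.trans hz.symm)]; simp
        | succ i ih =>
          intro v hv
          obtain ⟨u, hu⟩ := hsurj i (by have := hlt v; omega)
          have h1 := hA u v (hc u v (by omega))
          have h2 := ih u hu
          rw [Nat.even_add_one]
          tauto
      have hwz : ¬ G.Adj w z := by
        intro hadj
        have h1 := hA w z hadj
        have h2 := par (2 * m) w hw
        have h3 : Even (2 * m) := even_two_mul m
        tauto
      refine ⟨fun v => if v = w then 0 else rk v, fun v => if v = w then !(s v) else s v,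
        fun v => ?_, fun u v huv => ?_⟩
      · dsimp only
        split_ifs with hv
        · omega
        · have := hlt v
          have : rk v ≠ 2 * m := fun e => hv (hinj (e.trans hw.symm))
          omega
      · have h1 := hne u v huv
        have h2 := h u v huv
        rw [← hrk] at h2
        have hu2 := hlt u
        have hv2 := hlt v
        have hz' : ∀ x, rk x = 0 → x = z := fun x hx => hinj (hx.trans hz.symm)
        by_cases hu : u = w
        · have hv : v ≠ w := fun e => huv.ne (hu.trans e.symm)
          have hv0 : rk v ≠ 0 := by
            intro e; rw [hu, hz' v e] at huv; exact hwz huv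
          have hu' : rk u = 2 * m := by rw [hu, hw]
          simp only [hu, if_true, hv, if_false]
          refine ⟨by omega, ?_⟩
          have e1 : ¬ rk u < rk v := by omega
          have e2 : 0 < rk v := by omega
          rw [hu] at h2 e1
          rw [h2]
          simp only [e1, e2, iff_true, iff_false]
          cases s w <;> cases s v <;> simp
        · by_cases hv : v = w
          · have hu0 : rk u ≠ 0 := by
              intro e; rw [hv, hz' u e] at huv; exact hwz huv.symm
            have hv' : rk v = 2 * m := by rw [hv, hw]
            simp only [hv, if_true, hu, if_false]
            refine ⟨by omega, ?_⟩
            have e1 : rk u < rk v := by omega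
            rw [hv] at h2 e1
            rw [h2]
            simp only [e1, iff_true, Nat.not_lt_zero, iff_false]
            cases s w <;> cases s u <;> simp
          · simp only [hu, hv, if_false]
            exact ⟨h1, h2⟩

/-- The colouring read off from positions and signs. The value `g v = pos v + L · [s v]` lives on
a circle of length `2 * L = 4 * (k - 1)`, where `L = 2 * (k - 1)`; shifting the class outside `A` by a
quarter of the circle and dividing by `k` gives a circular `(4 - 4/k)`-colouring. -/
lemma circChrom_le_of_positions {V : Type*} (G : SimpleGraph V) (σ : Sym2 V → Bool) (A : Set V)
    (hA : ∀ u v, G.Adj u v → (u ∈ A ↔ v ∉ A)) (k : ℕ) (hk : 3 ≤ k)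
    (pos : V → ℕ) (s : V → Bool) (hpos : ∀ v, pos v < 2 * (k - 1))
    (h : ∀ u v, G.Adj u v → u ∈ A → pos u ≠ pos v ∧
      (σ s(u, v) = true ↔ ((s u = s v) ↔ pos u < pos v))) :
    circChrom G σ ≤ ENNReal.ofReal (4 - 4 / (k : ℝ)) := by
  classical
  let g : V → ℕ := fun v => pos v + if s v then 2 * (k - 1) else 0
  let H : V → ℕ := fun v => if v ∈ A then g v else
    if g v + (k - 1) < 4 * (k - 1) then g v + (k - 1) else g v + (k - 1) - 4 * (k - 1)
  have hH : ∀ v, H v < 4 * (k - 1) := by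
    intro v
    have := hpos v
    simp only [H, g]
    split_ifs <;> omega
  have hedge : ∀ u v, G.Adj u v → u ∈ A →
      (if σ s(u, v) then (k : ℤ) ≤ |(H u : ℤ) - H v| ∧ |(H u : ℤ) - H v| ≤ 3 * k - 4
       else |(H u : ℤ) - H v| ≤ k - 2 ∨ 3 * k - 2 ≤ |(H u : ℤ) - H v|) := by
    intro u v huv hu
    have hv : v ∉ A := (hA u v huv).1 hu
    obtain ⟨h1, h2⟩ := h u v huv hu
    have h3 := hpos u
    have h4 := hpos v
    simp only [H, g, hu, hv, if_true, if_false]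
    cases hσ : σ s(u, v) <;> rw [hσ] at h2 <;> cases hsu : s u <;> cases hsv : s v <;>
      rw [hsu, hsv] at h2 <;>
      simp only [Bool.false_eq_true, if_false, if_true, true_iff, false_iff, reduceCtorEq,
        not_lt, not_le, abs_le, le_abs] at h2 ⊢ <;>
      split_ifs <;> omega
  have hedge' : ∀ u v, G.Adj u v →
      (if σ s(u, v) then (k : ℤ) ≤ |(H u : ℤ) - H v| ∧ |(H u : ℤ) - H v| ≤ 3 * k - 4
       else |(H u : ℤ) - H v| ≤ k - 2 ∨ 3 * k - 2 ≤ |(H u : ℤ) - H v|) := by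
    intro u v huv
    by_cases hu : u ∈ A
    · exact hedge u v huv hu
    · have hv : v ∈ A := by have := hA u v huv; tauto
      rw [Sym2.eq_swap, abs_sub_comm]
      exact hedge v u huv.symm hv
  have hk0 : (3 : ℝ) ≤ k := by exact_mod_cast hk
  have hkpos : (0 : ℝ) < k := by linarith
  apply sInf_le
  refine ⟨4 - 4 / (k : ℝ), ⟨?_, fun v => (H v : ℝ) / k, fun v => ⟨by positivity, ?_⟩, ?_⟩, rfl⟩
  · have : (4 : ℝ) / k ≤ 2 := by rw [div_le_iff₀ hkpos]; linarith
    linarith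
  · have h1 : (H v : ℝ) < 4 * ((k : ℝ) - 1) := by
      have := hH v
      have h2 : (H v : ℤ) < 4 * ((k : ℤ) - 1) := by omega
      exact_mod_cast h2
    rw [div_lt_iff₀ hkpos, sub_mul, div_mul_cancel₀ _ hkpos.ne']
    linarith
  · intro u v huv
    have h1 := hedge' u v huv
    have habs : |(H u : ℝ) / k - (H v : ℝ) / k| = ((|(H u : ℤ) - H v| : ℤ) : ℝ) / k := by
      rw [← sub_div, abs_div, abs_of_pos hkpos]
      push_cast
      rfl
    rw [habs]
    generalize |(H u : ℤ) - H v| = d at h1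
    split_ifs at h1 ⊢ with hσ
    · obtain ⟨h2, h3⟩ := h1
      have h2' : (k : ℝ) ≤ d := by exact_mod_cast h2
      have h3' : (d : ℝ) ≤ 3 * k - 4 := by exact_mod_cast h3
      refine ⟨by rw [le_div_iff₀ hkpos]; linarith, ?_⟩
      rw [div_le_iff₀ hkpos]
      have : (4 - 4 / (k : ℝ) - 1) * k = 3 * k - 4 := by field_simp; ring
      linarith
    · rcases h1 with h2 | h2
      · left
        have h2' : (d : ℝ) ≤ k - 2 := by exact_mod_cast h2
        rw [div_le_iff₀ hkpos]
        have : ((4 - 4 / (k : ℝ)) / 2 - 1) * k = k - 2 := by field_simp; ring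
        linarith
      · right
        have h2' : 3 * (k : ℝ) - 2 ≤ d := by exact_mod_cast h2
        rw [le_div_iff₀ hkpos]
        have : ((4 - 4 / (k : ℝ)) / 2 + 1) * k = 3 * k - 2 := by field_simp; ring
        linarith

end Colouring

/-! ### Rotation systems and contraction -/

section Crossing

/-- The crossing form of two weight functions along a list: the sum of `x a * y b` over all pairs
of entries `a` occurring before `b`, modulo 2. -/
def cr {α : Type*} (x y : α → ZMod 2) : List α → ZMod 2
  | [] => 0
  | a :: l => x a * (l.map y).sum + cr x y l

lemma cr_append {α : Type*} (x y : α → ZMod 2) (l₁ l₂ : List α) :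
    cr x y (l₁ ++ l₂) = cr x y l₁ + cr x y l₂ + (l₁.map x).sum * (l₂.map y).sum := by
  induction l₁ with
  | nil => simp [cr]
  | cons a l ih => simp only [List.cons_append, cr, ih, List.map_append, List.sum_append,
      List.map_cons, List.sum_cons]; ring

lemma sum_map_filter {α : Type*} (x : α → ZMod 2) (p : α → Prop) [DecidablePred p] (l : List α)
    (h : ∀ a ∈ l, ¬ p a → x a = 0) :
    ((l.filter (fun a => decide (p a))).map x).sum = (l.map x).sum := by
  induction l with
  | nil => simp
  | cons a l ih =>
    have ih := ih (fun b hb => h b (List.mem_cons_of_mem _ hb))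
    by_cases ha : p a
    · simp [ha, ih]
    · simp [ha, ih, h a (by simp) ha]

lemma cr_filter {α : Type*} (x y : α → ZMod 2) (p : α → Prop) [DecidablePred p] (l : List α)
    (hx : ∀ a ∈ l, ¬ p a → x a = 0) (hy : ∀ a ∈ l, ¬ p a → y a = 0) :
    cr x y (l.filter (fun a => decide (p a))) = cr x y l := by
  induction l with
  | nil => simp [cr]
  | cons a l ih =>
    have ih := ih (fun b hb => hx b (List.mem_cons_of_mem _ hb))
      (fun b hb => hy b (List.mem_cons_of_mem _ hb))
    have hs := sum_map_filter y p l (fun b hb => hy b (List.mem_cons_of_mem _ hb))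
    by_cases ha : p a
    · simp [ha, ih, cr, hs]
    · simp [ha, ih, cr, hx a (by simp) ha]

lemma sum_map_congr {α : Type*} {x x' : α → ZMod 2} {l : List α} (h : ∀ a ∈ l, x a = x' a) :
    (l.map x).sum = (l.map x').sum := by
  rw [List.map_congr_left h]

lemma cr_congr {α : Type*} {x y x' y' : α → ZMod 2} {l : List α} (hx : ∀ a ∈ l, x a = x' a)
    (hy : ∀ a ∈ l, y a = y' a) : cr x y l = cr x' y' l := by
  induction l with
  | nil => rfl
  | cons a l ih =>
    simp only [cr]
    rw [ih (fun b hb => hx b (List.mem_cons_of_mem _ hb))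
      (fun b hb => hy b (List.mem_cons_of_mem _ hb)), hx a (by simp),
      sum_map_congr (fun b hb => hy b (List.mem_cons_of_mem _ hb))]

lemma cr_map {α β : Type*} (f : α → β) (x y : β → ZMod 2) (l : List α) :
    cr x y (l.map f) = cr (fun a => x (f a)) (fun a => y (f a)) l := by
  induction l with
  | nil => rfl
  | cons a l ih => simp only [List.map_cons, cr, ih, List.map_map]; rfl

lemma cr_zero_left {α : Type*} (x y : α → ZMod 2) (l : List α) (h : ∀ a ∈ l, x a = 0) :
    cr x y l = 0 := by
  induction l with
  | nil => rfl
  | cons a l ih =>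
    simp only [cr, h a (by simp), ih (fun b hb => h b (List.mem_cons_of_mem _ hb))]; simp

lemma cr_zero_right {α : Type*} (x y : α → ZMod 2) (l : List α) (h : ∀ a ∈ l, y a = 0) :
    cr x y l = 0 := by
  induction l with
  | nil => rfl
  | cons a l ih =>
    have h0 : (l.map y).sum = 0 := by
      rw [sum_map_congr (x' := fun _ => 0) (fun b hb => h b (List.mem_cons_of_mem _ hb))]; simp
    simp only [cr, h0, ih (fun b hb => h b (List.mem_cons_of_mem _ hb))]; simp

end Crossing

section Rotation

variable {V : Type*} [DecidableEq V]

/-- The indicator of a single edge `st`. -/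
def edgeInd (s t : V) : V → V → ZMod 2 := fun p q => if s(p, q) = s(s, t) then 1 else 0

lemma edgeInd_symm (s t p q : V) : edgeInd s t p q = edgeInd s t q p := by
  simp only [edgeInd, Sym2.eq_swap (a := p)]

lemma edgeInd_of_not_adj {G : SimpleGraph V} {s t : V} (h : G.Adj s t) (p q : V)
    (hpq : ¬ G.Adj p q) : edgeInd s t p q = 0 := by
  have : s(p, q) ≠ s(s, t) := by
    intro e
    rcases Sym2.eq_iff.1 e with ⟨rfl, rfl⟩ | ⟨rfl, rfl⟩
    exacts [hpq h, hpq h.symm]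
  simp [edgeInd, this]

/-- `rot v` lists the neighbours of `v`, each once: a rotation system cut open at each vertex. -/
structure IsRot (G : SimpleGraph V) (rot : V → List V) : Prop where
  nodup : ∀ v, (rot v).Nodup
  mem : ∀ v w, w ∈ rot v ↔ G.Adj v w

lemma sum_edgeInd {G : SimpleGraph V} {rot : V → List V} (hr : IsRot G rot) {s t : V}
    (h : G.Adj s t) (v : V) :
    ((rot v).map (edgeInd s t v)).sum = if v = s ∨ v = t then 1 else 0 := by
  have key : ∀ (l : List V) (z : V), l.Nodup →
      (l.map (fun w => if w = z then (1 : ZMod 2) else 0)).sum = if z ∈ l then 1 else 0 := by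
    intro l z hl
    induction l with
    | nil => simp
    | cons a l ih =>
      have hl' := List.nodup_cons.1 hl
      simp only [List.map_cons, List.sum_cons, ih hl'.2, List.mem_cons]
      by_cases ha : a = z
      · subst ha; simp [hl'.1]
      · simp [ha, Ne.symm ha]
  by_cases h1 : v = s
  · subst h1
    rw [sum_map_congr (x' := fun w => if w = t then 1 else 0), key _ _ (hr.nodup _)]
    · simp [hr.mem, h]
    · intro a _
      simp only [edgeInd]
      congr 1
      exact propext Sym2.congr_right
  · by_cases h2 : v = t
    · subst h2
      rw [sum_map_congr (x' := fun w => if w = s then 1 else 0), key _ _ (hr.nodup _)]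
      · simp [hr.mem, h.symm]
      · intro a _
        simp only [edgeInd]
        congr 1
        rw [Sym2.eq_swap]
        exact propext Sym2.congr_left
    · rw [sum_map_congr (x' := fun _ => 0)]
      · simp [h1, h2]
      · intro a _
        simp [edgeInd, h1, h2]

/-- `Cyc G rot S X`: the set of edges with indicator `X` contains no edge inside `S` and has even
degree at every vertex outside `S`; it is a mod 2 cycle of the graph with `S` contracted. -/
structure Cyc (G : SimpleGraph V) (rot : V → List V) (S : Finset V) (X : V → V → ZMod 2) :
    Prop where
  symm : ∀ u v, X u v = X v u
  supp : ∀ u v, ¬ G.Adj u v → X u v = 0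
  zero : ∀ u v, u ∈ S → v ∈ S → X u v = 0
  even : ∀ v, v ∉ S → ((rot v).map (X v)).sum = 0

lemma zmod2_two : (2 : ZMod 2) = 0 := rfl

lemma cyc_add_edge {G : SimpleGraph V} {rot : V → List V} (hr : IsRot G rot) {S : Finset V}
    {s₀ y : V} (hs : s₀ ∈ S) (hy : y ∉ S) (hadj : G.Adj s₀ y) {X : V → V → ZMod 2}
    (hX : Cyc G rot (insert y S) X) (c : ZMod 2) (hc : c = ((rot y).map (X y)).sum) :
    Cyc G rot S (fun u v => X u v + c * edgeInd s₀ y u v) := by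
  refine ⟨fun u v => by rw [hX.symm u v, edgeInd_symm], fun u v h => ?_, fun u v hu hv => ?_,
    fun v hv => ?_⟩
  · rw [hX.supp u v h, edgeInd_of_not_adj hadj u v h]; simp
  · rw [hX.zero u v (Finset.mem_insert_of_mem hu) (Finset.mem_insert_of_mem hv)]
    have h1 : s(u, v) ≠ s(s₀, y) := by
      intro e
      rcases Sym2.eq_iff.1 e with ⟨rfl, rfl⟩ | ⟨rfl, rfl⟩
      exacts [hy hv, hy hu]
    simp [edgeInd, h1]
  · rw [List.sum_map_add, List.sum_map_mul_left, sum_edgeInd hr hadj]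
    by_cases h : v = y
    · subst h
      rw [← hc]
      simp only [or_true, if_true, mul_one]
      linear_combination c * zmod2_two
    · have h2 : v ≠ s₀ := fun e => hv (e ▸ hs)
      simp [h, h2, hX.even v (by simp [h, hv])]

variable [Fintype V]

/-- The number of common edges of `X` and `Y` modulo 2, each edge being listed from its end
in `A`. -/
def pairing (A : Finset V) (X Y : V → V → ZMod 2) : ZMod 2 :=
  ∑ a ∈ A, ∑ b, X a b * Y a b

/-- Contracting the connected pieces of `S`, the list `ℓ` of darts leaving `S` plays the role of
the rotation at the contracted vertex: mod 2 cycles have total crossing number equal to their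
number of common edges. -/
structure DartInv (G : SimpleGraph V) (rot : V → List V) (A S : Finset V) (ℓ : List (V × V)) :
    Prop where
  nodup : ℓ.Nodup
  mem : ∀ d : V × V, d ∈ ℓ ↔ d.1 ∈ S ∧ d.2 ∉ S ∧ G.Adj d.1 d.2
  cross : ∀ X Y, Cyc G rot S X → Cyc G rot S Y →
    ∑ v ∈ Sᶜ, cr (X v) (Y v) (rot v) + cr (fun d => X d.1 d.2) (fun d => Y d.1 d.2) ℓ
      + pairing A X Y = 0

lemma sum_rot_eq {G : SimpleGraph V} {rot : V → List V} (hr : IsRot G rot) (X : V → V → ZMod 2)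
    (hX : ∀ u v, ¬ G.Adj u v → X u v = 0) (v : V) : ((rot v).map (X v)).sum = ∑ w, X v w := by
  rw [← List.sum_toFinset _ (hr.nodup v)]
  apply Finset.sum_subset (Finset.subset_univ _)
  intro w _ hw
  apply hX
  rwa [List.mem_toFinset, hr.mem] at hw

lemma pairing_add_edge {G : SimpleGraph V} {A : Finset V}
    (hA : ∀ u v, G.Adj u v → (u ∈ A ↔ v ∉ A)) {s₀ y : V} (hadj : G.Adj s₀ y)
    (X Y : V → V → ZMod 2) (hX : X s₀ y = 0) (hY : Y s₀ y = 0) (hX' : X y s₀ = 0)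
    (hY' : Y y s₀ = 0) (c d : ZMod 2) :
    pairing A (fun u v => X u v + c * edgeInd s₀ y u v) (fun u v => Y u v + d * edgeInd s₀ y u v)
      = pairing A X Y + c * d := by
  have e1 : ∀ u v, (X u v + c * edgeInd s₀ y u v) * (Y u v + d * edgeInd s₀ y u v) =
      X u v * Y u v + c * d * edgeInd s₀ y u v := by
    intro u v
    by_cases h : s(u, v) = s(s₀, y)
    · have : X u v = 0 ∧ Y u v = 0 := by
        rcases Sym2.eq_iff.1 h with ⟨rfl, rfl⟩ | ⟨rfl, rfl⟩
        exacts [⟨hX, hY⟩, ⟨hX', hY'⟩]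
      simp [edgeInd, h, this.1, this.2]
    · simp [edgeInd, h]
  have key : ∑ a ∈ A, ∑ b, edgeInd s₀ y a b = 1 := by
    have : ∀ a0 b0 : V, a0 ∈ A → b0 ∉ A → ∑ a ∈ A, ∑ b, edgeInd a0 b0 a b = 1 := by
      intro a0 b0 ha hb
      rw [Finset.sum_eq_single_of_mem a0 ha, Finset.sum_eq_single b0]
      · simp [edgeInd]
      · intro b _ hb'
        have : s(a0, b) ≠ s(a0, b0) := fun e => hb' (Sym2.congr_right.1 e)
        simp [edgeInd, this]
      · simp
      · intro a ha' hne
        apply Finset.sum_eq_zero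
        intro b _
        have : s(a, b) ≠ s(a0, b0) := by
          intro e
          rcases Sym2.eq_iff.1 e with ⟨h, -⟩ | ⟨h, -⟩
          exacts [hne h, hb (h ▸ ha')]
        simp [edgeInd, this]
    by_cases hs : s₀ ∈ A
    · exact this s₀ y hs ((hA _ _ hadj).1 hs)
    · have hy : y ∈ A := by have := hA _ _ hadj; tauto
      have h2 := this y s₀ hy hs
      have h3 : edgeInd y s₀ = edgeInd s₀ y := by
        funext p q; simp only [edgeInd, Sym2.eq_swap (a := y)]
      rwa [h3] at h2
  simp only [pairing, e1, Finset.sum_add_distrib, ← Finset.mul_sum, key, mul_one]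

/-- Contracting one more dart `(s₀, y)` leaving `S`: in the list of darts, the dart is replaced by
the other darts at `y` in rotational order, starting behind `(y, s₀)`. -/
lemma DartInv.contract {G : SimpleGraph V} {rot : V → List V} (hr : IsRot G rot) {A S : Finset V}
    (hA : ∀ u v, G.Adj u v → (u ∈ A ↔ v ∉ A)) {P Q : List (V × V)} {s₀ y : V}
    (h : DartInv G rot A S (P ++ (s₀, y) :: Q)) :
    ∃ D : List (V × V), (∀ d ∈ D, d.1 = y ∧ G.Adj y d.2) ∧
      DartInv G rot A (insert y S) (P.filter (fun d => decide (d.2 ≠ y)) ++ D ++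
        Q.filter (fun d => decide (d.2 ≠ y))) := by
  obtain ⟨hs, hy, hadj⟩ := (h.mem (s₀, y)).1 (by simp)
  dsimp only at hs hy hadj
  obtain ⟨l₁, l₂, hl⟩ := List.append_of_mem ((hr.mem y s₀).2 hadj.symm)
  have hnd := hr.nodup y
  rw [hl] at hnd
  have hnd' : (s₀ :: (l₂ ++ l₁)).Nodup :=
    (List.perm_append_comm (l₁ := l₁) (l₂ := s₀ :: l₂)).nodup_iff.1 hnd
  have hs12 : s₀ ∉ l₂ ++ l₁ := (List.nodup_cons.1 hnd').1
  have hmem : ∀ w, w ∈ l₂ ++ l₁ ↔ G.Adj y w ∧ w ≠ s₀ := by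
    intro w
    have h1 := hr.mem y w
    rw [hl] at h1
    rw [← h1]
    constructor
    · intro hw
      refine ⟨?_, fun e => hs12 (e ▸ hw)⟩
      simp only [List.mem_append, List.mem_cons] at hw ⊢; tauto
    · rintro ⟨hw, hne⟩
      simp only [List.mem_append, List.mem_cons] at hw ⊢; tauto
  have hPQ : (((s₀, y) : V × V) :: (Q ++ P)).Nodup :=
    (List.perm_append_comm (l₁ := P) (l₂ := (s₀, y) :: Q)).nodup_iff.1 h.nodup
  have hPQn := (List.nodup_cons.1 hPQ).1
  have hPQm : ∀ d, d ∈ Q ++ P ↔ (d.1 ∈ S ∧ d.2 ∉ S ∧ G.Adj d.1 d.2) ∧ d ≠ (s₀, y) := by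
    intro d
    rw [← h.mem d]
    constructor
    · intro hd
      refine ⟨?_, fun e => hPQn (e ▸ hd)⟩
      simp only [List.mem_append, List.mem_cons] at hd ⊢; tauto
    · rintro ⟨hd, hne⟩
      simp only [List.mem_append, List.mem_cons] at hd ⊢; tauto
  set D0 := (l₂ ++ l₁).filter (fun w => decide (w ∉ S)) with hD0
  have hD0m : ∀ w, w ∈ D0 ↔ G.Adj y w ∧ w ∉ S := by
    intro w
    rw [hD0, List.mem_filter, hmem]
    simp only [decide_eq_true_eq]
    constructor
    · tauto
    · rintro ⟨h1, h2⟩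
      exact ⟨⟨h1, fun e => h2 (e ▸ hs)⟩, h2⟩
  refine ⟨D0.map (fun w => (y, w)), ?_, ?_, ?_, ?_⟩
  · intro d hd
    obtain ⟨w, hw, rfl⟩ := List.mem_map.1 hd
    exact ⟨rfl, ((hD0m w).1 hw).1⟩
  · have hperm : (P.filter (fun d => decide (d.2 ≠ y)) ++ D0.map (fun w => (y, w)) ++
        Q.filter (fun d => decide (d.2 ≠ y))).Perm
        (D0.map (fun w => (y, w)) ++ (Q ++ P).filter (fun d => decide (d.2 ≠ y))) := by
      rw [List.filter_append]
      refine (List.perm_append_comm.append_right _).trans ?_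
      rw [List.append_assoc]
      exact List.perm_append_comm.append_left _
    rw [hperm.nodup_iff]
    refine List.Nodup.append ?_ ((List.nodup_cons.1 hPQ).2.filter _) ?_
    · apply List.Nodup.map
      · intro a b hab
        exact (Prod.mk.inj hab).2
      · exact (List.nodup_cons.1 hnd').2.filter _
    · intro d hd hd'
      obtain ⟨w, hw, rfl⟩ := List.mem_map.1 hd
      have h2 := (hPQm _).1 (List.mem_filter.1 hd').1
      exact hy h2.1.1
  · rintro ⟨p, q⟩
    have h1 := hPQm (p, q)
    have h2 := hD0m q
    simp only [List.mem_append, List.mem_filter, List.mem_map, decide_eq_true_eq,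
      Finset.mem_insert, Prod.mk.injEq, ne_eq] at h1 ⊢
    constructor
    · rintro ((⟨ha, hb⟩ | ⟨w, hw, rfl, rfl⟩) | ⟨ha, hb⟩)
      · tauto
      · have := h2.1 hw
        exact ⟨Or.inl rfl, by rintro (e | e); exacts [this.1.ne e.symm, this.2 e], this.1⟩
      · tauto
    · rintro ⟨ha | ha, hb, hc⟩
      · subst ha
        exact Or.inl (Or.inr ⟨q, h2.2 ⟨hc, fun e => hb (Or.inr e)⟩, rfl, rfl⟩)
      · have : q ∈ S → False := fun e => hb (Or.inr e)
        have : q ≠ y := fun e => hb (Or.inl e)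
        tauto
  · intro X Y hX hY
    have sumrot : ∀ Z, Cyc G rot (insert y S) Z →
        ((rot y).map (Z y)).sum = (l₁.map (Z y)).sum + (l₂.map (Z y)).sum := by
      intro Z hZ
      rw [hl, List.map_append, List.sum_append, List.map_cons, List.sum_cons,
        hZ.zero y s₀ (by simp) (by simp [hs])]
      ring
    have hX2 := cyc_add_edge hr hs hy hadj hX _ (sumrot X hX).symm
    have hY2 := cyc_add_edge hr hs hy hadj hY _ (sumrot Y hY).symm
    have hc := h.cross _ _ hX2 hY2
    rw [pairing_add_edge hA hadj X Y (hX.zero _ _ (by simp [hs]) (by simp))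
      (hY.zero _ _ (by simp [hs]) (by simp)) (hX.zero _ _ (by simp) (by simp [hs]))
      (hY.zero _ _ (by simp) (by simp [hs]))] at hc
    have hsum : ∀ f : V → ZMod 2, ∑ v ∈ Sᶜ, f v = f y + ∑ v ∈ (insert y S)ᶜ, f v := by
      intro f
      rw [Finset.compl_insert, Finset.add_sum_erase]
      simpa using hy
    rw [hsum] at hc
    -- the modified cochains agree with the old ones away from the contracted edge
    have off : ∀ (Z : V → V → ZMod 2) (c : ZMod 2) (u v : V), s(u, v) ≠ s(s₀, y) →
        Z u v + c * edgeInd s₀ y u v = Z u v := by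
      intro Z c u v huv; simp [edgeInd, huv]
    have on : ∀ (Z : V → V → ZMod 2), Cyc G rot (insert y S) Z → ∀ (c : ZMod 2),
        Z s₀ y + c * edgeInd s₀ y s₀ y = c ∧ Z y s₀ + c * edgeInd s₀ y y s₀ = c := by
      intro Z hZ c
      rw [edgeInd_symm s₀ y y s₀, hZ.symm y s₀,
        hZ.zero s₀ y (by simp [hs]) (by simp)]
      simp [edgeInd]
    have offS : ∀ v, v ∉ insert y S → ∀ w, s(v, w) ≠ s(s₀, y) := by
      intro v hv w e
      rcases Sym2.eq_iff.1 e with ⟨rfl, rfl⟩ | ⟨rfl, rfl⟩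
      · exact hv (by simp [hs])
      · exact hv (by simp)
    have off12 : ∀ w ∈ l₂ ++ l₁, s(y, w) ≠ s(s₀, y) := by
      intro w hw e
      rcases Sym2.eq_iff.1 e with ⟨e1, -⟩ | ⟨-, e2⟩
      · exact hadj.ne e1.symm
      · exact hs12 (e2 ▸ hw)
    have offPQ : ∀ d ∈ Q ++ P, s(d.1, d.2) ≠ s(s₀, y) := by
      rintro ⟨p, q⟩ hd e
      have h1 := (hPQm _).1 hd
      rcases Sym2.eq_iff.1 e with ⟨e1, e2⟩ | ⟨e1, e2⟩
      · exact h1.2 (Prod.ext e1 e2)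
      · exact hy (e1 ▸ h1.1.1)
    set x₁ := (l₁.map (X y)).sum
    set x₂ := (l₂.map (X y)).sum
    set y₁ := (l₁.map (Y y)).sum
    set y₂ := (l₂.map (Y y)).sum
    have m1 : ∀ w ∈ l₁, w ∈ l₂ ++ l₁ := fun w hw => List.mem_append_right _ hw
    have m2 : ∀ w ∈ l₂, w ∈ l₂ ++ l₁ := fun w hw => List.mem_append_left _ hw
    have mP : ∀ w ∈ P, w ∈ Q ++ P := fun w hw => List.mem_append_right _ hw
    have mQ : ∀ w ∈ Q, w ∈ Q ++ P := fun w hw => List.mem_append_left _ hw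
    rw [hl] at hc
    simp only [cr_append, cr, List.map_cons, List.sum_cons, on X hX, on Y hY] at hc
    rw [Finset.sum_congr rfl (fun v hv => cr_congr (fun w _ => off X _ v w (offS v (by simpa using hv) w))
        (fun w _ => off Y _ v w (offS v (by simpa using hv) w))),
      cr_congr (l := l₁) (fun w hw => off X _ y w (off12 w (m1 w hw)))
        (fun w hw => off Y _ y w (off12 w (m1 w hw))),
      cr_congr (l := l₂) (fun w hw => off X _ y w (off12 w (m2 w hw)))
        (fun w hw => off Y _ y w (off12 w (m2 w hw))),
      sum_map_congr (l := l₁) (fun w hw => off X _ y w (off12 w (m1 w hw))),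
      sum_map_congr (l := l₂) (fun w hw => off Y _ y w (off12 w (m2 w hw))),
      cr_congr (l := P) (fun w hw => off X _ _ _ (offPQ w (mP w hw)))
        (fun w hw => off Y _ _ _ (offPQ w (mP w hw))),
      cr_congr (l := Q) (fun w hw => off X _ _ _ (offPQ w (mQ w hw)))
        (fun w hw => off Y _ _ _ (offPQ w (mQ w hw))),
      sum_map_congr (l := P) (fun w hw => off X _ _ _ (offPQ w (mP w hw))),
      sum_map_congr (l := Q) (fun w hw => off Y _ _ _ (offPQ w (mQ w hw)))] at hc
    have fz : ∀ (Z : V → V → ZMod 2), Cyc G rot (insert y S) Z → ∀ d ∈ Q ++ P, ¬ d.2 ≠ y →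
        Z d.1 d.2 = 0 := by
      intro Z hZ d hd he
      have h1 := (hPQm _).1 hd
      exact hZ.zero _ _ (by simp [h1.1.1]) (by simp [not_not.1 he])
    have fzD : ∀ (Z : V → V → ZMod 2), Cyc G rot (insert y S) Z → ∀ w ∈ l₂ ++ l₁, ¬ w ∉ S →
        Z y w = 0 := by
      intro Z hZ w hw he
      exact hZ.zero _ _ (by simp) (by simp [not_not.1 he])
    simp only [cr_append, List.map_append, List.sum_append]
    rw [cr_filter (l := P) _ _ _ (fun d hd => fz X hX d (mP d hd)) (fun d hd => fz Y hY d (mP d hd)),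
      cr_filter (l := Q) _ _ _ (fun d hd => fz X hX d (mQ d hd)) (fun d hd => fz Y hY d (mQ d hd)),
      sum_map_filter (l := P) _ _ (fun d hd => fz X hX d (mP d hd)),
      sum_map_filter (l := Q) _ _ (fun d hd => fz Y hY d (mQ d hd)), cr_map, List.map_map,
      List.map_map, hD0, cr_filter _ _ _ _ (fzD X hX) (fzD Y hY)]
    have e1 : (((l₂ ++ l₁).filter (fun w => decide (w ∉ S))).map
        ((fun d : V × V => X d.1 d.2) ∘ fun w => (y, w))).sum = x₂ + x₁ := by
      change (List.map (X y) _).sum = _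
      rw [sum_map_filter _ _ _ (fzD X hX), List.map_append, List.sum_append]
    have e2 : (((l₂ ++ l₁).filter (fun w => decide (w ∉ S))).map
        ((fun d : V × V => Y d.1 d.2) ∘ fun w => (y, w))).sum = y₂ + y₁ := by
      change (List.map (Y y) _).sum = _
      rw [sum_map_filter _ _ _ (fzD Y hY), List.map_append, List.sum_append]
    rw [e1, e2, cr_append]
    change _ + (_ + (cr (X y) (Y y) l₂ + cr (X y) (Y y) l₁ + x₂ * y₁) + _ + _ + _) + _ = _
    linear_combination hc - (x₁ * y₁ + x₂ * y₂ + 2 * x₁ * y₂) * zmod2_two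
  
end Rotation

/-! ### Signs and orders in planar rotation systems -/

section Rotation

variable {V : Type*} [DecidableEq V]

/-- The indicator of the three edges of a path `s₁ v₁ v₂ s₂`. -/
def pathInd (s₁ v₁ v₂ s₂ : V) : V → V → ZMod 2 :=
  fun p q => edgeInd s₁ v₁ p q + edgeInd v₁ v₂ p q + edgeInd s₂ v₂ p q

lemma pathInd_cyc {G : SimpleGraph V} {rot : V → List V} (hr : IsRot G rot) {S : Finset V}
    {s₁ v₁ v₂ s₂ : V} (h1 : s₁ ∈ S) (h2 : s₂ ∈ S) (h3 : v₁ ∉ S) (h4 : v₂ ∉ S)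
    (e1 : G.Adj s₁ v₁) (e2 : G.Adj v₁ v₂) (e3 : G.Adj s₂ v₂) :
    Cyc G rot S (pathInd s₁ v₁ v₂ s₂) := by
  refine ⟨fun u v => ?_, fun u v h => ?_, fun u v hu hv => ?_, fun v hv => ?_⟩
  · simp only [pathInd, edgeInd_symm _ _ u v]
  · simp only [pathInd, edgeInd_of_not_adj e1 _ _ h, edgeInd_of_not_adj e2 _ _ h,
      edgeInd_of_not_adj e3 _ _ h, add_zero]
  · have key : ∀ a b, b ∉ S → edgeInd a b u v = 0 := by
      intro a b hb
      have : s(u, v) ≠ s(a, b) := by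
        intro e
        rcases Sym2.eq_iff.1 e with ⟨-, rfl⟩ | ⟨rfl, -⟩
        exacts [hb hv, hb hu]
      simp [edgeInd, this]
    simp [pathInd, key _ _ h3, key _ _ h4]
  · have : (rot v).map (pathInd s₁ v₁ v₂ s₂ v) = (rot v).map (fun w =>
      (edgeInd s₁ v₁ v w + edgeInd v₁ v₂ v w) + edgeInd s₂ v₂ v w) := rfl
    rw [this, List.sum_map_add, List.sum_map_add, sum_edgeInd hr e1, sum_edgeInd hr e2,
      sum_edgeInd hr e3]
    have n1 : v ≠ s₁ := fun e => hv (e ▸ h1)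
    have n2 : v ≠ s₂ := fun e => hv (e ▸ h2)
    by_cases c1 : v = v₁
    · subst c1
      simp only [n1, n2, e2.ne, or_true, or_false, if_true, if_false]; rfl
    · by_cases c2 : v = v₂
      · subst c2
        simp only [n1, n2, c1, or_true, or_false, if_true, if_false]; rfl
      · simp [n1, n2, c1, c2]

lemma pathInd_ne_zero {S : Finset V} {s₁ v₁ v₂ s₂ : V} (h1 : s₁ ∈ S) (h2 : s₂ ∈ S)
    {p q : V} (h : pathInd s₁ v₁ v₂ s₂ p q ≠ 0) :
    (p ∉ S → p = v₁ ∨ p = v₂) ∧ (q ∉ S → q = v₁ ∨ q = v₂) := by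
  by_contra hc
  apply h
  have key : ∀ a b, (a ∈ S ∨ a = v₁ ∨ a = v₂) → (b = v₁ ∨ b = v₂) → edgeInd a b p q = 0 := by
    intro a b ha hb
    have : s(p, q) ≠ s(a, b) := by
      intro e
      apply hc
      rcases Sym2.eq_iff.1 e with ⟨rfl, rfl⟩ | ⟨rfl, rfl⟩ <;> tauto
    simp [edgeInd, this]
  simp [pathInd, key s₁ v₁ (Or.inl h1) (Or.inl rfl), key s₂ v₂ (Or.inl h2) (Or.inr rfl),
    key v₁ v₂ (Or.inr (Or.inl rfl)) (Or.inr rfl)]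

lemma pathInd_dart {S : Finset V} {s₁ v₁ v₂ s₂ : V} (h3 : v₁ ∉ S)
    (h4 : v₂ ∉ S) (h5 : v₁ ≠ v₂) {d : V × V} (hd1 : d.1 ∈ S) (hd2 : d.2 ∉ S) :
    pathInd s₁ v₁ v₂ s₂ d.1 d.2 = if d = (s₁, v₁) ∨ d = (s₂, v₂) then 1 else 0 := by
  obtain ⟨p, q⟩ := d
  dsimp only at hd1 hd2
  have m : ∀ a b, b ∉ S → (s(p, q) = s(a, b) ↔ p = a ∧ q = b) := by
    intro a b hb
    rw [Sym2.eq_iff]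
    constructor
    · rintro (h | ⟨rfl, rfl⟩)
      exacts [h, absurd hd1 hb]
    · exact Or.inl
  have m2 : ¬ (p = v₁ ∧ q = v₂) := fun e => h3 (e.1 ▸ hd1)
  simp only [pathInd, edgeInd, m _ _ h3, m _ _ h4, m2, if_false, add_zero, Prod.mk.injEq]
  by_cases c1 : p = s₁ ∧ q = v₁
  · have : ¬ (p = s₂ ∧ q = v₂) := fun e => h5 (c1.2.symm.trans e.2)
    simp [c1, h5]
  · by_cases c2 : p = s₂ ∧ q = v₂
    · simp [c2, h5.symm]
    · simp [c1, c2]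

lemma sum_ind_mem {α : Type*} [DecidableEq α] (l : List α) (hl : l.Nodup) (z : α) (x : α → ZMod 2)
    (hx : ∀ a ∈ l, x a = if a = z then 1 else 0) : (l.map x).sum = if z ∈ l then 1 else 0 := by
  induction l with
  | nil => simp
  | cons a l ih =>
    have hl' := List.nodup_cons.1 hl
    rw [List.map_cons, List.sum_cons, ih hl'.2 (fun b hb => hx b (List.mem_cons_of_mem _ hb)),
      hx a (by simp)]
    by_cases ha : a = z
    · subst ha; simp [hl'.1]
    · simp [ha, Ne.symm ha]

variable [Fintype V]

/-- Starting a new component: if no edge leaves `S`, the vertex `y` becomes a new piece and its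
rotation becomes the list of darts. -/
lemma DartInv.start {G : SimpleGraph V} {rot : V → List V} (hr : IsRot G rot) {A S : Finset V}
    {y : V} (hy : y ∉ S) (h : DartInv G rot A S []) :
    DartInv G rot A (insert y S) ((rot y).map (fun w => (y, w))) := by
  have hno : ∀ u v, u ∈ S → v ∉ S → ¬ G.Adj u v := by
    intro u v hu hv huv
    simpa using (h.mem (u, v)).2 ⟨hu, hv, huv⟩
  refine ⟨?_, ?_, ?_⟩
  · exact List.Nodup.map (fun a b hab => (Prod.mk.inj hab).2) (hr.nodup y)
  · rintro ⟨p, q⟩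
    simp only [List.mem_map, Prod.mk.injEq, Finset.mem_insert, hr.mem]
    constructor
    · rintro ⟨w, hw, rfl, rfl⟩
      exact ⟨Or.inl rfl, by rintro (e | e); exacts [hw.ne e.symm, hno _ _ e hy hw.symm], hw⟩
    · rintro ⟨rfl | hp, hq, hpq⟩
      · exact ⟨q, hpq, rfl, rfl⟩
      · exact absurd hpq (hno _ _ hp fun e => hq (Or.inr e))
  · intro X Y hX hY
    have lift : ∀ Z, Cyc G rot (insert y S) Z → Cyc G rot S Z := by
      intro Z hZ
      refine ⟨hZ.symm, hZ.supp, fun u v hu hv => hZ.zero u v (Finset.mem_insert_of_mem hu)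
        (Finset.mem_insert_of_mem hv), fun v hv => ?_⟩
      by_cases hvy : v = y
      · subst hvy
        -- handshaking on the complement of `S`: all other degrees are even
        have h1 : ∑ u ∈ Sᶜ, ∑ w, Z u w = 0 := by
          have h2 : ∀ u ∈ Sᶜ, ∑ w, Z u w = ∑ w ∈ Sᶜ, Z u w := by
            intro u hu
            symm
            apply Finset.sum_subset (Finset.subset_univ _)
            intro w _ hw
            refine hZ.supp u w fun e => hno w u (by simpa using hw) (by simpa using hu) e.symm
          rw [Finset.sum_congr rfl h2, ← Finset.sum_product']
          refine Finset.sum_involution (fun p _ => (p.2, p.1)) ?_ ?_ ?_ ?_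
          · rintro ⟨p, q⟩ _
            simp only
            rw [hZ.symm q p]
            linear_combination Z p q * zmod2_two
          · rintro ⟨p, q⟩ _ hne e
            have e1 : q = p := (Prod.mk.inj e).1
            exact hne (hZ.supp _ _ (by simp [e1]))
          · rintro ⟨p, q⟩ hpq
            simp only [Finset.mem_product] at hpq ⊢
            exact ⟨hpq.2, hpq.1⟩
          · rintro ⟨p, q⟩ _; rfl
        rw [Finset.sum_eq_single_of_mem v (by simpa using hy)] at h1
        · rw [sum_rot_eq hr Z hZ.supp]; exact h1
        · intro u hu hne
          rw [← sum_rot_eq hr Z hZ.supp]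
          exact hZ.even u (by simp only [Finset.mem_compl] at hu; simp [hne, hu])
      · exact hZ.even v (by simp [hvy, hv])
    have hc := h.cross X Y (lift X hX) (lift Y hY)
    rw [cr_map]
    have : ∑ v ∈ Sᶜ, cr (X v) (Y v) (rot v) = cr (X y) (Y y) (rot y) +
        ∑ v ∈ (insert y S)ᶜ, cr (X v) (Y v) (rot v) := by
      rw [Finset.compl_insert]
      exact (Finset.add_sum_erase _ (fun v => cr (X v) (Y v) (rot v)) (by simpa using hy)).symm
    rw [this] at hc
    simp only [cr, add_zero] at hc
    rw [← hc]
    ring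

/-- The planarity argument of the induction: with the darts into the two classes separated, the
last dart `(s_b, b)` of the first block and the first dart `(s_a, a)` of the second block cannot
both have a further neighbour outside `S` next to `S`, for the two paths through `S` would cross
an odd number of times. -/
lemma DartInv.no_double {G : SimpleGraph V} {rot : V → List V} (hr : IsRot G rot)
    {A S : Finset V} (hA : ∀ u v, G.Adj u v → (u ∈ A ↔ v ∉ A)) {L R : List (V × V)}
    {sa a sb b : V} (h : DartInv G rot A S ((L ++ [(sb, b)]) ++ ((sa, a) :: R)))
    (hL : ∀ d ∈ L ++ [(sb, b)], d.2 ∉ A) (hR : ∀ d ∈ (sa, a) :: R, d.2 ∈ A)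
    {u w su sw : V} (hu : u ∉ S) (hw : w ∉ S) (hsu : su ∈ S) (hsw : sw ∈ S)
    (hsu' : G.Adj su u) (hsw' : G.Adj sw w) (hua : G.Adj u a) (hbw : G.Adj b w)
    (hub : u ≠ b) (hwa : w ≠ a) : False := by
  obtain ⟨hsa, haS, hsa'⟩ := (h.mem (sa, a)).1 (by simp)
  obtain ⟨hsb, hbS, hsb'⟩ := (h.mem (sb, b)).1 (by simp)
  dsimp only at hsa haS hsa' hsb hbS hsb'
  have haA : a ∈ A := hR (sa, a) (by simp)
  have hbA : b ∉ A := hL (sb, b) (by simp)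
  have huA : u ∉ A := fun e => (hA _ _ hua).1 e haA
  have hwA : w ∈ A := by have := hA _ _ hbw; tauto
  have huw : u ≠ w := fun e => huA (e ▸ hwA)
  have hab : a ≠ b := fun e => hbA (e ▸ haA)
  have hdu : (su, u) ∈ L := by
    have h1 := (h.mem (su, u)).2 ⟨hsu, hu, hsu'⟩
    rcases List.mem_append.1 h1 with h2 | h2
    · rcases List.mem_append.1 h2 with h3 | h3
      · exact h3
      · simp only [List.mem_singleton, Prod.mk.injEq] at h3; exact absurd h3.2 hub
    · exact absurd (hR _ h2) huA
  have hdw : (sw, w) ∈ R := by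
    have h1 := (h.mem (sw, w)).2 ⟨hsw, hw, hsw'⟩
    rcases List.mem_append.1 h1 with h2 | h2
    · exact absurd hwA (hL _ h2)
    · rcases List.mem_cons.1 h2 with h3 | h3
      · simp only [Prod.mk.injEq] at h3; exact absurd h3.2 hwa
      · exact h3
  have hc := h.cross _ _ (pathInd_cyc hr hsu hsa hu haS hsu' hua hsa')
    (pathInd_cyc hr hsb hsw hbS hw hsb' hbw hsw')
  set X := pathInd su u a sa with hX
  set Y := pathInd sb b w sw with hY
  have t1 : ∑ v ∈ Sᶜ, cr (X v) (Y v) (rot v) = 0 := by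
    apply Finset.sum_eq_zero
    intro v hv
    have hv' : v ∉ S := by simpa using hv
    by_cases hvv : v = u ∨ v = a
    · apply cr_zero_right
      intro q _
      by_contra hne
      have h1 := (pathInd_ne_zero hsb hsw hne).1 hv'
      rcases hvv with rfl | rfl <;> rcases h1 with h1 | h1
      exacts [hub h1, huw h1, hab h1, hwa h1.symm]
    · apply cr_zero_left
      intro q _
      by_contra hne
      exact hvv ((pathInd_ne_zero hsu hsa hne).1 hv')
  have t2 : pairing A X Y = 0 := by
    apply Finset.sum_eq_zero
    intro p _
    apply Finset.sum_eq_zero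
    intro q _
    by_contra hne
    have hxne := left_ne_zero_of_mul hne
    have hyne := right_ne_zero_of_mul hne
    have h1 := pathInd_ne_zero hsu hsa hxne
    have h2 := pathInd_ne_zero hsb hsw hyne
    have h3 : p ∉ S ∨ q ∉ S := by
      by_contra hpq
      push Not at hpq
      exact hxne ((pathInd_cyc hr hsu hsa hu haS hsu' hua hsa').zero _ _ hpq.1 hpq.2)
    rcases h3 with h3 | h3
    · rcases h1.1 h3 with rfl | rfl <;> rcases h2.1 h3 with h4 | h4
      exacts [hub h4, huw h4, hab h4, hwa h4.symm]
    · rcases h1.2 h3 with rfl | rfl <;> rcases h2.2 h3 with h4 | h4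
      exacts [hub h4, huw h4, hab h4, hwa h4.symm]
  rw [t1, t2] at hc
  have hx : ∀ d ∈ (L ++ [(sb, b)]) ++ ((sa, a) :: R), X d.1 d.2 =
      if d = (su, u) ∨ d = (sa, a) then 1 else 0 := fun d hd =>
    pathInd_dart hu haS hua.ne ((h.mem d).1 hd).1 ((h.mem d).1 hd).2.1
  have hy : ∀ d ∈ (L ++ [(sb, b)]) ++ ((sa, a) :: R), Y d.1 d.2 =
      if d = (sb, b) ∨ d = (sw, w) then 1 else 0 := fun d hd =>
    pathInd_dart hbS hw hbw.ne ((h.mem d).1 hd).1 ((h.mem d).1 hd).2.1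
  have hnd := h.nodup
  have hndL : L.Nodup := List.Nodup.of_append_left (List.Nodup.of_append_left hnd)
  have hndR : R.Nodup := (List.nodup_cons.1 (List.Nodup.of_append_right hnd)).2
  have hLA : ∀ d ∈ L, d.2 ∉ A := fun d hd => hL d (by simp [hd])
  have hRA : ∀ d ∈ R, d.2 ∈ A := fun d hd => hR d (by simp [hd])
  have hbL : (sb, b) ∉ L := by
    have h1 := List.Nodup.of_append_left hnd
    rw [List.nodup_append] at h1
    intro e
    exact h1.2.2 _ e _ (List.mem_singleton_self _) rfl
  have haR : (sa, a) ∉ R := (List.nodup_cons.1 (List.Nodup.of_append_right hnd)).1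
  have yL : ∀ d ∈ L, Y d.1 d.2 = 0 := by
    intro d hd
    rw [hy d (by simp [hd]), if_neg]
    rintro (rfl | rfl)
    exacts [hbL hd, hLA _ hd hwA]
  have xR : ∀ d ∈ R, X d.1 d.2 = 0 := by
    intro d hd
    rw [hx d (by simp [hd]), if_neg]
    rintro (rfl | rfl)
    exacts [huA (hRA _ hd), haR hd]
  have sxL : (L.map (fun d => X d.1 d.2)).sum = 1 := by
    rw [sum_ind_mem L hndL (su, u), if_pos hdu]
    intro d hd
    rw [hx d (by simp [hd])]
    have : d ≠ (sa, a) := fun e => hLA d hd (by rw [e]; exact haA)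
    simp [this]
  have syR : (R.map (fun d => Y d.1 d.2)).sum = 1 := by
    rw [sum_ind_mem R hndR (sw, w), if_pos hdw]
    intro d hd
    rw [hy d (by simp [hd])]
    have : d ≠ (sb, b) := fun e => hbA (by have := hRA d hd; rw [e] at this; exact this)
    simp [this]
  have xb : X sb b = 0 := by
    rw [hx (sb, b) (by simp), if_neg]
    rintro (e | e)
    exacts [hub (Prod.mk.inj e).2.symm, hab (Prod.mk.inj e).2.symm]
  have xa : X sa a = 1 := by
    rw [hx (sa, a) (by simp), if_pos (Or.inr rfl)]
  have yb : Y sb b = 1 := by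
    rw [hy (sb, b) (by simp), if_pos (Or.inl rfl)]
  have ya : Y sa a = 0 := by
    rw [hy (sa, a) (by simp), if_neg]
    rintro (e | e)
    exacts [hab (Prod.mk.inj e).2, hwa (Prod.mk.inj e).2.symm]
  simp only [cr_append, cr, List.map_append, List.sum_append, List.map_cons, List.sum_cons,
    List.map_nil, List.sum_nil, xb, xa, yb, ya, syR, sxL] at hc
  rw [cr_zero_right _ _ L yL, cr_zero_left _ _ R xR] at hc
  revert hc
  decide

/-- Weaving one vertex into an order with signs: `y` is put first, and its sign `p y` is chosen to
respect the prescription at the only common neighbour. -/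
lemma extend_signs {G : SimpleGraph V} (D : V → V → Bool) (S : Finset V) {y : V}
    (huniq : ∀ u u', u ∉ S → u' ∉ S → G.Adj y u → G.Adj y u' → (∃ s ∈ S, G.Adj s u) →
      (∃ s ∈ S, G.Adj s u') → u = u')
    (ih : ∀ q₀ : V → Bool, ∃ (idx : V → ℕ) (p q : V → Bool),
      (∀ u, u ∉ insert y S → (∃ s ∈ insert y S, G.Adj s u) → q u = q₀ u) ∧
      (∀ u v, u ∉ insert y S → v ∉ insert y S → idx u = idx v → u = v) ∧
      ∀ v u, v ∉ insert y S → u ∉ insert y S → G.Adj v u → idx v < idx u →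
        xor (p v) (q u) = D v u) (q₀ : V → Bool) :
    ∃ (idx : V → ℕ) (p q : V → Bool),
      (∀ u, u ∉ S → (∃ s ∈ S, G.Adj s u) → q u = q₀ u) ∧
      (∀ u v, u ∉ S → v ∉ S → idx u = idx v → u = v) ∧
      ∀ v u, v ∉ S → u ∉ S → G.Adj v u → idx v < idx u → xor (p v) (q u) = D v u := by
  classical
  obtain ⟨py, hpy⟩ : ∃ py : Bool, ∀ u, u ∉ S → G.Adj y u → (∃ s ∈ S, G.Adj s u) →
      xor py (D y u) = q₀ u := by
    by_cases hex : ∃ u, u ∉ S ∧ G.Adj y u ∧ ∃ s ∈ S, G.Adj s u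
    · obtain ⟨u, h1, h2, h3⟩ := hex
      refine ⟨xor (q₀ u) (D y u), fun u' h1' h2' h3' => ?_⟩
      rw [← huniq u u' h1 h1' h2 h2' h3 h3']
      simp
    · exact ⟨true, fun u h1 h2 h3 => absurd ⟨u, h1, h2, h3⟩ hex⟩
  obtain ⟨idx, p, q, hq, hinj, hD⟩ := ih (fun u => if G.Adj y u then xor py (D y u) else q₀ u)
  refine ⟨fun v => if v = y then 0 else idx v + 1, fun v => if v = y then py else p v,
    fun v => if v = y then q₀ y else q v, ?_, ?_, ?_⟩
  · intro u hu hs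
    by_cases huy : u = y
    · simp [huy]
    · obtain ⟨s, hs1, hs2⟩ := hs
      simp only [huy, if_false]
      rw [hq u (by simp [huy, hu]) ⟨s, by simp [hs1], hs2⟩]
      split_ifs with hadj
      · exact hpy u hu hadj ⟨s, hs1, hs2⟩
      · rfl
  · intro u v hu hv huv
    by_cases h1 : u = y <;> by_cases h2 : v = y
    · rw [h1, h2]
    · simp [h1, h2] at huv
    · simp [h1, h2] at huv
    · simp only [h1, h2, if_false, Nat.add_right_cancel_iff] at huv
      exact hinj u v (by simp [h1, hu]) (by simp [h2, hv]) huv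
  · intro v u hv hu hadj hlt
    by_cases h1 : v = y
    · have h2 : u ≠ y := fun e => hadj.ne (h1.trans e.symm)
      simp only [h1, h2, if_true, if_false]
      rw [h1] at hadj
      rw [hq u (by simp [h2, hu]) ⟨y, by simp, hadj⟩, if_pos hadj]
      simp
    · by_cases h2 : u = y
      · simp [h2] at hlt
      · simp only [h1, h2, if_false, Nat.add_lt_add_iff_right] at hlt ⊢
        exact hD v u (by simp [h1, hv]) (by simp [h2, hu]) hadj hlt

/-- Induction on the number of vertices outside the contracted set `S`. The darts leaving `S` are
listed as `L ++ R`, those in `L` ending outside `A` and those in `R` ending in `A`. The vertices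
outside `S` get an order `idx` and two signs: `p v` is used towards later neighbours, `q u` towards
earlier ones, and `q` is prescribed by `q₀` on the vertices next to `S`. The next vertex `y` is the
end of one of the two darts at the boundary between the blocks: its new darts fit in there without
mixing the classes, and by `DartInv.no_double` one of the two ends has at most one neighbour next to
`S`, so that the prescriptions can be met by choosing `p y`. -/
lemma exists_signs_aux {G : SimpleGraph V} {rot : V → List V} (hr : IsRot G rot) {A : Finset V}
    (hA : ∀ u v, G.Adj u v → (u ∈ A ↔ v ∉ A)) (D : V → V → Bool) :
    ∀ (m : ℕ) (S : Finset V) (L R : List (V × V)), (Sᶜ).card = m →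
      DartInv G rot A S (L ++ R) → (∀ d ∈ L, d.2 ∉ A) → (∀ d ∈ R, d.2 ∈ A) →
      ∀ q₀ : V → Bool, ∃ (idx : V → ℕ) (p q : V → Bool),
        (∀ u, u ∉ S → (∃ s ∈ S, G.Adj s u) → q u = q₀ u) ∧
        (∀ u v, u ∉ S → v ∉ S → idx u = idx v → u = v) ∧
        ∀ v u, v ∉ S → u ∉ S → G.Adj v u → idx v < idx u → xor (p v) (q u) = D v u := by
  intro m
  induction m with
  | zero =>
    intro S L R hS _ _ _ q₀
    have hS' : ∀ v, v ∈ S := by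
      intro v
      by_contra hv
      have : v ∈ Sᶜ := by simpa using hv
      rw [Finset.card_eq_zero.1 hS] at this
      simp at this
    exact ⟨fun _ => 0, q₀, q₀, fun _ _ _ => rfl, fun u _ hu => absurd (hS' u) hu,
      fun u _ hu => absurd (hS' u) hu⟩
  | succ m ih =>
    intro S L R hS hI hL hR q₀
    have hcard : ∀ y, y ∉ S → ((insert y S)ᶜ).card = m := by
      intro y hy
      rw [Finset.compl_insert, Finset.card_erase_of_mem (by simpa using hy), hS]
      rfl
    -- contraction of a dart `(s, y)`, the new darts at `y` going to either block
    have step : ∀ (P Q : List (V × V)) (s y : V), L ++ R = P ++ (s, y) :: Q →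
        ((y ∈ A ∧ (∀ d ∈ P, d.2 ∉ A) ∧ (∀ d ∈ Q, d.2 ∈ A)) ∨
          (y ∉ A ∧ (∀ d ∈ P, d.2 ∉ A) ∧ (∀ d ∈ Q, d.2 ∈ A))) →
        (∀ u u', u ∉ S → u' ∉ S → G.Adj y u → G.Adj y u' → (∃ s ∈ S, G.Adj s u) →
          (∃ s ∈ S, G.Adj s u') → u = u') →
        ∃ (idx : V → ℕ) (p q : V → Bool),
        (∀ u, u ∉ S → (∃ s ∈ S, G.Adj s u) → q u = q₀ u) ∧
        (∀ u v, u ∉ S → v ∉ S → idx u = idx v → u = v) ∧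
        ∀ v u, v ∉ S → u ∉ S → G.Adj v u → idx v < idx u → xor (p v) (q u) = D v u := by
      intro P Q s y hPQ hcase huniq
      rw [hPQ] at hI
      have hy : y ∉ S := ((hI.mem (s, y)).1 (by simp)).2.1
      obtain ⟨N, hN, hI'⟩ := hI.contract hr hA
      refine extend_signs D S huniq ?_ q₀
      have hf : ∀ (T : List (V × V)) (C : V → Prop), (∀ d ∈ T, C d.2) →
          ∀ d ∈ T.filter (fun d => decide (d.2 ≠ y)), C d.2 :=
        fun T C hT d hd => hT d (List.mem_filter.1 hd).1
      rcases hcase with ⟨hyA, hP, hQ⟩ | ⟨hyA, hP, hQ⟩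
      · refine ih _ _ _ (hcard y hy) hI' ?_ (hf _ (· ∈ A) hQ)
        intro d hd
        rcases List.mem_append.1 hd with hd | hd
        · exact hf _ (· ∉ A) hP d hd
        · exact (hA _ _ (hN d hd).2).1 hyA
      · rw [List.append_assoc] at hI'
        refine ih _ _ _ (hcard y hy) hI' (hf _ (· ∉ A) hP) ?_
        intro d hd
        rcases List.mem_append.1 hd with hd | hd
        · by_contra hc
          exact hyA ((hA _ _ (hN d hd).2).2 hc)
        · exact hf _ (· ∈ A) hQ d hd
    have nbr : ∀ u, u ∉ S → (∃ s ∈ S, G.Adj s u) → ∃ s, (s, u) ∈ L ++ R := by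
      rintro u hu ⟨s, hs, hsu⟩
      exact ⟨s, (hI.mem (s, u)).2 ⟨hs, hu, hsu⟩⟩
    rcases List.eq_nil_or_concat L with rfl | ⟨L₀, ⟨sb, b⟩, rfl⟩
    · rcases R with _ | ⟨⟨sa, a⟩, R₀⟩
      · obtain ⟨y, hy⟩ : (Sᶜ).Nonempty := by rw [← Finset.card_pos, hS]; omega
        have hy : y ∉ S := by simpa using hy
        have hI' := hI.start hr hy
        refine extend_signs D S (y := y) ?_ ?_ q₀
        · intro u _ hu _ _ _ hs _
          obtain ⟨s, hs⟩ := nbr u hu hs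
          simp at hs
        · by_cases hyA : y ∈ A
          · refine ih (insert y S) _ [] (hcard y hy) (by rw [List.append_nil]; exact hI') ?_ (by simp)
            intro d hd
            obtain ⟨w, hw, rfl⟩ := List.mem_map.1 hd
            exact (hA _ _ ((hr.mem _ _).1 hw)).1 hyA
          · refine ih (insert y S) [] _ (hcard y hy) (by rw [List.nil_append]; exact hI') (by simp) ?_
            intro d hd
            obtain ⟨w, hw, rfl⟩ := List.mem_map.1 hd
            by_contra hc
            exact hyA ((hA _ _ ((hr.mem _ _).1 hw)).2 hc)
      · have haA : a ∈ A := hR (sa, a) (by simp)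
        refine step [] R₀ sa a rfl (Or.inl ⟨haA, by simp, fun d hd => hR d (by simp [hd])⟩) ?_
        intro u _ hu _ hadj _ hs _
        obtain ⟨s, hs⟩ := nbr u hu hs
        exact absurd (hR _ hs) ((hA _ _ hadj).1 haA)
    · rw [List.concat_eq_append] at *
      have hbA : b ∉ A := hL (sb, b) (by simp)
      have hL₀ : ∀ d ∈ L₀, d.2 ∉ A := fun d hd => hL d (by simp [hd])
      rcases R with _ | ⟨⟨sa, a⟩, R₀⟩
      · refine step L₀ [] sb b (by simp) (Or.inr ⟨hbA, hL₀, by simp⟩) ?_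
        intro u _ hu _ hadj _ hs _
        obtain ⟨s, hs⟩ := nbr u hu hs
        rw [List.append_nil] at hs
        exact absurd ((hA _ _ hadj).2 (hL _ hs)) hbA
      · have haA : a ∈ A := hR (sa, a) (by simp)
        by_cases hok : ∃ u, u ∉ S ∧ u ≠ b ∧ G.Adj a u ∧ ∃ s ∈ S, G.Adj s u
        · obtain ⟨u, hu, hub, hau, su, hsu, hsu'⟩ := hok
          refine step L₀ ((sa, a) :: R₀) sb b (by simp) (Or.inr ⟨hbA, hL₀, hR⟩) ?_
          have uniq : ∀ w, w ∉ S → G.Adj b w → (∃ s ∈ S, G.Adj s w) → w = a := by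
            rintro w hw hbw ⟨sw, hsw, hsw'⟩
            by_contra hwa
            exact hI.no_double hr hA hL hR hu hw hsu hsw hsu' hsw' hau.symm hbw hub hwa
          intro w w' hw hw' h1 h2 h3 h4
          rw [uniq w hw h1 h3, uniq w' hw' h2 h4]
        · refine step (L₀ ++ [(sb, b)]) R₀ sa a rfl
            (Or.inl ⟨haA, hL, fun d hd => hR d (by simp [hd])⟩) ?_
          have uniq : ∀ w, w ∉ S → G.Adj a w → (∃ s ∈ S, G.Adj s w) → w = b := by
            intro w hw haw hs
            by_contra hwb
            exact hok ⟨w, hw, hwb, haw, hs⟩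
          intro w w' hw hw' h1 h2 h3 h4
          rw [uniq w hw h1 h3, uniq w' hw' h2 h4]

/-- In a bipartite graph with a planar rotation system, every prescription of signs on the edges
that is antisymmetric in the two orientations is realised by vertex signs and a linear order. -/
lemma exists_signs {G : SimpleGraph V} {rot : V → List V} (hr : IsRot G rot) {A : Finset V}
    (hA : ∀ u v, G.Adj u v → (u ∈ A ↔ v ∉ A))
    (hT : ∀ X Y, Cyc G rot ∅ X → Cyc G rot ∅ Y →
      ∑ v, cr (X v) (Y v) (rot v) + pairing A X Y = 0)
    (D : V → V → Bool) (hD : ∀ u v, G.Adj u v → D v u = !D u v) :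
    ∃ (s : V → Bool) (t : V → ℤ), Function.Injective t ∧
      ∀ u v, G.Adj u v → (D u v = true ↔ ((s u = s v) ↔ t u < t v)) := by
  have hI : DartInv G rot A ∅ ([] ++ []) := by
    refine ⟨by simp, by simp, fun X Y hX hY => ?_⟩
    have := hT X Y hX hY
    simpa [cr] using this
  obtain ⟨idx, p, q, -, hinj, h⟩ := exists_signs_aux hr hA D _ ∅ [] [] rfl hI (by simp) (by simp)
    (fun _ => true)
  have hinj' : ∀ u v, idx u = idx v → u = v := fun u v => hinj u v (by simp) (by simp)
  -- A vertex `v` is placed below or above all vertices with smaller `idx` according to whether its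
  -- two signs agree; for an earlier vertex `u` the condition then becomes `p u ≠ q v`.
  refine ⟨p, fun v => if p v = q v then -((idx v : ℤ) + 1) else (idx v : ℤ) + 1, ?_, ?_⟩
  · intro u v huv
    apply hinj'
    dsimp only at huv
    split_ifs at huv <;> omega
  · have key : ∀ u v, G.Adj u v → idx u < idx v → (D u v = true ↔ ((p u = p v) ↔
        (if p u = q u then -((idx u : ℤ) + 1) else (idx u : ℤ) + 1) <
        (if p v = q v then -((idx v : ℤ) + 1) else (idx v : ℤ) + 1))) := by
      intro u v huv hlt
      have h1 := h u v (by simp) (by simp) huv hlt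
      have e : ((if p u = q u then -((idx u : ℤ) + 1) else (idx u : ℤ) + 1) <
        (if p v = q v then -((idx v : ℤ) + 1) else (idx v : ℤ) + 1)) ↔ p v ≠ q v := by
        split_ifs with a b b <;> simp only [b, ne_eq, not_true, not_false_iff, iff_true, iff_false] <;> omega
      rw [e, ← h1]
      cases p u <;> cases p v <;> cases q v <;> simp
    intro u v huv
    have hne : idx u ≠ idx v := fun e => huv.ne (hinj' u v e)
    rcases lt_or_gt_of_ne hne with hlt | hlt
    · exact key u v huv hlt
    · have h1 := key v u huv.symm hlt
      rw [hD u v huv] at h1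
      have hne' : (if p u = q u then -((idx u : ℤ) + 1) else (idx u : ℤ) + 1) ≠
        (if p v = q v then -((idx v : ℤ) + 1) else (idx v : ℤ) + 1) := by
        split_ifs <;> omega
      dsimp only
      generalize (if p u = q u then -((idx u : ℤ) + 1) else (idx u : ℤ) + 1) = x at *
      generalize (if p v = q v then -((idx v : ℤ) + 1) else (idx v : ℤ) + 1) = z at *
      have e : z < x ↔ ¬ x < z := by omega
      rw [e] at h1
      have e2 : (p v = p u) ↔ (p u = p v) := eq_comm
      rw [e2] at h1
      cases hd : D u v <;> rw [hd] at h1 <;> simp only [Bool.not_false, Bool.not_true, Bool.false_eq_true, true_iff, false_iff] at h1 ⊢ <;> tauto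

end Rotation

/-! ### Turning numbers of plane curves -/

section Turning

open Set Complex

/-- `θ` is a continuous choice of angle for `h` on the interval `[a, b]`. -/
def IsAngleLift (h : ℝ → ℂ) (a b : ℝ) (θ : ℝ → ℝ) : Prop :=
  ContinuousOn θ (Icc a b) ∧ ∀ t ∈ Icc a b, (θ t : Real.Angle) = (arg (h t) : Real.Angle)

/-- `Turns h a b n`: along `[a, b]` the continuous angle of `h` changes by `2πn` more than its
principal argument. -/
def Turns (h : ℝ → ℂ) (a b : ℝ) (n : ℤ) : Prop :=
  ∃ θ, IsAngleLift h a b θ ∧ θ b - θ a = arg (h b) - arg (h a) + 2 * Real.pi * n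

open Classical in
/-- The turning number of `h` along `[a, b]`: the change of a continuous angle of `h` minus the
change of the principal argument, in full turns. It is an integer for arbitrary endpoints, at the
price of depending on the branch cut of `arg`. The value is `0` if there is no continuous angle. -/
noncomputable def turn (h : ℝ → ℂ) (a b : ℝ) : ℤ :=
  if H : ∃ n, Turns h a b n then H.choose else 0

/-- Lifting through the covering `exp`: a map from a simply connected space to the punctured plane
has a continuous angle. -/
lemma exists_angle_lift {X : Type*} [TopologicalSpace X] [SimplyConnectedSpace X]
    [LocallyPathConnectedSpace X] (h : X → ℂ) (hc : Continuous h) (h0 : ∀ x, h x ≠ 0) :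
    ∃ θ : X → ℝ, Continuous θ ∧ ∀ x, (θ x : Real.Angle) = (arg (h x) : Real.Angle) := by
  obtain ⟨x₀⟩ : Nonempty X := inferInstance
  rcases isCoveringMapOn_exp.existsUnique_continuousMap_lifts (a₀ := x₀)
    ⟨h, hc⟩ (exp_log (h0 x₀)) (fun x => h0 x) with ⟨f, ⟨-, hf⟩, -⟩
  refine ⟨fun x => (f x).im, by fun_prop, fun x => ?_⟩
  have h1 : exp (f x) = h x := congrFun hf x
  rw [← h1, arg_exp, Real.Angle.coe_toIocMod]

lemma exists_isAngleLift {h : ℝ → ℂ} {a b : ℝ} (hab : a ≤ b) (hc : ContinuousOn h (Icc a b))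
    (h0 : ∀ t ∈ Icc a b, h t ≠ 0) : ∃ θ, IsAngleLift h a b θ := by
  obtain ⟨θ, h1, h2⟩ := exists_angle_lift (fun t => h (projIcc a b hab t))
    ((continuousOn_iff_continuous_domRestrict.1 hc).comp continuous_projIcc)
    (fun t => h0 _ (projIcc a b hab t).2)
  refine ⟨θ, h1.continuousOn, fun t ht => ?_⟩
  rw [h2, projIcc_of_mem hab ht]

lemma IsAngleLift.turns {h : ℝ → ℂ} {a b : ℝ} (hab : a ≤ b) {θ : ℝ → ℝ}
    (hθ : IsAngleLift h a b θ) : ∃ n, Turns h a b n := by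
  obtain ⟨k, hk⟩ := Real.Angle.angle_eq_iff_two_pi_dvd_sub.1 (hθ.2 a (left_mem_Icc.2 hab))
  obtain ⟨l, hl⟩ := Real.Angle.angle_eq_iff_two_pi_dvd_sub.1 (hθ.2 b (right_mem_Icc.2 hab))
  refine ⟨l - k, θ, hθ, ?_⟩
  push_cast
  linear_combination hl - hk

lemma isAngleLift_diff {h : ℝ → ℂ} {a b : ℝ} (hab : a ≤ b) {θ θ' : ℝ → ℝ}
    (hθ : IsAngleLift h a b θ) (hθ' : IsAngleLift h a b θ') : θ b - θ a = θ' b - θ' a := by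
  have hint : ∀ t ∈ Icc a b, ∃ k : ℤ, θ t - θ' t = 2 * Real.pi * k := fun t ht =>
    Real.Angle.angle_eq_iff_two_pi_dvd_sub.1 ((hθ.2 t ht).trans (hθ'.2 t ht).symm)
  by_contra hne
  obtain ⟨k, hk⟩ := hint a (left_mem_Icc.2 hab)
  obtain ⟨l, hl⟩ := hint b (right_mem_Icc.2 hab)
  have hkl : k ≠ l := by
    rintro rfl
    apply hne
    linear_combination hl - hk
  have hpi := Real.pi_pos
  have hcont : ContinuousOn (fun t => θ t - θ' t) (uIcc a b) := by
    rw [uIcc_of_le hab]; exact hθ.1.sub hθ'.1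
  have hmem : 2 * Real.pi * ((min k l : ℤ) + 1 / 2 : ℝ) ∈ uIcc (θ a - θ' a) (θ b - θ' b) := by
    rw [hk, hl, mem_uIcc]
    rcases lt_or_gt_of_ne hkl with h | h
    · left
      have h1 : (k : ℝ) + 1 ≤ l := by exact_mod_cast h
      rw [min_eq_left h.le]
      constructor <;> apply mul_le_mul_of_nonneg_left <;> linarith
    · right
      have h1 : (l : ℝ) + 1 ≤ k := by exact_mod_cast h
      rw [min_eq_right h.le]
      constructor <;> apply mul_le_mul_of_nonneg_left <;> linarith
  obtain ⟨t, ht, hte⟩ := intermediate_value_uIcc hcont hmem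
  rw [uIcc_of_le hab] at ht
  obtain ⟨m, hm⟩ := hint t ht
  dsimp only at hte
  rw [hm] at hte
  have h2 : (m : ℝ) = (min k l : ℤ) + 1 / 2 := mul_left_cancel₀ (by positivity) hte
  generalize min k l = j at h2
  have h3 : ((2 * m : ℤ) : ℝ) = ((2 * j + 1 : ℤ) : ℝ) := by push_cast; linarith
  have h4 : 2 * m = 2 * j + 1 := by exact_mod_cast h3
  omega

/-- The turning number can be computed from any continuous angle. -/
lemma IsAngleLift.turn_eq {h : ℝ → ℂ} {a b : ℝ} (hab : a ≤ b) {θ : ℝ → ℝ}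
    (hθ : IsAngleLift h a b θ) :
    θ b - θ a = arg (h b) - arg (h a) + 2 * Real.pi * turn h a b := by
  have H : ∃ n, Turns h a b n := hθ.turns hab
  rw [turn, dif_pos H]
  obtain ⟨θ', h1, h2⟩ := H.choose_spec
  rw [isAngleLift_diff hab hθ h1, h2]

lemma turn_unique {x y : ℤ} (h : 2 * Real.pi * x = 2 * Real.pi * y) : x = y := by
  have := mul_left_cancel₀ (by positivity) h
  exact_mod_cast this

lemma turn_congr {h h' : ℝ → ℂ} {a b : ℝ} (hab : a ≤ b) (hc : ContinuousOn h (Icc a b))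
    (h0 : ∀ t ∈ Icc a b, h t ≠ 0) (e : ∀ t ∈ Icc a b, h' t = h t) :
    turn h' a b = turn h a b := by
  obtain ⟨θ, hθ⟩ := exists_isAngleLift hab hc h0
  have hθ' : IsAngleLift h' a b θ := ⟨hθ.1, fun t ht => by rw [e t ht]; exact hθ.2 t ht⟩
  apply turn_unique
  have h1 := hθ.turn_eq hab
  have h2 := hθ'.turn_eq hab
  rw [e a (left_mem_Icc.2 hab), e b (right_mem_Icc.2 hab)] at h2
  linear_combination h1 - h2

lemma turn_add {h : ℝ → ℂ} {a b c : ℝ} (hab : a ≤ b) (hbc : b ≤ c)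
    (hc : ContinuousOn h (Icc a c)) (h0 : ∀ t ∈ Icc a c, h t ≠ 0) :
    turn h a c = turn h a b + turn h b c := by
  obtain ⟨θ, hθ⟩ := exists_isAngleLift (hab.trans hbc) hc h0
  have h1 : IsAngleLift h a b θ := ⟨hθ.1.mono (Icc_subset_Icc_right hbc),
    fun t ht => hθ.2 t (Icc_subset_Icc_right hbc ht)⟩
  have h2 : IsAngleLift h b c θ := ⟨hθ.1.mono (Icc_subset_Icc_left hab),
    fun t ht => hθ.2 t (Icc_subset_Icc_left hab ht)⟩
  apply turn_unique
  push_cast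
  linear_combination h1.turn_eq hab + h2.turn_eq hbc - hθ.turn_eq (hab.trans hbc)

lemma turn_reverse {h : ℝ → ℂ} {b : ℝ} (hb : 0 ≤ b) (hc : ContinuousOn h (Icc 0 b))
    (h0 : ∀ t ∈ Icc 0 b, h t ≠ 0) : turn (fun t => h (b - t)) 0 b = - turn h 0 b := by
  obtain ⟨θ, hθ⟩ := exists_isAngleLift hb hc h0
  have hm : ∀ t ∈ Icc 0 b, b - t ∈ Icc 0 b := fun t ht => ⟨by linarith [ht.2], by linarith [ht.1]⟩
  have h1 : IsAngleLift (fun t => h (b - t)) 0 b (fun t => θ (b - t)) :=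
    ⟨hθ.1.comp (by fun_prop) hm, fun t ht => hθ.2 _ (hm t ht)⟩
  apply turn_unique
  have e1 := h1.turn_eq hb
  have e2 := hθ.turn_eq hb
  simp only [sub_self, sub_zero] at e1
  push_cast
  linear_combination -e1 - e2

/-- Homotopy invariance in the form of a closed rectangle. -/
lemma turn_rect {f : ℝ → ℝ → ℂ} {a b c d : ℝ} (hab : a ≤ b) (hcd : c ≤ d)
    (hf : Continuous (Function.uncurry f))
    (h0 : ∀ s ∈ Icc a b, ∀ t ∈ Icc c d, f s t ≠ 0) :
    turn (fun s => f s c) a b + turn (fun t => f b t) c d =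
      turn (fun s => f s d) a b + turn (fun t => f a t) c d := by
  obtain ⟨θ, h1, h2⟩ := exists_angle_lift
    (fun z : ℝ × ℝ => f (projIcc a b hab z.1) (projIcc c d hcd z.2))
    (hf.comp (by fun_prop : Continuous fun z : ℝ × ℝ =>
      ((projIcc a b hab z.1 : ℝ), (projIcc c d hcd z.2 : ℝ))))
    (fun z => h0 _ (projIcc a b hab z.1).2 _ (projIcc c d hcd z.2).2)
  have h3 : ∀ s ∈ Icc a b, ∀ t ∈ Icc c d,
      (θ (s, t) : Real.Angle) = (arg (f s t) : Real.Angle) := by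
    intro s hs t ht
    rw [h2]
    simp only [projIcc_of_mem hab hs, projIcc_of_mem hcd ht]
  have ma := left_mem_Icc.2 hab
  have mb := right_mem_Icc.2 hab
  have mc := left_mem_Icc.2 hcd
  have md := right_mem_Icc.2 hcd
  have c1 : IsAngleLift (fun s => f s c) a b (fun s => θ (s, c)) :=
    ⟨by fun_prop, fun s hs => h3 s hs c mc⟩
  have c2 : IsAngleLift (fun s => f s d) a b (fun s => θ (s, d)) :=
    ⟨by fun_prop, fun s hs => h3 s hs d md⟩
  have c3 : IsAngleLift (fun t => f a t) c d (fun t => θ (a, t)) :=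
    ⟨by fun_prop, fun t ht => h3 a ma t ht⟩
  have c4 : IsAngleLift (fun t => f b t) c d (fun t => θ (b, t)) :=
    ⟨by fun_prop, fun t ht => h3 b mb t ht⟩
  apply turn_unique
  push_cast
  linear_combination c2.turn_eq hab + c3.turn_eq hcd - c1.turn_eq hab - c4.turn_eq hcd

open Classical in
/-- The indicator of `0 < arg z`; it measures how the principal argument of `-z` differs from
that of `z`. -/
noncomputable def upper (z : ℂ) : ℤ := if 0 < arg z then 1 else 0

lemma arg_neg_eq {z : ℂ} (hz : z ≠ 0) :
    arg (-z) = arg z + Real.pi - 2 * Real.pi * upper z := by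
  rw [upper]
  split_ifs with h
  · have : arg (-z) = arg z - Real.pi := by
      rw [arg_neg_eq_arg_sub_pi_iff]
      rcases lt_trichotomy 0 z.im with h1 | h1 | h1
      · exact Or.inl h1
      · right
        refine ⟨h1.symm, ?_⟩
        by_contra hc
        have := arg_eq_zero_iff.2 ⟨not_lt.1 hc, h1.symm⟩
        linarith
      · have := arg_neg_iff.2 h1
        linarith
    rw [this]; push_cast; ring
  · have : arg (-z) = arg z + Real.pi := by
      rw [arg_neg_eq_arg_add_pi_iff]
      rcases lt_trichotomy 0 z.im with h1 | h1 | h1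
      · exfalso
        apply h
        have h2 := arg_nonneg_iff.2 h1.le
        refine lt_of_le_of_ne h2 fun e => ?_
        have := (arg_eq_zero_iff.1 e.symm).2
        linarith
      · right
        refine ⟨h1.symm, ?_⟩
        by_contra hc
        rcases eq_or_lt_of_le (not_lt.1 hc) with h2 | h2
        · exact hz (Complex.ext h2 h1.symm)
        · have := arg_eq_pi_iff.2 ⟨h2, h1.symm⟩
          rw [this] at h
          exact h Real.pi_pos
      · exact Or.inl h1
    rw [this]; push_cast; ring

lemma upper_neg {z : ℂ} (hz : z ≠ 0) : upper z + upper (-z) = 1 := by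
  have h1 := arg_neg_eq hz
  have h2 := arg_neg_eq (neg_ne_zero.2 hz)
  rw [neg_neg] at h2
  apply turn_unique
  push_cast
  linear_combination h1 + h2

lemma turn_neg {h : ℝ → ℂ} {a b : ℝ} (hab : a ≤ b) (hc : ContinuousOn h (Icc a b))
    (h0 : ∀ t ∈ Icc a b, h t ≠ 0) :
    turn (fun t => - h t) a b = turn h a b + upper (h b) - upper (h a) := by
  obtain ⟨θ, hθ⟩ := exists_isAngleLift hab hc h0
  have h1 : IsAngleLift (fun t => - h t) a b (fun t => θ t + Real.pi) := by
    refine ⟨hθ.1.add continuousOn_const, fun t ht => ?_⟩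
    rw [arg_neg_coe_angle (h0 t ht), Real.Angle.coe_add, hθ.2 t ht]
  have ea := arg_neg_eq (h0 a (left_mem_Icc.2 hab))
  have eb := arg_neg_eq (h0 b (right_mem_Icc.2 hab))
  have e1 := h1.turn_eq hab
  have e2 := hθ.turn_eq hab
  rw [ea, eb] at e1
  apply turn_unique
  push_cast
  linear_combination e2 - e1

/-- A continuous angle for a path in an open half-plane with inner normal `m`. -/
lemma isAngleLift_halfplane {h : ℝ → ℂ} {a b : ℝ} (hc : ContinuousOn h (Icc a b)) {m : ℂ}
    (hm : m ≠ 0) (h0 : ∀ t ∈ Icc a b, 0 < (h t / m).re) :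
    IsAngleLift h a b (fun t => arg m + arg (h t / m)) := by
  refine ⟨continuousOn_const.add ?_, fun t ht => ?_⟩
  · intro t ht
    exact ContinuousAt.comp_continuousWithinAt (f := fun t => h t / m) (g := arg)
      (continuousAt_arg (Or.inl (h0 t ht))) ((hc t ht).div_const m)
  · have hne : h t ≠ 0 := by
      intro e
      have := h0 t ht
      simp [e] at this
    rw [Real.Angle.coe_add, arg_div_coe_angle hne hm]
    abel

open Classical in
/-- The turning around the corner where two segments of equal length and different directions
`d`, `d'` start. It decides which of the two directions has the smaller argument. -/
lemma turn_corner {d d' : ℂ} (hn : ‖d‖ = ‖d'‖) (hd : d ≠ d') :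
    turn (fun t : ℝ => d - t * d') 0 1 - turn (fun s : ℝ => s * d - d') 0 1 =
      upper d' - if arg d < arg d' then 1 else 0 := by
  have hm : d - d' ≠ 0 := sub_ne_zero.2 hd
  have hd0' : d' ≠ 0 := by
    rintro rfl
    rw [norm_zero, norm_eq_zero] at hn
    exact hd hn
  have hpos : 0 < normSq (d - d') := normSq_pos.2 hm
  have hns : d.re * d.re + d.im * d.im = d'.re * d'.re + d'.im * d'.im := by
    have h1 : normSq d = normSq d' := by rw [normSq_eq_norm_sq, normSq_eq_norm_sq, hn]
    simpa [normSq_apply] using h1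
  have hsq : normSq (d - d') = 2 * (d.re * (d - d').re + d.im * (d - d').im) := by
    rw [normSq_apply]; simp only [sub_re, sub_im]; linarith
  have key : ∀ z : ℂ, 0 < z.re * (d - d').re + z.im * (d - d').im → 0 < (z / (d - d')).re := by
    intro z hz
    rw [div_re, ← add_div]
    exact div_pos hz hpos
  have hsub : ∀ x y : ℝ, 0 ≤ x → 0 ≤ y → 0 < x + y →
      0 < ((x * d - y * d') / (d - d')).re := by
    intro x y hx hy hxy
    apply key
    have e : (x * d - y * d' : ℂ).re * (d - d').re + (x * d - y * d' : ℂ).im * (d - d').im =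
        (x + y) * (normSq (d - d') / 2) := by
      rw [normSq_apply]
      simp only [sub_re, sub_im, mul_re, mul_im, ofReal_re, ofReal_im]
      linear_combination ((x - y) / 2) * hns
    rw [e]; positivity
  have hc1 : ContinuousOn (fun t : ℝ => d - t * d') (Icc 0 1) := by fun_prop
  have hc2 : ContinuousOn (fun s : ℝ => s * d - d') (Icc 0 1) := by fun_prop
  have L1 := isAngleLift_halfplane hc1 hm (fun t ht => by
    have := hsub 1 t (by norm_num) ht.1 (by linarith [ht.1])
    simpa using this)
  have L2 := isAngleLift_halfplane hc2 hm (fun t ht => by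
    have := hsub t 1 ht.1 (by norm_num) (by linarith [ht.1])
    simpa using this)
  have e1 := L1.turn_eq zero_le_one
  have e2 := L2.turn_eq zero_le_one
  simp only [ofReal_one, ofReal_zero, zero_mul, one_mul, sub_zero, zero_sub] at e1 e2
  rw [arg_neg_eq hd0'] at e2
  have b1 : |arg (d / (d - d'))| < Real.pi / 2 := abs_arg_lt_pi_div_two_iff.2 (Or.inl (by
    have := hsub 1 0 (by norm_num) (by norm_num) (by norm_num)
    simpa using this))
  have b2 : |arg (-d' / (d - d'))| < Real.pi / 2 := abs_arg_lt_pi_div_two_iff.2 (Or.inl (by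
    have := hsub 0 1 (by norm_num) (by norm_num) (by norm_num)
    simpa using this))
  rw [abs_lt] at b1 b2
  have r1 := neg_pi_lt_arg d
  have r2 := arg_le_pi d
  have r3 := neg_pi_lt_arg d'
  have r4 := arg_le_pi d'
  have hpi := Real.pi_pos
  set n₁ := turn (fun t : ℝ => d - t * d') 0 1
  set n₂ := turn (fun s : ℝ => s * d - d') 0 1
  set k := upper d'
  have tot : 2 * Real.pi * ((n₁ - n₂ - k : ℤ) : ℝ) =
      (arg (-d' / (d - d')) - arg (d / (d - d'))) + (arg d - arg d' - Real.pi) := by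
    push_cast
    linear_combination e2 - e1
  have hne : arg d ≠ arg d' := fun e => hd (ext_norm_arg hn e)
  suffices hs : n₁ - n₂ - k = - (if arg d < arg d' then 1 else 0 : ℤ) by linarith
  generalize n₁ - n₂ - k = N at tot ⊢
  have lo : ∀ c : ℤ, 2 * Real.pi * (c : ℝ) < 2 * Real.pi * N → c < N := by
    intro c h
    have := lt_of_mul_lt_mul_left h (by positivity)
    exact_mod_cast this
  have hi : ∀ c : ℤ, 2 * Real.pi * (N : ℝ) < 2 * Real.pi * c → N < c := by
    intro c h
    have := lt_of_mul_lt_mul_left h (by positivity)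
    exact_mod_cast this
  split_ifs with hlt
  · have h1 := lo (-2) (by push_cast; linarith)
    have h2 := hi 0 (by push_cast; linarith)
    omega
  · have hlt' : arg d' < arg d := lt_of_le_of_ne (not_lt.1 hlt) hne.symm
    have h1 := lo (-1) (by push_cast; linarith)
    have h2 := hi 1 (by push_cast; linarith)
    omega

end Turning

/-! ### Summation over the pairs of edges of two cycles -/

section Summation

variable {V : Type*} [DecidableEq V]

/-- The values of `X` on darts leaving `A`; the others are set to `0`. -/
def outPart (A : Finset V) (X : V → V → ZMod 2) (a b : V) : ZMod 2 := if a ∈ A then X a b else 0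

lemma outPart_add {G : SimpleGraph V} {A : Finset V} (hA : ∀ u v, G.Adj u v → (u ∈ A ↔ v ∉ A))
    {X : V → V → ZMod 2} (hs : ∀ u v, X u v = X v u) (hX : ∀ u v, ¬ G.Adj u v → X u v = 0)
    (v w : V) : X v w = outPart A X v w + outPart A X w v := by
  unfold outPart
  rw [hs w v]
  by_cases h : G.Adj v w
  · have := hA _ _ h
    by_cases h1 : v ∈ A <;> by_cases h2 : w ∈ A <;> simp_all
  · simp [hX v w h]

variable [Fintype V]

lemma outPart_row (A : Finset V) {X : V → V → ZMod 2} (h0 : ∀ v, ∑ w, X v w = 0) (a : V) :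
    ∑ b, outPart A X a b = 0 := by
  unfold outPart
  split_ifs
  · exact h0 a
  · simp

lemma outPart_col {G : SimpleGraph V} {A : Finset V} (hA : ∀ u v, G.Adj u v → (u ∈ A ↔ v ∉ A))
    {X : V → V → ZMod 2} (hs : ∀ u v, X u v = X v u) (hX : ∀ u v, ¬ G.Adj u v → X u v = 0)
    (h0 : ∀ v, ∑ w, X v w = 0) (b : V) : ∑ a, outPart A X a b = 0 := by
  have h1 := h0 b
  simp only [outPart_add hA hs hX b, Finset.sum_add_distrib, outPart_row A h0 b, zero_add] at h1
  exact h1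

/-- Summation of crossing-type relations over all pairs of edges of two mod 2 cycles. The weights
`m u x v` and `m' u x v` of an edge `ux` seen from a vertex `v` cancel, because a cycle meets every
vertex evenly, and so do the weights `α`; only the comparison `κ` of edges at a common vertex and
the common edges of the two cycles remain. -/
lemma cross_sum {G : SimpleGraph V} {A : Finset V} (hA : ∀ u v, G.Adj u v → (u ∈ A ↔ v ∉ A))
    (m m' : V → V → V → ZMod 2) (α β : V → V → ZMod 2) (κ : V → V → V → ZMod 2)
    (hm : ∀ u x v, G.Adj u x → m u x v = m x u v) (hm' : ∀ u x v, G.Adj u x → m' u x v = m' x u v)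
    (hβ : ∀ u v, G.Adj u v → β u v + β v u = 1) (hκ : ∀ v w, κ v w w = 0)
    (hdisj : ∀ u x v y, G.Adj u x → G.Adj v y → u ≠ v → u ≠ y → x ≠ v → x ≠ y →
      m u x v + m u x y + m' v y u + m' v y x = 0)
    (hadj : ∀ u x v, G.Adj u x → G.Adj u v → x ≠ v →
      m u x v + m' u v x = α u v + α u x + β u v + κ u x v)
    {X Y : V → V → ZMod 2} (hXs : ∀ u v, X u v = X v u) (hX : ∀ u v, ¬ G.Adj u v → X u v = 0)
    (hX0 : ∀ v, ∑ w, X v w = 0) (hYs : ∀ u v, Y u v = Y v u)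
    (hY : ∀ u v, ¬ G.Adj u v → Y u v = 0) (hY0 : ∀ v, ∑ w, Y v w = 0) :
    ∑ v, ∑ w, ∑ w', X v w * Y v w' * κ v w w' + pairing A X Y = 0 := by
  let x := outPart A X
  let y := outPart A Y
  have hxadj : ∀ a b, x a b ≠ 0 → a ∈ A ∧ b ∉ A ∧ G.Adj a b := by
    intro a b h
    simp only [x, outPart, ne_eq, ite_eq_right_iff, not_forall] at h
    obtain ⟨h1, h2⟩ := h
    have h3 : G.Adj a b := by by_contra h3; exact h2 (hX _ _ h3)
    exact ⟨h1, (hA _ _ h3).1 h1, h3⟩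
  have hyadj : ∀ a b, y a b ≠ 0 → a ∈ A ∧ b ∉ A ∧ G.Adj a b := by
    intro a b h
    simp only [y, outPart, ne_eq, ite_eq_right_iff, not_forall] at h
    obtain ⟨h1, h2⟩ := h
    have h3 : G.Adj a b := by by_contra h3; exact h2 (hY _ _ h3)
    exact ⟨h1, (hA _ _ h3).1 h1, h3⟩
  let J : V → V → V → ZMod 2 := fun v w w' => α v w + α v w' + κ v w w' + if w = w' then 0 else β v w'
  have hJ : ∀ v w, J v w w = 0 := by
    intro v w
    simp only [J, hκ, if_true]
    linear_combination α v w * zmod2_two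
  have key : ∀ a b a' b', x a b * y a' b' * ((if a' = a then 0 else m a b a') +
      (if b' = b then 0 else m a b b') + (if a' = a then 0 else m' a' b' a) +
      (if b' = b then 0 else m' a' b' b)) =
      x a b * y a' b' * ((if a' = a then J a b b' else 0) + (if b' = b then J b a a' else 0)) := by
    intro a b a' b'
    by_cases h1 : x a b = 0
    · simp [h1]
    by_cases h2 : y a' b' = 0
    · simp [h2]
    obtain ⟨ha, hb, hab⟩ := hxadj _ _ h1
    obtain ⟨ha', hb', hab'⟩ := hyadj _ _ h2
    congr 1
    by_cases e1 : a' = a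
    · subst e1
      by_cases e2 : b' = b
      · subst e2
        simp [hJ]
      · have h3 := hadj a' b b' hab hab' (Ne.symm e2)
        simp only [if_true, e2, if_false, J, Ne.symm e2]
        linear_combination h3
    · by_cases e2 : b' = b
      · subst e2
        have h3 := hadj b' a a' hab.symm hab'.symm (Ne.symm e1)
        rw [hm _ _ _ hab.symm, hm' _ _ _ hab'.symm] at h3
        simp only [if_true, e1, if_false, J, Ne.symm e1]
        linear_combination h3
      · have h3 := hdisj a b a' b' hab hab' (Ne.symm e1) (fun e => hb' (e ▸ ha))
          (fun e => hb (e ▸ ha')) (Ne.symm e2)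
        simp only [e1, e2, if_false]
        linear_combination h3
  have hx1 : ∀ a, ∑ b, x a b = 0 := outPart_row A hX0
  have hx2 : ∀ b, ∑ a, x a b = 0 := outPart_col hA hXs hX hX0
  have hy1 : ∀ a, ∑ b, y a b = 0 := outPart_row A hY0
  have hy2 : ∀ b, ∑ a, y a b = 0 := outPart_col hA hYs hY hY0
  have hL : ∑ a, ∑ b, ∑ a', ∑ b', x a b * y a' b' * ((if a' = a then 0 else m a b a') +
      (if b' = b then 0 else m a b b') + (if a' = a then 0 else m' a' b' a) +
      (if b' = b then 0 else m' a' b' b)) = 0 := by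
    simp only [mul_add, Finset.sum_add_distrib]
    have t1 : ∀ F : V → V → V → ZMod 2, ∑ a, ∑ b, ∑ a', ∑ b', x a b * y a' b' * F a b a' = 0 := by
      intro F
      refine Finset.sum_eq_zero fun a _ => Finset.sum_eq_zero fun b _ =>
        Finset.sum_eq_zero fun a' _ => ?_
      rw [← Finset.sum_mul, ← Finset.mul_sum, hy1]; simp
    have t2 : ∀ F : V → V → V → ZMod 2, ∑ a, ∑ b, ∑ a', ∑ b', x a b * y a' b' * F a b b' = 0 := by
      intro F
      refine Finset.sum_eq_zero fun a _ => Finset.sum_eq_zero fun b _ => ?_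
      rw [Finset.sum_comm]
      refine Finset.sum_eq_zero fun b' _ => ?_
      rw [← Finset.sum_mul, ← Finset.mul_sum, hy2]; simp
    have t3 : ∀ F : V → V → V → ZMod 2, ∑ a, ∑ b, ∑ a', ∑ b', x a b * y a' b' * F a' b' a = 0 := by
      intro F
      refine Finset.sum_eq_zero fun a _ => ?_
      rw [Finset.sum_comm]
      refine Finset.sum_eq_zero fun a' _ => ?_
      rw [Finset.sum_comm]
      refine Finset.sum_eq_zero fun b' _ => ?_
      rw [← Finset.sum_mul, ← Finset.sum_mul, hx1]; simp
    have t4 : ∀ F : V → V → V → ZMod 2, ∑ a, ∑ b, ∑ a', ∑ b', x a b * y a' b' * F a' b' b = 0 := by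
      intro F
      rw [Finset.sum_comm]
      refine Finset.sum_eq_zero fun b _ => ?_
      rw [Finset.sum_comm]
      refine Finset.sum_eq_zero fun a' _ => ?_
      rw [Finset.sum_comm]
      refine Finset.sum_eq_zero fun b' _ => ?_
      rw [← Finset.sum_mul, ← Finset.sum_mul, hx2]; simp
    rw [t1 (fun a b a' => if a' = a then 0 else m a b a'),
      t2 (fun a b b' => if b' = b then 0 else m a b b'),
      t3 (fun a' b' a => if a' = a then 0 else m' a' b' a),
      t4 (fun a' b' b => if b' = b then 0 else m' a' b' b)]
    simp
  simp only [key] at hL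
  have hR : ∑ a, ∑ b, ∑ a', ∑ b', x a b * y a' b' *
      ((if a' = a then J a b b' else 0) + (if b' = b then J b a a' else 0)) =
      ∑ v, ∑ w, ∑ w', X v w * Y v w' * J v w w' := by
    have e : ∀ v w w', X v w * Y v w' * J v w w' =
        x v w * y v w' * J v w w' + x w v * y w' v * J v w w' := by
      intro v w w'
      rw [outPart_add hA hXs hX v w, outPart_add hA hYs hY v w']
      change (x v w + x w v) * (y v w' + y w' v) * _ = _
      have z1 : x v w * y w' v = 0 := by
        by_contra h
        exact (hyadj _ _ (right_ne_zero_of_mul h)).2.1 (hxadj _ _ (left_ne_zero_of_mul h)).1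
      have z2 : x w v * y v w' = 0 := by
        by_contra h
        exact (hxadj _ _ (left_ne_zero_of_mul h)).2.1 (hyadj _ _ (right_ne_zero_of_mul h)).1
      linear_combination (z1 + z2) * J v w w'
    simp only [e, mul_add, Finset.sum_add_distrib, mul_ite, mul_zero]
    congr 1
    · refine Finset.sum_congr rfl fun a _ => Finset.sum_congr rfl fun b _ => ?_
      rw [Finset.sum_comm]
      simp
    · rw [Finset.sum_comm]
      refine Finset.sum_congr rfl fun b _ => Finset.sum_congr rfl fun a _ => ?_
      simp
  rw [hR] at hL
  have hJs : ∀ v, ∑ w, ∑ w', X v w * Y v w' * J v w w' =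
      ∑ w, ∑ w', X v w * Y v w' * κ v w w' + ∑ w, X v w * Y v w * β v w := by
    intro v
    have e : ∀ w w', X v w * Y v w' * J v w w' = X v w * α v w * Y v w' + X v w * (Y v w' * α v w')
        + X v w * Y v w' * κ v w w' + X v w * (Y v w' * β v w')
        + (if w = w' then X v w * Y v w' * β v w' else 0) := by
      intro w w'
      simp only [J]
      split_ifs
      · linear_combination - X v w * Y v w' * β v w' * zmod2_two
      · ring
    simp only [e, Finset.sum_add_distrib, ← Finset.mul_sum, hY0, mul_zero, ← Finset.sum_mul, hX0,
      zero_mul]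
    simp
  simp only [hJs, Finset.sum_add_distrib] at hL
  have hP : ∑ v, ∑ w, X v w * Y v w * β v w = pairing A X Y := by
    have e : ∀ v w, X v w * Y v w * β v w =
        x v w * y v w * β v w + x w v * y w v * β v w := by
      intro v w
      rw [outPart_add hA hXs hX v w, outPart_add hA hYs hY v w]
      change (x v w + x w v) * (y v w + y w v) * _ = _
      have z1 : x v w * y w v = 0 := by
        by_contra h
        exact (hyadj _ _ (right_ne_zero_of_mul h)).2.1 (hxadj _ _ (left_ne_zero_of_mul h)).1
      have z2 : x w v * y v w = 0 := by
        by_contra h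
        exact (hxadj _ _ (left_ne_zero_of_mul h)).2.1 (hyadj _ _ (right_ne_zero_of_mul h)).1
      linear_combination (z1 + z2) * β v w
    simp only [e, Finset.sum_add_distrib]
    rw [Finset.sum_comm (f := fun v w => x w v * y w v * β v w), ← Finset.sum_add_distrib, pairing,
      ← Finset.sum_subset (Finset.subset_univ A)]
    · refine Finset.sum_congr rfl fun a ha => ?_
      rw [← Finset.sum_add_distrib]
      refine Finset.sum_congr rfl fun b _ => ?_
      simp only [x, y, outPart, ha, if_true]
      by_cases h : G.Adj a b
      · linear_combination X a b * Y a b * hβ a b h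
      · simp [hX _ _ h]
    · intro a _ ha
      simp [x, y, outPart, ha]
  rw [← hP]
  exact hL

end Summation

/-! ### The crossing identity for drawings -/

section Drawings

open Set Complex

/-- A drawing in general position near the vertices: the arc `C u v` of the edge `uv`, run through
by `t ∈ [0, 3]` from the point `P u` to the point `P v`, starts with a straight segment
`P u + t • d u v`, `t ∈ [0, 1]`, of length `ρ`, and different edges meet in common ends only. -/
structure Drawing {V : Type*} (G : SimpleGraph V) (P : V → ℂ) (C : V → V → ℝ → ℂ) (d : V → V → ℂ)
    (ρ : ℝ) : Prop where
  inj : Function.Injective P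
  cont : ∀ u v, G.Adj u v → Continuous (C u v)
  rev : ∀ u v t, G.Adj u v → C v u t = C u v (3 - t)
  start : ∀ u v t, G.Adj u v → t ∈ Icc (0 : ℝ) 1 → C u v t = P u + t * d u v
  norm : ∀ u v, G.Adj u v → ‖d u v‖ = ρ
  dir : ∀ u v w, G.Adj u v → G.Adj u w → v ≠ w → d u v ≠ d u w
  avoid : ∀ u v w t, G.Adj u v → w ≠ u → w ≠ v → t ∈ Icc (0 : ℝ) 3 → C u v t ≠ P w
  simple : ∀ u v t, G.Adj u v → t ∈ Ioc (0 : ℝ) 3 → C u v t ≠ P u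
  meet : ∀ u v w s t, G.Adj u v → G.Adj u w → v ≠ w → s ∈ Icc (0 : ℝ) 3 → t ∈ Icc (0 : ℝ) 3 →
    C u v s = C u w t → s = 0 ∧ t = 0
  disj : ∀ u x v y s t, G.Adj u x → G.Adj v y → u ≠ v → u ≠ y → x ≠ v → x ≠ y →
    s ∈ Icc (0 : ℝ) 3 → t ∈ Icc (0 : ℝ) 3 → C u x s ≠ C v y t

namespace Drawing

variable {V : Type*} {G : SimpleGraph V} {P : V → ℂ} {C : V → V → ℝ → ℂ} {d : V → V → ℂ} {ρ : ℝ}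

lemma at_zero (h : Drawing G P C d ρ) {u v : V} (e : G.Adj u v) : C u v 0 = P u := by
  rw [h.start u v 0 e (by simp)]; simp

lemma at_three (h : Drawing G P C d ρ) {u v : V} (e : G.Adj u v) : C u v 3 = P v := by
  have := h.rev u v 0 e
  rw [h.at_zero e.symm, sub_zero] at this
  exact this.symm

/-- The turning of the edge `ux` as seen from the vertex `v`. -/
noncomputable def edgeTurn (P : V → ℂ) (C : V → V → ℝ → ℂ) (u x v : V) : ℤ :=
  turn (fun s => C u x s - P v) 0 3

/-- The turning of the vertex `v` as seen from a point moving along the edge `ux`. -/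
noncomputable def edgeTurn' (P : V → ℂ) (C : V → V → ℝ → ℂ) (u x v : V) : ℤ :=
  turn (fun s => P v - C u x s) 0 3

/-- The turning of the edge `ux` as seen from its own end `u`, the initial straight segment
excluded. -/
noncomputable def selfTurn (P : V → ℂ) (C : V → V → ℝ → ℂ) (u x : V) : ℤ :=
  turn (fun s => C u x s - P u) 1 3

lemma edgeTurn_symm (h : Drawing G P C d ρ) {u x v : V} (e : G.Adj u x) (hu : v ≠ u) (hx : v ≠ x) :
    edgeTurn P C x u v = - edgeTurn P C u x v := by
  have hc := h.cont u x e
  unfold edgeTurn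
  rw [← turn_reverse (by norm_num) (by fun_prop)
    (fun t ht => sub_ne_zero.2 (h.avoid u x v t e hu hx ht))]
  congr 1
  funext t
  rw [h.rev u x t e]

lemma edgeTurn'_symm (h : Drawing G P C d ρ) {u x v : V} (e : G.Adj u x) (hu : v ≠ u)
    (hx : v ≠ x) : edgeTurn' P C x u v = - edgeTurn' P C u x v := by
  have hc := h.cont u x e
  unfold edgeTurn'
  rw [← turn_reverse (by norm_num) (by fun_prop)
    (fun t ht => sub_ne_zero.2 (h.avoid u x v t e hu hx ht).symm)]
  congr 1
  funext t
  rw [h.rev u x t e]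

/-- Disjoint edges: the difference of their points turns by nothing around the boundary of the
parameter square. -/
lemma turn_disjoint (h : Drawing G P C d ρ) {u x v y : V} (e : G.Adj u x) (e' : G.Adj v y)
    (h1 : u ≠ v) (h2 : u ≠ y) (h3 : x ≠ v) (h4 : x ≠ y) :
    edgeTurn P C u x v + edgeTurn' P C v y x = edgeTurn P C u x y + edgeTurn' P C v y u := by
  have hc := h.cont u x e
  have hc' := h.cont v y e'
  have key := turn_rect (f := fun s t => C u x s - C v y t) (a := 0) (b := 3) (c := 0) (d := 3)
    (by norm_num) (by norm_num) (by fun_prop)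
    (fun s hs t ht => sub_ne_zero.2 (h.disj u x v y s t e e' h1 h2 h3 h4 hs ht))
  simp only [h.at_zero e, h.at_zero e', h.at_three e, h.at_three e'] at key
  exact key

open Classical in
/-- Edges with a common end: the parameter square is cut off at the corner where they meet, and
the turning along the cut is known from the two initial segments. -/
lemma turn_adjacent (h : Drawing G P C d ρ) {u x v : V} (e : G.Adj u x) (e' : G.Adj u v)
    (hne : x ≠ v) :
    edgeTurn P C u x v + (selfTurn P C u v + upper (P v - P u)) =
      edgeTurn' P C u v x + selfTurn P C u x + if arg (d u x) < arg (d u v) then 1 else 0 := by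
  have hc := h.cont u x e
  have hc' := h.cont u v e'
  have hf : Continuous (Function.uncurry fun s t => C u x s - C u v t) := by fun_prop
  have hz : ∀ s ∈ Icc (0 : ℝ) 3, ∀ t ∈ Icc (0 : ℝ) 3, (0 < s ∨ 0 < t) → C u x s - C u v t ≠ 0 := by
    intro s hs t ht hpos h0
    obtain ⟨rfl, rfl⟩ := h.meet u x v s t e e' hne hs ht (sub_eq_zero.1 h0)
    rcases hpos with h | h <;> exact lt_irrefl _ h
  have r1 := turn_rect (f := fun s t => C u x s - C u v t) (a := 1) (b := 3) (c := 0) (d := 3)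
    (by norm_num) (by norm_num) hf (fun s hs t ht => hz s ⟨by linarith [hs.1], hs.2⟩ t ht
      (Or.inl (by linarith [hs.1])))
  have r2 := turn_rect (f := fun s t => C u x s - C u v t) (a := 0) (b := 1) (c := 1) (d := 3)
    (by norm_num) (by norm_num) hf (fun s hs t ht => hz s ⟨hs.1, by linarith [hs.2]⟩ t
      ⟨by linarith [ht.1], ht.2⟩ (Or.inr (by linarith [ht.1])))
  have a1 : turn (fun t => C u x 1 - C u v t) 0 3 = turn (fun t => C u x 1 - C u v t) 0 1 +
      turn (fun t => C u x 1 - C u v t) 1 3 :=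
    turn_add (by norm_num) (by norm_num) (by fun_prop)
      (fun t ht => hz 1 (by norm_num) t ht (Or.inl (by norm_num)))
  have a2 : turn (fun s => C u x s - C u v 3) 0 3 = turn (fun s => C u x s - C u v 3) 0 1 +
      turn (fun s => C u x s - C u v 3) 1 3 :=
    turn_add (by norm_num) (by norm_num) (by fun_prop)
      (fun s hs => hz s hs 3 (by norm_num) (Or.inr (by norm_num)))
  have hcorner := turn_corner (d := d u x) (d' := d u v) (by rw [h.norm u x e, h.norm u v e'])
    (h.dir u x v e e' hne)
  have st1 : C u x 1 = P u + d u x := by rw [h.start u x 1 e (by simp)]; simp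
  have st2 : C u v 1 = P u + d u v := by rw [h.start u v 1 e' (by simp)]; simp
  have c1 : turn (fun t : ℝ => d u x - t * d u v) 0 1 =
      turn (fun t => C u x 1 - C u v t) 0 1 := by
    refine turn_congr (by norm_num) (by fun_prop) (fun t ht => hz 1 (by norm_num) t
      ⟨ht.1, by linarith [ht.2]⟩ (Or.inl (by norm_num))) fun t ht => ?_
    rw [st1, h.start u v t e' ht]; ring
  have c2 : turn (fun s : ℝ => s * d u x - d u v) 0 1 =
      turn (fun s => C u x s - C u v 1) 0 1 := by
    refine turn_congr (by norm_num) (by fun_prop) (fun t ht => hz t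
      ⟨ht.1, by linarith [ht.2]⟩ 1 (by norm_num) (Or.inr (by norm_num))) fun t ht => ?_
    rw [st2, h.start u x t e ht]; ring
  have n1 := turn_neg (h := fun t => C u v t - P u) (a := 1) (b := 3) (by norm_num) (by fun_prop)
    (fun t ht => sub_ne_zero.2 (h.simple u v t e' ⟨by linarith [ht.1], ht.2⟩))
  simp only [neg_sub] at n1
  rw [st2, h.at_three e', add_sub_cancel_left] at n1
  rw [c1, c2] at hcorner
  simp only [h.at_zero e, h.at_zero e', h.at_three e, h.at_three e'] at r1 r2 a2
  unfold edgeTurn edgeTurn' selfTurn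
  linarith

end Drawing

lemma cr_eq_of_pairwise {α : Type*} (φ : α → ℝ) (x y : α → ZMod 2) (l : List α)
    (h : l.Pairwise (fun a b => φ a < φ b)) :
    cr x y l = (l.map fun a => (l.map fun b =>
      x a * y b * if φ a < φ b then (1 : ZMod 2) else 0).sum).sum := by
  induction l with
  | nil => rfl
  | cons a l ih =>
    obtain ⟨h1, h2⟩ := List.pairwise_cons.1 h
    simp only [cr, List.map_cons, List.sum_cons, lt_irrefl, if_false, mul_zero, zero_add]
    rw [ih h2]
    congr 1
    · rw [← List.sum_map_mul_left]
      congr 1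
      apply List.map_congr_left
      intro b hb
      simp [h1 b hb]
    · congr 1
      apply List.map_congr_left
      intro b hb
      simp [(h1 b hb).le]

lemma exists_pairwise_list {α : Type*} [DecidableEq α] (φ : α → ℝ) (S : Finset α)
    (h : ∀ a ∈ S, ∀ b ∈ S, φ a = φ b → a = b) :
    ∃ l : List α, (∀ a, a ∈ l ↔ a ∈ S) ∧ l.Pairwise (fun a b => φ a < φ b) := by
  induction S using Finset.induction_on_max_value φ with
  | empty => exact ⟨[], by simp⟩
  | insert a S ha hmax ih =>
    obtain ⟨l, h1, h2⟩ := ih (fun x hx y hy => h x (by simp [hx]) y (by simp [hy]))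
    refine ⟨l ++ [a], fun b => by simp [h1, or_comm], ?_⟩
    rw [List.pairwise_append]
    refine ⟨h2, by simp, fun b hb c hc => ?_⟩
    rw [List.mem_singleton.1 hc]
    have hb' := (h1 b).1 hb
    refine lt_of_le_of_ne (hmax b hb') fun e => ha ?_
    rw [← h b (by simp [hb']) a (by simp) e]
    exact hb'

/-- In a drawing of a bipartite graph, the rotation system sorting the edges at each vertex by the
direction of their initial segments satisfies the crossing identity for any two mod 2 cycles. -/
lemma Drawing.exists_rot {V : Type*} [DecidableEq V] [Fintype V] {G : SimpleGraph V} {P : V → ℂ}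
    {C : V → V → ℝ → ℂ} {d : V → V → ℂ} {ρ : ℝ} (h : Drawing G P C d ρ) {A : Finset V}
    (hA : ∀ u v, G.Adj u v → (u ∈ A ↔ v ∉ A)) :
    ∃ rot, IsRot G rot ∧ ∀ X Y, Cyc G rot ∅ X → Cyc G rot ∅ Y →
      ∑ v, cr (X v) (Y v) (rot v) + pairing A X Y = 0 := by
  classical
  have hinj : ∀ v, ∀ a ∈ Finset.univ.filter (G.Adj v), ∀ b ∈ Finset.univ.filter (G.Adj v),
      arg (d v a) = arg (d v b) → a = b := by
    intro v a ha b hb hab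
    simp only [Finset.mem_filter, Finset.mem_univ, true_and] at ha hb
    by_contra hne
    refine h.dir v a b ha hb hne (Complex.ext_norm_arg ?_ hab)
    rw [h.norm v a ha, h.norm v b hb]
  choose rot hmem hpw using fun v => exists_pairwise_list (fun w => arg (d v w))
    (Finset.univ.filter (G.Adj v)) (hinj v)
  have hr : IsRot G rot := ⟨fun v => (hpw v).imp (fun h e => h.ne (by rw [e])),
    fun v w => by simp [hmem]⟩
  refine ⟨rot, hr, fun X Y hX hY => ?_⟩
  have hcr : ∀ v, cr (X v) (Y v) (rot v) = ∑ w, ∑ w', X v w * Y v w' *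
      if arg (d v w) < arg (d v w') then (1 : ZMod 2) else 0 := by
    intro v
    rw [cr_eq_of_pairwise _ _ _ _ (hpw v), ← List.sum_toFinset _ (hr.nodup v)]
    have hsub : ∀ w, w ∉ (rot v).toFinset → X v w = 0 ∧ Y v w = 0 := by
      intro w hw
      rw [List.mem_toFinset, hr.mem] at hw
      exact ⟨hX.supp _ _ hw, hY.supp _ _ hw⟩
    rw [Finset.sum_subset (Finset.subset_univ _)]
    · refine Finset.sum_congr rfl fun w _ => ?_
      rw [← List.sum_toFinset _ (hr.nodup v)]
      apply Finset.sum_subset (Finset.subset_univ _)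
      intro w' _ hw'
      simp [(hsub w' hw').2]
    · intro w _ hw
      simp [(hsub w hw).1]
  simp only [hcr]
  have cast_eq : ∀ a b : ℤ, a = b → (a : ZMod 2) = (b : ZMod 2) := fun a b h => by rw [h]
  have neg2 : ∀ a : ZMod 2, -a = a := fun a => by linear_combination - a * zmod2_two
  -- the weights of an edge seen from one of its own ends never matter and are set to `0`
  refine cross_sum hA
    (fun u x v => if v = u ∨ v = x then 0 else (edgeTurn P C u x v : ZMod 2))
    (fun u x v => if v = u ∨ v = x then 0 else (edgeTurn' P C u x v : ZMod 2))
    (fun u v => (selfTurn P C u v : ZMod 2)) (fun u v => (upper (P v - P u) : ZMod 2))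
    (fun v w w' => if arg (d v w) < arg (d v w') then (1 : ZMod 2) else 0)
    ?_ ?_ ?_ ?_ ?_ ?_ hX.symm hX.supp (fun v => ?_) hY.symm hY.supp (fun v => ?_)
  · intro u x v e
    by_cases h1 : v = u
    · simp [h1]
    by_cases h2 : v = x
    · simp [h2]
    simp [h1, h2, h.edgeTurn_symm e h1 h2, neg2]
  · intro u x v e
    by_cases h1 : v = u
    · simp [h1]
    by_cases h2 : v = x
    · simp [h2]
    simp [h1, h2, h.edgeTurn'_symm e h1 h2, neg2]
  · intro u v e
    have := upper_neg (sub_ne_zero.2 (h.inj.ne e.ne.symm))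
    rw [neg_sub] at this
    exact_mod_cast cast_eq _ _ this
  · simp
  · intro u x v y e e' h1 h2 h3 h4
    have := cast_eq _ _ (h.turn_disjoint e e' h1 h2 h3 h4)
    push_cast at this
    simp only [h1, h2, h3, h4, h1.symm, h2.symm, h3.symm, h4.symm, or_self, if_false]
    linear_combination this + ((edgeTurn P C u x y : ZMod 2) + edgeTurn' P C v y u) * zmod2_two
  · intro u x v e e' hne
    have := cast_eq _ _ (h.turn_adjacent e e' hne)
    push_cast at this
    simp only [hne, hne.symm, e.ne.symm, e'.ne.symm, or_self, if_false]
    linear_combination this + ((edgeTurn' P C u v x : ZMod 2)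
      - (upper (P v - P u) : ZMod 2) - (selfTurn P C u v : ZMod 2)) * zmod2_two
  · rw [← sum_rot_eq hr X hX.supp]; exact hX.even v (by simp)
  · rw [← sum_rot_eq hr Y hY.supp]; exact hY.even v (by simp)

end Drawings

/-! ### Straightening a plane embedding near the vertices -/

section Straightening

open Set Complex

/-- An arc between two points can be shortened and modified so that it starts and ends with
straight segments of length `ρ` and stays outside the two disks of radius `ρ` in between. -/
lemma exists_straight {g : ℝ → ℂ} (hg : Continuous g) {p q : ℂ} (h0 : g 0 = p) (h1 : g 1 = q)
    {ρ : ℝ} (hρ : 0 < ρ) (hpq : 2 * ρ < ‖p - q‖) :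
    ∃ (c : ℝ → ℂ) (d d' : ℂ), Continuous c ∧ ‖d‖ = ρ ∧ ‖d'‖ = ρ ∧
      (∀ t ∈ Icc (0 : ℝ) 1, c t = p + t * d) ∧ (∀ t ∈ Icc (2 : ℝ) 3, c t = q + (3 - t : ℝ) * d') ∧
      ∀ t ∈ Icc (1 : ℝ) 2, c t ∈ range g ∧ ρ ≤ ‖c t - p‖ ∧ ρ ≤ ‖c t - q‖ := by
  -- `s` is the last time in the disk around `p`
  obtain ⟨s, ⟨hs1, hs2⟩, hsmax⟩ := (isCompact_Icc.inter_right
    (isClosed_le (f := fun t => ‖g t - p‖) (g := fun _ => ρ) (by fun_prop) (by fun_prop))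
    : IsCompact (Icc (0 : ℝ) 1 ∩ {t | ‖g t - p‖ ≤ ρ})).exists_isGreatest
    ⟨0, by simp, by simp [h0, hρ.le]⟩
  have hs2 : ‖g s - p‖ ≤ ρ := hs2
  have hsfar : ∀ t, s < t → t ≤ 1 → ρ < ‖g t - p‖ := by
    intro t ht ht1
    by_contra! hle
    exact absurd (hsmax ⟨⟨hs1.1.trans ht.le, ht1⟩, hle⟩) (not_le.2 ht)
  have hqp : ρ < ‖g 1 - p‖ := by rw [h1, norm_sub_rev]; linarith
  have hs : ‖g s - p‖ = ρ := by
    obtain ⟨r, hr, hre⟩ := intermediate_value_Icc (f := fun t => ‖g t - p‖) hs1.2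
      (by fun_prop) ⟨hs2, hqp.le⟩
    have : r ≤ s := hsmax ⟨⟨hs1.1.trans hr.1, hr.2⟩, hre.le⟩
    rwa [le_antisymm this hr.1] at hre
  -- `t'` is the first time in the disk around `q` afterwards
  obtain ⟨t', ⟨ht1, ht2⟩, htmin⟩ := (isCompact_Icc.inter_right
    (isClosed_le (f := fun t => ‖g t - q‖) (g := fun _ => ρ) (by fun_prop) (by fun_prop))
    : IsCompact (Icc s 1 ∩ {t | ‖g t - q‖ ≤ ρ})).exists_isLeast
    ⟨1, ⟨hs1.2, le_rfl⟩, by simp [h1, hρ.le]⟩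
  have ht2 : ‖g t' - q‖ ≤ ρ := ht2
  have htfar : ∀ t, s ≤ t → t < t' → ρ < ‖g t - q‖ := by
    intro t hst ht
    by_contra! hle
    exact absurd (htmin ⟨⟨hst, ht.le.trans ht1.2⟩, hle⟩) (not_le.2 ht)
  have hsq : ρ < ‖g s - q‖ := by
    have h3 : ‖p - q‖ ≤ ‖g s - p‖ + ‖g s - q‖ := by
      rw [norm_sub_rev (g s) p]
      exact norm_sub_le_norm_sub_add_norm_sub p (g s) q
    linarith
  have ht : ‖g t' - q‖ = ρ := by
    obtain ⟨r, hr, hre⟩ := intermediate_value_Icc' (f := fun t => ‖g t - q‖) ht1.1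
      (by fun_prop) ⟨ht2, hsq.le⟩
    have : t' ≤ r := htmin ⟨⟨hr.1, hr.2.trans ht1.2⟩, hre.le⟩
    rwa [le_antisymm hr.2 this] at hre
  refine ⟨fun t => if t ≤ 1 then p + t * (g s - p) else if t ≤ 2 then g (s + (t - 1) * (t' - s))
    else q + (3 - t : ℝ) * (g t' - q), g s - p, g t' - q, ?_, hs, ht, ?_, ?_, ?_⟩
  · refine Continuous.if_le (by fun_prop) (Continuous.if_le (by fun_prop) (by fun_prop)
      continuous_id continuous_const ?_) continuous_id continuous_const ?_
    · rintro t rfl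
      norm_num
    · rintro t rfl
      norm_num
  · intro t h
    simp [h.2]
  · intro t h
    rcases eq_or_lt_of_le h.1 with rfl | h2
    · norm_num
    · have h3 : ¬ t ≤ 1 := by linarith
      simp only [h3, not_le.2 h2, if_false]
  · intro t h
    have e : (if t ≤ 1 then p + t * (g s - p) else if t ≤ 2 then g (s + (t - 1) * (t' - s))
        else q + (3 - t : ℝ) * (g t' - q)) = g (s + (t - 1) * (t' - s)) := by
      rcases eq_or_lt_of_le h.1 with rfl | h2
      · norm_num
      · simp [not_le.2 h2, h.2]
    dsimp only
    rw [e]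
    set r := s + (t - 1) * (t' - s) with hr
    have hr1 : s ≤ r := by nlinarith [h.1, ht1.1]
    have hr2 : r ≤ t' := by nlinarith [h.2, ht1.1]
    refine ⟨mem_range_self _, ?_, ?_⟩
    · rcases eq_or_lt_of_le hr1 with h2 | h2
      · rw [← h2, hs]
      · exact (hsfar r h2 (hr2.trans ht1.2)).le
    · rcases eq_or_lt_of_le hr2 with h2 | h2
      · rw [h2, ht]
      · exact (htfar r hr1 h2).le

variable {V : Type*} {G : SimpleGraph V}

/-- A radius that is small compared to the distances between vertices and to the distances of
vertices from edges not containing them. -/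
lemma exists_radius [Fintype V] {P : V → ℂ} (hP : Function.Injective P) {I : Sym2 V → Set ℂ}
    (hI : ∀ u v, G.Adj u v → IsClosed (I s(u, v)))
    (hI' : ∀ u v w, G.Adj u v → P w ∈ I s(u, v) → w = u ∨ w = v) :
    ∃ ρ : ℝ, 0 < ρ ∧ (∀ u v, u ≠ v → 2 * ρ < ‖P u - P v‖) ∧
      ∀ u v w, G.Adj u v → w ≠ u → w ≠ v → ∀ z ∈ I s(u, v), ρ ≤ ‖z - P w‖ := by
  have small : ∀ ε : ℝ, 0 < ε → ∀ᶠ ρ in nhdsWithin (0 : ℝ) (Ioi 0), ρ < ε := fun ε hε =>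
    Filter.mem_of_superset (Ioo_mem_nhdsGT hε) fun ρ h => h.2
  have h1 : ∀ᶠ ρ in nhdsWithin (0 : ℝ) (Ioi 0), ∀ u v, u ≠ v → 2 * ρ < ‖P u - P v‖ := by
    refine Filter.eventually_all.2 fun u => Filter.eventually_all.2 fun v => ?_
    by_cases h : u = v
    · simp [h]
    · have hpos : 0 < ‖P u - P v‖ := norm_pos_iff.2 (sub_ne_zero.2 (hP.ne h))
      filter_upwards [small (‖P u - P v‖ / 2) (by positivity)] with ρ hρ _
      linarith
  have h2 : ∀ᶠ ρ in nhdsWithin (0 : ℝ) (Ioi 0), ∀ u v w, G.Adj u v → w ≠ u → w ≠ v →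
      ∀ z ∈ I s(u, v), ρ ≤ ‖z - P w‖ := by
    refine Filter.eventually_all.2 fun u => Filter.eventually_all.2 fun v =>
      Filter.eventually_all.2 fun w => ?_
    by_cases h : G.Adj u v ∧ w ≠ u ∧ w ≠ v
    · have hw : P w ∈ (I s(u, v))ᶜ := fun hm => by
        rcases hI' u v w h.1 hm with e | e
        exacts [h.2.1 e, h.2.2 e]
      obtain ⟨ε, hε, hb⟩ := Metric.isOpen_iff.1 (hI u v h.1).isOpen_compl _ hw
      filter_upwards [small ε hε] with ρ hρ _ _ _ z hz
      by_contra! hlt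
      refine hb (a := z) ?_ hz
      rw [Metric.mem_ball, dist_eq_norm]
      exact hlt.trans hρ
    · exact Filter.Eventually.of_forall fun ρ a b c => absurd ⟨a, b, c⟩ h
  obtain ⟨ρ, ⟨h3, h4⟩, h5⟩ := ((h1.and h2).and self_mem_nhdsWithin).exists
  exact ⟨ρ, h5, h3, h4⟩

/-- Arcs with straight ends that meet the original arcs only far from the vertices form a drawing.
-/
lemma drawing_of_straight {P : V → ℂ} (hP : Function.Injective P) {I : Sym2 V → Set ℂ}
    (hII : ∀ u v u' v', G.Adj u v → G.Adj u' v' → s(u, v) ≠ s(u', v') → ∀ z ∈ I s(u, v),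
      z ∈ I s(u', v') → z ∈ range P)
    {ρ : ℝ} (hρ : 0 < ρ) (hPP : ∀ u v, u ≠ v → 2 * ρ < ‖P u - P v‖)
    (hIP : ∀ u v w, G.Adj u v → w ≠ u → w ≠ v → ∀ z ∈ I s(u, v), ρ ≤ ‖z - P w‖)
    {C : V → V → ℝ → ℂ} {d : V → V → ℂ}
    (cont : ∀ u v, G.Adj u v → Continuous (C u v))
    (rev : ∀ u v t, G.Adj u v → C v u t = C u v (3 - t))
    (start : ∀ u v t, G.Adj u v → t ∈ Icc (0 : ℝ) 1 → C u v t = P u + t * d u v)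
    (hnorm : ∀ u v, G.Adj u v → ‖d u v‖ = ρ)
    (mid : ∀ u v, G.Adj u v → ∀ t ∈ Icc (1 : ℝ) 2, C u v t ∈ I s(u, v) ∧ ρ ≤ ‖C u v t - P u‖ ∧
      ρ ≤ ‖C u v t - P v‖) : Drawing G P C d ρ := by
  have far : ∀ u v, G.Adj u v → ∀ t ∈ Icc (1 : ℝ) 2, ∀ w, ρ ≤ ‖C u v t - P w‖ := by
    intro u v e t ht w
    obtain ⟨h1, h2, h3⟩ := mid u v e t ht
    by_cases hu : w = u
    · rwa [hu]
    by_cases hv : w = v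
    · rwa [hv]
    exact hIP u v w e hu hv _ h1
  have mm : ∀ u v u' v' s t, G.Adj u v → G.Adj u' v' → s(u, v) ≠ s(u', v') →
      s ∈ Icc (1 : ℝ) 2 → t ∈ Icc (1 : ℝ) 2 → C u v s ≠ C u' v' t := by
    intro u v u' v' s t e e' hne hs ht heq
    obtain ⟨w, hw⟩ := hII u v u' v' e e' hne _ (mid u v e s hs).1 (heq ▸ (mid u' v' e' t ht).1)
    have := far u v e s hs w
    rw [hw, sub_self, norm_zero] at this
    linarith
  have snorm : ∀ u v (r : ℝ), G.Adj u v → 0 ≤ r → ‖P u + r * d u v - P u‖ = r * ρ := by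
    intro u v r e hr
    rw [add_sub_cancel_left, norm_mul, hnorm u v e, norm_real, Real.norm_of_nonneg hr]
  have rm : ∀ u v u' v' (r : ℝ) t, G.Adj u v → G.Adj u' v' → s(u, v) ≠ s(u', v') →
      r ∈ Icc (0 : ℝ) 1 → t ∈ Icc (1 : ℝ) 2 → P u + r * d u v ≠ C u' v' t := by
    intro u v u' v' r t e e' hne hr ht heq
    have h1 := far u' v' e' t ht u
    rw [← heq, snorm u v r e hr.1] at h1
    have h2 : r = 1 := le_antisymm hr.2 (by nlinarith)
    subst h2
    rw [← start u v 1 e hr] at heq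
    exact mm u v u' v' 1 t e e' hne (by norm_num) ht heq
  have dir : ∀ u v w, G.Adj u v → G.Adj u w → v ≠ w → d u v ≠ d u w := by
    intro u v w e e' hne heq
    refine mm u v u w 1 1 e e' (fun h => hne (Sym2.congr_right.1 h)) (by norm_num) (by norm_num) ?_
    rw [start u v 1 e (by norm_num), start u w 1 e' (by norm_num), heq]
  have rr : ∀ u v u' v' (r r' : ℝ), G.Adj u v → G.Adj u' v' → s(u, v) ≠ s(u', v') →
      r ∈ Icc (0 : ℝ) 1 → r' ∈ Icc (0 : ℝ) 1 → P u + r * d u v = P u' + r' * d u' v' →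
      u = u' ∧ r = 0 ∧ r' = 0 := by
    intro u v u' v' r r' e e' hne hr hr' heq
    have n1 := snorm u v r e hr.1
    have n2 := snorm u' v' r' e' hr'.1
    have huu : u = u' := by
      by_contra h
      have h3 := hPP u u' h
      have h4 := norm_sub_le_norm_sub_add_norm_sub (P u) (P u + r * d u v) (P u')
      rw [norm_sub_rev (P u) (P u + r * d u v), n1, heq, n2] at h4
      nlinarith [hr.2, hr'.2]
    subst huu
    have hrr : r = r' := by
      rw [heq, n2] at n1
      exact (mul_right_cancel₀ hρ.ne' n1).symm
    subst hrr
    refine ⟨rfl, ?_⟩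
    rw [and_self]
    by_contra hr0
    have h3 := mul_left_cancel₀ (ofReal_ne_zero.2 hr0) (add_left_cancel heq)
    exact dir u v v' e e' (fun h => hne (by rw [h])) h3
  have cases3 : ∀ t ∈ Icc (0 : ℝ) 3, t ∈ Icc (0 : ℝ) 1 ∨ t ∈ Icc (1 : ℝ) 2 ∨
      3 - t ∈ Icc (0 : ℝ) 1 := by
    intro t ht
    rcases le_total t 1 with h | h
    · exact Or.inl ⟨ht.1, h⟩
    rcases le_total t 2 with h' | h'
    · exact Or.inr (Or.inl ⟨h, h'⟩)
    · exact Or.inr (Or.inr ⟨by linarith [ht.2], by linarith⟩)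
  have start' : ∀ u v t, G.Adj u v → 3 - t ∈ Icc (0 : ℝ) 1 →
      C u v t = P v + (3 - t : ℝ) * d v u := by
    intro u v t e ht
    rw [rev v u t e.symm, start v u _ e.symm ht]
  have general : ∀ u x v y s t, G.Adj u x → G.Adj v y → s(u, x) ≠ s(v, y) → s ∈ Icc (0 : ℝ) 3 →
      t ∈ Icc (0 : ℝ) 3 → C u x s = C v y t → (u = v ∧ s = 0 ∧ t = 0) ∨ u = y ∨ x = v ∨ x = y := by
    intro u x v y s t e e' hne hs ht heq
    have sw : s(x, u) ≠ s(v, y) := by rwa [Sym2.eq_swap]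
    have sw' : s(u, x) ≠ s(y, v) := by rwa [Sym2.eq_swap (a := y)]
    have sw2 : s(x, u) ≠ s(y, v) := by rwa [Sym2.eq_swap, Sym2.eq_swap (a := y)]
    rcases cases3 s hs with h1 | h1 | h1 <;> rcases cases3 t ht with h2 | h2 | h2
    · rw [start u x s e h1, start v y t e' h2] at heq
      exact Or.inl (rr u x v y _ _ e e' hne h1 h2 heq)
    · rw [start u x s e h1] at heq
      exact absurd heq (rm u x v y _ _ e e' hne h1 h2)
    · rw [start u x s e h1, start' v y t e' h2] at heq
      exact Or.inr (Or.inl (rr u x y v _ _ e e'.symm sw' h1 h2 heq).1)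
    · rw [start v y t e' h2] at heq
      exact absurd heq.symm (rm v y u x _ _ e' e hne.symm h2 h1)
    · exact absurd heq (mm u x v y _ _ e e' hne h1 h2)
    · rw [start' v y t e' h2] at heq
      exact absurd heq.symm (rm y v u x _ _ e'.symm e sw'.symm h2 h1)
    · rw [start' u x s e h1, start v y t e' h2] at heq
      exact Or.inr (Or.inr (Or.inl (rr x u v y _ _ e.symm e' sw h1 h2 heq).1))
    · rw [start' u x s e h1] at heq
      exact absurd heq (rm x u v y _ _ e.symm e' sw h1 h2)
    · rw [start' u x s e h1, start' v y t e' h2] at heq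
      exact Or.inr (Or.inr (Or.inr (rr x u y v _ _ e.symm e'.symm sw2 h1 h2 heq).1))
  have offball : ∀ u v w (r : ℝ), G.Adj u v → u ≠ w → r ∈ Icc (0 : ℝ) 1 →
      P u + r * d u v ≠ P w := by
    intro u v w r e hne hr heq
    have h1 := snorm u v r e hr.1
    have h2 := hPP w u hne.symm
    rw [heq] at h1
    nlinarith [hr.2]
  have offmid : ∀ u v w t, G.Adj u v → t ∈ Icc (1 : ℝ) 2 → C u v t ≠ P w := by
    intro u v w t e ht heq
    have := far u v e t ht w
    rw [heq, sub_self, norm_zero] at this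
    linarith
  refine ⟨hP, cont, rev, start, hnorm, dir, ?_, ?_, ?_, ?_⟩
  · intro u v w t e hu hv ht
    rcases cases3 t ht with h1 | h1 | h1
    · rw [start u v t e h1]; exact offball u v w t e hu.symm h1
    · exact offmid u v w t e h1
    · rw [start' u v t e h1]; exact offball v u w _ e.symm hv.symm h1
  · intro u v t e ht
    rcases cases3 t ⟨ht.1.le, ht.2⟩ with h1 | h1 | h1
    · rw [start u v t e h1]
      intro heq
      have h2 := snorm u v t e h1.1
      rw [heq, sub_self, norm_zero] at h2
      have := mul_pos ht.1 hρ
      linarith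
    · exact offmid u v u t e h1
    · rw [start' u v t e h1]; exact offball v u u _ e.symm e.ne.symm h1
  · intro u v w s t e e' hne hs ht heq
    rcases general u v u w s t e e' (fun h => hne (Sym2.congr_right.1 h)) hs ht heq with
      h | h | h | h
    · exact h.2
    · exact absurd h e'.ne
    · exact absurd h e.ne.symm
    · exact absurd h hne
  · intro u x v y s t e e' h1 h2 h3 h4 hs ht heq
    have hne : s(u, x) ≠ s(v, y) := by
      intro h
      rcases Sym2.eq_iff.1 h with ⟨h, -⟩ | ⟨h, -⟩
      exacts [h1 h, h2 h]
    rcases general u x v y s t e e' hne hs ht heq with h | h | h | h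
    exacts [h1 h.1, h2 h, h3 h, h4 h]

/-- Every plane embedding of a bipartite graph can be straightened to a drawing. -/
lemma exists_drawing [Fintype V] (hG : IsPlanar G) {A : Set V} (hA : ∀ u v, G.Adj u v → (u ∈ A ↔ v ∉ A)) :
    ∃ P C d ρ, Drawing G P C d ρ := by
  classical
  obtain ⟨p, γ, hp, hγ, hend, hint, hcross⟩ := hG
  let E := Complex.equivRealProdCLM.symm
  let P : V → ℂ := fun v => E (p v)
  have hP : Function.Injective P := E.injective.comp hp
  let I : Sym2 V → Set ℂ := fun e => range fun t => E (γ e t)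
  have hI : ∀ u v, G.Adj u v → IsClosed (I s(u, v)) := fun u v e =>
    (isCompact_range (E.continuous.comp (hγ _ e).1)).isClosed
  have hpt : ∀ u v w t, G.Adj u v → γ s(u, v) t = p w → w = u ∨ w = v := by
    intro u v w t e h
    have h2 : t = 0 ∨ t = 1 := by
      by_contra! hne
      exact hint _ e t hne.1 hne.2 ⟨w, h.symm⟩
    have h3 : p w ∈ ({γ s(u, v) 0, γ s(u, v) 1} : Set (ℝ × ℝ)) := by
      rw [← h]
      rcases h2 with rfl | rfl <;> simp
    rw [hend u v e] at h3
    rcases h3 with h3 | h3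
    exacts [Or.inl (hp h3), Or.inr (hp h3)]
  have hI' : ∀ u v w, G.Adj u v → P w ∈ I s(u, v) → w = u ∨ w = v := by
    rintro u v w e ⟨t, ht⟩
    exact hpt u v w t e (E.injective ht)
  have hII : ∀ u v u' v', G.Adj u v → G.Adj u' v' → s(u, v) ≠ s(u', v') → ∀ z ∈ I s(u, v),
      z ∈ I s(u', v') → z ∈ range P := by
    rintro u v u' v' e e' hne z ⟨s, rfl⟩ ⟨t, ht⟩
    obtain ⟨w, hw⟩ := hcross _ e _ e' hne s t (E.injective ht).symm
    exact ⟨w, congrArg E hw⟩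
  obtain ⟨ρ, hρ, hPP, hIP⟩ := exists_radius hP hI hI'
  have hpath : ∀ u v, G.Adj u v → ∃ g : ℝ → ℂ, Continuous g ∧ g 0 = P u ∧ g 1 = P v ∧
      range g ⊆ I s(u, v) := by
    intro u v e
    have hc : Continuous (fun t => E (γ s(u, v) t)) := E.continuous.comp (hγ _ e).1
    have hE := hend u v e
    have h01 : (γ s(u, v) 0 = p u ∧ γ s(u, v) 1 = p v) ∨
        (γ s(u, v) 0 = p v ∧ γ s(u, v) 1 = p u) := Set.pair_eq_pair_iff.1 hE
    rcases h01 with ⟨h0, h1⟩ | ⟨h0, h1⟩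
    · refine ⟨fun t => E (γ s(u, v) (projIcc 0 1 zero_le_one t)),
        hc.comp continuous_projIcc, ?_, ?_, ?_⟩
      · dsimp only; rw [projIcc_left]; exact congrArg E h0
      · dsimp only; rw [projIcc_right]; exact congrArg E h1
      · rintro _ ⟨t, rfl⟩
        exact mem_range_self _
    · refine ⟨fun t => E (γ s(u, v) (projIcc 0 1 zero_le_one (1 - t))),
        hc.comp (continuous_projIcc.comp (by fun_prop)), ?_, ?_, ?_⟩
      · dsimp only; rw [sub_zero, projIcc_right]; exact congrArg E h1
      · dsimp only; rw [sub_self, projIcc_left]; exact congrArg E h0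
      · rintro _ ⟨t, rfl⟩
        exact mem_range_self _
  have hst : ∀ u v, ∃ (c : ℝ → ℂ) (d d' : ℂ), G.Adj u v → Continuous c ∧ ‖d‖ = ρ ∧ ‖d'‖ = ρ ∧
      (∀ t ∈ Icc (0 : ℝ) 1, c t = P u + t * d) ∧
      (∀ t ∈ Icc (2 : ℝ) 3, c t = P v + (3 - t : ℝ) * d') ∧
      ∀ t ∈ Icc (1 : ℝ) 2, c t ∈ I s(u, v) ∧ ρ ≤ ‖c t - P u‖ ∧ ρ ≤ ‖c t - P v‖ := by
    intro u v
    by_cases e : G.Adj u v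
    · obtain ⟨g, g1, g2, g3, g4⟩ := hpath u v e
      obtain ⟨c, d, d', h1, h2, h3, h4, h5, h6⟩ := exists_straight g1 g2 g3 hρ (hPP u v e.ne)
      exact ⟨c, d, d', fun _ => ⟨h1, h2, h3, h4, h5, fun t ht => ⟨g4 (h6 t ht).1, (h6 t ht).2⟩⟩⟩
    · exact ⟨0, 0, 0, fun h => absurd h e⟩
  choose c d d' hcd using hst
  have hA' : ∀ u v, G.Adj u v → u ∉ A → v ∈ A := fun u v e h => by
    by_contra hv; exact h ((hA u v e).2 hv)
  -- each edge is taken from its end in `A` and reversed for the other direction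
  refine ⟨P, fun u v => if u ∈ A then c u v else fun t => c v u (3 - t),
    fun u v => if u ∈ A then d u v else d' v u, ρ,
    drawing_of_straight hP hII hρ hPP hIP ?_ ?_ ?_ ?_ ?_⟩
  · intro u v e
    split_ifs with h
    · exact (hcd u v e).1
    · exact (hcd v u e.symm).1.comp (by fun_prop)
  · intro u v t e
    by_cases h : u ∈ A
    · have h' := (hA u v e).1 h
      simp [h, h']
    · have h' := hA' u v e h
      simp [h, h']
  · intro u v t e ht
    split_ifs with h
    · exact (hcd u v e).2.2.2.1 t ht
    · dsimp only
      rw [(hcd v u e.symm).2.2.2.2.1 (3 - t) ⟨by linarith [ht.2], by linarith [ht.1]⟩]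
      simp
  · intro u v e
    split_ifs with h
    · exact (hcd u v e).2.1
    · exact (hcd v u e.symm).2.2.1
  · intro u v e t ht
    split_ifs with h
    · exact (hcd u v e).2.2.2.2.2 t ht
    · obtain ⟨h1, h2, h3⟩ := (hcd v u e.symm).2.2.2.2.2 (3 - t)
        ⟨by linarith [ht.2], by linarith [ht.1]⟩
      rw [Sym2.eq_swap]
      exact ⟨h1, h3, h2⟩

end Straightening

/-! ### The bound on the circular chromatic number -/

/-- If `(G, σ)` is a signed bipartite planar simple graph on `n ≥ 4` vertices, then
`χ_c(G, σ) ≤ 4 - 4/⌊(n+2)/2⌋`. -/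
theorem circChrom_le_of_bipartite_planar
    {V : Type*} [Fintype V] (G : SimpleGraph V) (σ : Sym2 V → Bool) (n : ℕ)
    (hcard : Fintype.card V = n) (hn : 4 ≤ n)
    (hbip : IsBipartiteGraph G) (hplanar : IsPlanar G) :
    circChrom G σ ≤ ENNReal.ofReal (4 - 4 / (((n + 2) / 2 : ℕ) : ℝ)) := by
  classical
  obtain ⟨A, hA⟩ := hbip
  obtain ⟨P, C, d, ρ, hD⟩ := exists_drawing hplanar hA
  have hA' : ∀ u v, G.Adj u v → (u ∈ A.toFinset ↔ v ∉ A.toFinset) := by simpa using hA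
  obtain ⟨rot, hr, hT⟩ := hD.exists_rot hA'
  -- `D u v` is the sign of the edge `uv`, negated when it is read from its end outside `A`
  obtain ⟨s, t, ht, hst⟩ := exists_signs hr hA' hT
    (fun u v => if u ∈ A then σ s(u, v) else !σ s(u, v)) (by
      intro u v e
      have h := hA u v e
      rw [Sym2.eq_swap]
      by_cases hu : u ∈ A <;> by_cases hv : v ∈ A <;> simp_all)
  obtain ⟨pos, s', hpos, h⟩ := exists_positions G A hA
    (fun u v => (if u ∈ A then σ s(u, v) else !σ s(u, v)) = true) s t ht hst (by omega)
  refine circChrom_le_of_positions G σ A hA ((n + 2) / 2) (by omega) pos s' (fun v => ?_)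
    fun u v e hu => ?_
  · have := hpos v
    omega
  · have := h u v e
    simpa only [hu, if_true] using this
end

section
/- For every integer n ≥ 4 there exists a signed bipartite planar simple graph (G, σ) on n vertices with χ_c(G, σ) = 4 − 4/⌊(n+2)/2⌋; that is, the upper bound 4 − 4/⌊(n+2)/2⌋ on the circular chromatic number of signed bipartite planar simple graphs on n vertices is tight. -/
/-!
Write `k = ⌊n/2⌋`, so that the claimed value is `4 - 4/(k+1) = 4k/(k+1)`. The graph lives on the
points `0, 1, …, 2k-1` of a line (for odd `n` the last vertex is isolated): `i < j` are adjacent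
when `j = i + 1`, `i + j = 2k - 1` or `i + j = 2k - 3`, and such an edge is positive exactly when
its smaller end `i` is even. Adjacent vertices have different parity, so the graph is bipartite.
It is planar because it has a two-page book embedding: the edges with `i + j = 2k - 3` go below
the line, all others above it, and no two edges on the same side cross (`isPlanar_bookGraph`).

For `r = 4k/(k+1)` the map `j ↦ (j + k [j odd])/(k+1)` is a circular coloring.

For the lower bound let `f` be a circular `r`-coloring with `2 ≤ r < 4` and put `L = r/2`, `η = 1 - r/4` and
`g j = f j - (r/4) [j odd]`. The edge conditions become uniform: for every edge `i < j`, the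
difference `g j - g i` lies in `[η, L - η]` modulo `2L` (`exists_lift`). For `0 ≤ i < k` let `X` and
`Y` be the representatives in `[η, L - η]` of `g (k+i) - g (k+i-1)` and `g (k+i) - g (k-1-i)`.
By induction `|X - Y| ≥ 2iη` (`lift_step` is the inductive step, `lift_gap` the conclusion).
At `i = k - 1` this is compatible with `|X - Y| ≤ L - 2η` only if `2kη ≤ L`, that is,
`r ≥ 4 - 4/(k+1)`.
-/

open scoped ENNReal

/-! ### The signed graph -/

/-- The edges of the extremal graph, as pairs `i < j` of points of `{0, …, 2k-1}`: consecutive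
points, pairs with sum `2k - 1` and pairs with sum `2k - 3`. The last two conditions are written
without truncated subtraction. -/
def BookEdge (k i j : ℕ) : Prop :=
  i < j ∧ j < 2 * k ∧ (j = i + 1 ∨ i + j + 1 = 2 * k ∨ i + j + 3 = 2 * k)

/-- The extremal graph on `Fin n`; vertices with index at least `2k` are isolated. -/
def bookGraph (n k : ℕ) : SimpleGraph (Fin n) where
  Adj u v := BookEdge k u v ∨ BookEdge k v u
  symm := ⟨fun _ _ h => h.symm⟩
  loopless := ⟨fun u h => by rcases h with h | h <;> exact lt_irrefl _ h.1⟩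

/-- The smaller end of an edge. -/
def lo {n : ℕ} : Sym2 (Fin n) → ℕ :=
  Sym2.lift ⟨fun u v => min u.val v.val, fun _ _ => min_comm _ _⟩

/-- The larger end of an edge. -/
def hi {n : ℕ} : Sym2 (Fin n) → ℕ :=
  Sym2.lift ⟨fun u v => max u.val v.val, fun _ _ => max_comm _ _⟩

/-- The signature: an edge is positive when its smaller end is even. -/
def bookSign {n : ℕ} (e : Sym2 (Fin n)) : Bool := decide (lo e % 2 = 0)

lemma exists_eq_of_mem_edgeSet {n k : ℕ} {e : Sym2 (Fin n)} (he : e ∈ (bookGraph n k).edgeSet) :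
    ∃ u v : Fin n, e = s(u, v) ∧ BookEdge k u v ∧ lo e = u ∧ hi e = v := by
  induction e using Sym2.ind with
  | _ u v =>
    rcases he with h | h
    · exact ⟨u, v, rfl, h, min_eq_left h.1.le, max_eq_right h.1.le⟩
    · exact ⟨v, u, Sym2.eq_swap, h, min_eq_right h.1.le, max_eq_left h.1.le⟩

lemma isBipartite_bookGraph (n k : ℕ) : IsBipartiteGraph (bookGraph n k) := by
  refine ⟨{v | v.val % 2 = 0}, fun u v h => ?_⟩
  simp only [Set.mem_ofPred_eq]
  rcases h with ⟨h1, h2, h3⟩ | ⟨h1, h2, h3⟩ <;> omega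

/-! ### Planarity -/

/-- The arc of an edge with ends `a < b` on the horizontal axis: the graph of
`x ↦ ±(x - a) * (b - x)`, parametrized linearly in `x`, below the axis if `a + b = 2k - 3` and
above it otherwise. -/
noncomputable def bookArc {n : ℕ} (k : ℕ) (e : Sym2 (Fin n)) (t : unitInterval) : ℝ × ℝ :=
  ((lo e : ℝ) + t * ((hi e : ℝ) - lo e),
    (if lo e + hi e + 3 = 2 * k then -1 else 1) *
      ((t * ((hi e : ℝ) - lo e)) * ((1 - t) * ((hi e : ℝ) - lo e))))

/-- Of two parabolic arcs over nested intervals the outer one is strictly higher. -/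
lemma nested_parabola {a b a' b' x : ℝ} (ha : a' ≤ a) (hb : b ≤ b') (hax : a < x) (hxb : x < b)
    (h : (x - a) * (b - x) = (x - a') * (b' - x)) : a = a' ∧ b = b' := by
  constructor
  · by_contra hne
    have : a' < a := lt_of_le_of_ne ha (Ne.symm hne)
    nlinarith [mul_pos (sub_pos.2 this) (sub_pos.2 hxb),
      mul_nonneg (sub_nonneg.2 hb) (sub_nonneg.2 (this.trans hax).le)]
  · by_contra hne
    have : b < b' := lt_of_le_of_ne hb hne
    nlinarith [mul_pos (sub_pos.2 this) (sub_pos.2 hax),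
      mul_nonneg (sub_nonneg.2 ha) (sub_nonneg.2 (hxb.trans this).le)]

lemma isPlanar_bookGraph (n k : ℕ) : IsPlanar (bookGraph n k) := by
  refine ⟨fun v => ((v.val : ℝ), 0), bookArc k, ?_, ?_, ?_, ?_, ?_⟩
  · intro u v h
    simpa [Fin.ext_iff] using h
  · intro e he
    obtain ⟨u, v, -, ⟨huv, -⟩, hu, hv⟩ := exists_eq_of_mem_edgeSet he
    have huv' : (u.val : ℝ) < v.val := by exact_mod_cast huv
    refine ⟨by unfold bookArc; fun_prop, fun s t h => ?_⟩
    have h1 := congrArg Prod.fst h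
    simp only [bookArc, hu, hv, add_right_inj] at h1
    exact Subtype.ext (mul_right_cancel₀ (sub_pos.2 huv').ne' h1)
  · intro u v h
    obtain ⟨u', v', h1, -, hu, hv⟩ := exists_eq_of_mem_edgeSet (k := k) (e := s(u, v)) h
    simp only [bookArc, hu, hv]
    rcases Sym2.eq_iff.1 h1 with ⟨rfl, rfl⟩ | ⟨rfl, rfl⟩
    · simp
    · simp [Set.pair_comm]
  · rintro e he t h0 h1 ⟨w, hw⟩
    obtain ⟨u, v, -, ⟨huv, -⟩, hu, hv⟩ := exists_eq_of_mem_edgeSet he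
    have huv' : (0 : ℝ) < v.val - u.val := sub_pos.2 (by exact_mod_cast huv)
    have ht0 : (0 : ℝ) < t := lt_of_le_of_ne t.2.1 (fun h => h0 (Subtype.ext h.symm))
    have ht1 : (0 : ℝ) < 1 - t :=
      sub_pos.2 (lt_of_le_of_ne t.2.2 (fun h => h1 (Subtype.ext h)))
    have h2 := congrArg Prod.snd hw
    simp only [bookArc, hu, hv] at h2
    have hp := mul_pos (mul_pos ht0 huv') (mul_pos ht1 huv')
    split_ifs at h2 <;> linarith
  · intro e he e' he' hne s t hst
    obtain ⟨u, v, rfl, ⟨huv, hvk, huv3⟩, hu, hv⟩ := exists_eq_of_mem_edgeSet he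
    obtain ⟨u', v', rfl, ⟨huv', hvk', huv3'⟩, hu', hv'⟩ := exists_eq_of_mem_edgeSet he'
    -- An arc meets the axis only at its ends, which are vertices.
    by_cases hs0 : s = 0
    · exact ⟨u, by simp [bookArc, hu, hv, hs0]⟩
    by_cases hs1 : s = 1
    · exact ⟨v, by simp [bookArc, hu, hv, hs1]⟩
    exfalso
    have hs0' : (0 : ℝ) < s := lt_of_le_of_ne s.2.1 (fun h => hs0 (Subtype.ext h.symm))
    have hs1' : (0 : ℝ) < 1 - s :=
      sub_pos.2 (lt_of_le_of_ne s.2.2 (fun h => hs1 (Subtype.ext h)))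
    have hR : (0 : ℝ) < v.val - u.val := sub_pos.2 (by exact_mod_cast huv)
    have hR' : (0 : ℝ) < v'.val - u'.val := sub_pos.2 (by exact_mod_cast huv')
    have h1 := congrArg Prod.fst hst
    have h2 := congrArg Prod.snd hst
    simp only [bookArc, hu, hv, hu', hv'] at h1 h2
    have hp := mul_pos (mul_pos hs0' hR) (mul_pos hs1' hR)
    have hq : (0 : ℝ) ≤ (t * ((v'.val : ℝ) - u'.val)) * ((1 - t) * ((v'.val : ℝ) - u'.val)) :=
      mul_nonneg (mul_nonneg t.2.1 hR'.le) (mul_nonneg (sub_nonneg.2 t.2.2) hR'.le)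
    -- The two arcs are on the same side of the axis, at the same height.
    have hside : (u.val + v.val + 3 = 2 * k ↔ u'.val + v'.val + 3 = 2 * k) := by
      by_contra hcon
      split_ifs at h2 <;> first | (exfalso; tauto) | linarith
    have heq : ((s : ℝ) * ((v.val : ℝ) - u.val)) * ((1 - s) * ((v.val : ℝ) - u.val)) =
        (t * ((v'.val : ℝ) - u'.val)) * ((1 - t) * ((v'.val : ℝ) - u'.val)) := by
      split_ifs at h2 <;> first | (exfalso; tauto) | linarith
    have ht0' : (0 : ℝ) < t := by
      refine lt_of_le_of_ne t.2.1 (fun h => ?_)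
      rw [← h] at heq
      simp only [zero_mul] at heq
      linarith
    have ht1' : (0 : ℝ) < 1 - t := by
      refine lt_of_le_of_ne (sub_nonneg.2 t.2.2) (fun h => ?_)
      rw [← h] at heq
      simp only [zero_mul, mul_zero] at heq
      linarith
    obtain ⟨x, hx⟩ : ∃ x : ℝ, x = u.val + s * ((v.val : ℝ) - u.val) := ⟨_, rfl⟩
    have hx' : x = u'.val + t * ((v'.val : ℝ) - u'.val) := hx.trans h1
    have e1 : (s : ℝ) * ((v.val : ℝ) - u.val) = x - u.val := by linarith
    have e2 : (1 - s : ℝ) * ((v.val : ℝ) - u.val) = v.val - x := by linarith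
    have e3 : (t : ℝ) * ((v'.val : ℝ) - u'.val) = x - u'.val := by linarith
    have e4 : (1 - t : ℝ) * ((v'.val : ℝ) - u'.val) = v'.val - x := by linarith
    have l1 := mul_pos hs0' hR
    have l2 := mul_pos hs1' hR
    have l3 := mul_pos ht0' hR'
    have l4 := mul_pos ht1' hR'
    rw [e1, e2, e3, e4] at heq
    rw [e1] at l1
    rw [e2] at l2
    rw [e3] at l3
    rw [e4] at l4
    have o1 : u.val < v'.val := by
      have : (u.val : ℝ) < v'.val := by linarith
      exact_mod_cast this
    have o2 : u'.val < v.val := by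
      have : (u'.val : ℝ) < v.val := by linarith
      exact_mod_cast this
    -- Overlapping edges on the same side are nested.
    have hnest : (u'.val ≤ u.val ∧ v.val ≤ v'.val) ∨ (u.val ≤ u'.val ∧ v'.val ≤ v.val) := by
      omega
    have : u.val = u'.val ∧ v.val = v'.val := by
      rcases hnest with ⟨c1, c2⟩ | ⟨c1, c2⟩
      · obtain ⟨q1, q2⟩ := nested_parabola (a := u.val) (b := v.val) (a' := u'.val) (b' := v'.val)
          (by exact_mod_cast c1) (by exact_mod_cast c2) (by linarith) (by linarith) heq
        exact ⟨by exact_mod_cast q1, by exact_mod_cast q2⟩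
      · obtain ⟨q1, q2⟩ := nested_parabola (a := u'.val) (b := v'.val) (a' := u.val) (b' := v.val)
          (by exact_mod_cast c1) (by exact_mod_cast c2) (by linarith) (by linarith) heq.symm
        exact ⟨by exact_mod_cast q1.symm, by exact_mod_cast q2.symm⟩
    exact hne (by rw [Fin.ext this.1, Fin.ext this.2])

/-! ### The coloring -/

lemma hasCircularColoring_bookGraph (n k : ℕ) (hk : 1 ≤ k) (hn : n ≤ 2 * k + 1) :
    HasCircularColoring (bookGraph n k) bookSign (4 * k / (k + 1) : ℝ) := by
  have hk0 : (1 : ℝ) ≤ k := by exact_mod_cast hk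
  have hpos : (0 : ℝ) < k + 1 := by linarith
  refine ⟨fun v => (v.val + (if v.val % 2 = 0 then 0 else (k : ℝ))) / (k + 1), ?_, ?_⟩
  · intro v
    dsimp only
    constructor
    · split_ifs <;> positivity
    · rw [div_lt_div_iff_of_pos_right hpos]
      split_ifs with h
      · have : v.val ≤ 2 * k := by omega
        have : (v.val : ℝ) ≤ 2 * k := by exact_mod_cast this
        linarith
      · have : v.val < 2 * k := by omega
        have : (v.val : ℝ) < 2 * k := by exact_mod_cast this
        linarith
  · -- Both conditions are symmetric in the ends, so only edges with `u < v` need a computation.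
    have key : ∀ u v : Fin n, BookEdge k u v →
        (if bookSign s(u, v) then
          1 ≤ |(u.val + (if u.val % 2 = 0 then 0 else (k : ℝ))) / (k + 1) -
              (v.val + (if v.val % 2 = 0 then 0 else (k : ℝ))) / (k + 1)| ∧
            |(u.val + (if u.val % 2 = 0 then 0 else (k : ℝ))) / (k + 1) -
              (v.val + (if v.val % 2 = 0 then 0 else (k : ℝ))) / (k + 1)| ≤ 4 * k / (k + 1) - 1
        else
          |(u.val + (if u.val % 2 = 0 then 0 else (k : ℝ))) / (k + 1) -
              (v.val + (if v.val % 2 = 0 then 0 else (k : ℝ))) / (k + 1)| ≤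
                4 * k / (k + 1) / 2 - 1 ∨
          4 * k / (k + 1) / 2 + 1 ≤
            |(u.val + (if u.val % 2 = 0 then 0 else (k : ℝ))) / (k + 1) -
              (v.val + (if v.val % 2 = 0 then 0 else (k : ℝ))) / (k + 1)|) := by
      rintro u v ⟨h1, h2, h3⟩
      have hlo : lo s(u, v) = u.val := min_eq_left h1.le
      have b1 : (u.val : ℝ) + 1 ≤ v.val := by exact_mod_cast h1
      have b2 : (v.val : ℝ) + 1 ≤ 2 * k := by exact_mod_cast h2
      have b3 : (0 : ℝ) ≤ u.val := by positivity
      have c1 : (4 * k / (k + 1) - 1 : ℝ) = (3 * k - 1) / (k + 1) := by field_simp; ring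
      have c2 : (4 * k / (k + 1) / 2 - 1 : ℝ) = (k - 1) / (k + 1) := by field_simp; ring
      have c3 : (1 : ℝ) = (k + 1) / (k + 1) := by field_simp
      rw [← sub_div, abs_div, abs_of_pos hpos, c1, c2]
      by_cases hu : u.val % 2 = 0
      · have hv : ¬ v.val % 2 = 0 := by omega
        rw [if_pos (by simp [bookSign, hlo, hu]), if_pos hu, if_neg hv,
          abs_of_nonpos (by linarith)]
        constructor
        · rw [le_div_iff₀ hpos]; linarith
        · rw [div_le_div_iff_of_pos_right hpos]; linarith
      · have hv : v.val % 2 = 0 := by omega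
        rw [if_neg (by simp [bookSign, hlo, hu]), if_neg hu, if_pos hv]
        left
        rw [div_le_div_iff_of_pos_right hpos, abs_le]
        constructor <;> linarith
    intro u v h
    rcases h with h | h
    · exact key u v h
    · have := key v u h
      rwa [Sym2.eq_swap, abs_sub_comm] at this

/-! ### The lower bound -/

/-- The shifted color of a vertex: odd vertices are moved back by a quarter turn. -/
noncomputable def shifted {n : ℕ} (r : ℝ) (f : Fin n → ℝ) (v : Fin n) : ℝ :=
  f v - if v.val % 2 = 0 then 0 else r / 4

/-- After the shift, positive and negative edges impose the same condition: from the smaller to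
the larger end the shifted color advances, modulo `r`, by an amount in
`[1 - r/4, r/2 - (1 - r/4)]`. -/
lemma exists_lift {n k : ℕ} {r : ℝ} (hr : 2 ≤ r) {f : Fin n → ℝ}
    (hf : IsCircularColoring (bookGraph n k) bookSign r f) {u v : Fin n} (h : BookEdge k u v) :
    ∃ z : ℤ, 1 - r / 4 ≤ shifted r f v - shifted r f u + z * r ∧
      shifted r f v - shifted r f u + z * r ≤ r / 2 - (1 - r / 4) := by
  have hc := hf.2 u v (Or.inl h)
  obtain ⟨h1, h2, h3⟩ := h
  have hlo : lo s(u, v) = u.val := min_eq_left h1.le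
  obtain ⟨u0, u1⟩ := hf.1 u
  obtain ⟨v0, v1⟩ := hf.1 v
  unfold shifted
  by_cases hu : u.val % 2 = 0
  · have hv : ¬ v.val % 2 = 0 := by omega
    rw [if_pos (by simp [bookSign, hlo, hu])] at hc
    rw [if_pos hu, if_neg hv]
    rcases le_total (f u) (f v) with hle | hle
    · rw [abs_of_nonpos (by linarith)] at hc
      exact ⟨0, by push_cast; linarith, by push_cast; linarith⟩
    · rw [abs_of_nonneg (by linarith)] at hc
      exact ⟨1, by push_cast; linarith, by push_cast; linarith⟩
  · have hv : v.val % 2 = 0 := by omega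
    rw [if_neg (by simp [bookSign, hlo, hu])] at hc
    rw [if_neg hu, if_pos hv]
    rcases hc with hc | hc
    · rw [abs_le] at hc
      exact ⟨0, by push_cast; linarith, by push_cast; linarith⟩
    · rcases le_abs.1 hc with hc | hc
      · exact ⟨1, by push_cast; linarith, by push_cast; linarith⟩
      · exact ⟨-1, by push_cast; linarith, by push_cast; linarith⟩

/-- The only multiple of `r` strictly between `-r` and `r` is `0`. -/
lemma eq_zero_of_abs_lt {r x : ℝ} (z : ℤ) (hx : x = z * r) (h1 : -r < x) (h2 : x < r) : x = 0 := by
  have hr : 0 < r := by linarith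
  have a1 : (z : ℝ) < 1 := by
    by_contra hcon
    nlinarith
  have a2 : (-1 : ℝ) < z := by
    by_contra hcon
    nlinarith
  have a1' : z < 1 := by exact_mod_cast a1
  have a2' : -1 < z := by exact_mod_cast a2
  have : z = 0 := by omega
  simp [hx, this]

/-- The inductive step. Here `b, a, d, t, s` are the shifted colors of the vertices
`k+i-1, k+i, k-1-i, k-2-i, k+i+1`, the numbers `X, Y` represent `a - b, a - d` modulo `2L`, and
`U, V, X', Y'` represent `d - t, b - t, s - a, s - t`. Since `U - V` and `X - Y` are congruent and
small they agree, so both `V + X = U + Y` and `2L - (V + X) = 2L - (U + Y)` exceed `|X - Y|` by at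
least `2η`; and `X' - Y'` is congruent to `-(V + X)`. -/
lemma lift_step {L η a b d t s X Y U V X' Y' c : ℝ} (hη : 0 < η)
    (hX : η ≤ X ∧ X ≤ L - η) (hY : η ≤ Y ∧ Y ≤ L - η)
    (hU : η ≤ U ∧ U ≤ L - η) (hV : η ≤ V ∧ V ≤ L - η)
    (hX' : η ≤ X' ∧ X' ≤ L - η) (hY' : η ≤ Y' ∧ Y' ≤ L - η)
    (zX zY zU zV zX' zY' : ℤ)
    (eX : X = a - b + zX * (2 * L)) (eY : Y = a - d + zY * (2 * L))
    (eU : U = d - t + zU * (2 * L)) (eV : V = b - t + zV * (2 * L))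
    (eX' : X' = s - a + zX' * (2 * L)) (eY' : Y' = s - t + zY' * (2 * L))
    (hc : c ≤ |X - Y|) : c + 2 * η ≤ |X' - Y'| := by
  have hUV : (U - V) - (X - Y) = 0 := by
    refine eq_zero_of_abs_lt (r := 2 * L) (zU - zV - zX + zY) ?_ (by linarith) (by linarith)
    push_cast
    rw [eU, eV, eX, eY]
    ring
  -- The representative of `-(V + X)` is either itself or its translate by `2L`.
  have hz : X' - Y' = -(V + X) ∨ X' - Y' = 2 * L - (V + X) := by
    by_cases hlt : X' - Y' + (V + X) < 2 * L
    · left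
      have := eq_zero_of_abs_lt (r := 2 * L) (x := X' - Y' + (V + X)) (zX' - zY' + zV + zX)
        (by push_cast; rw [eX', eY', eV, eX]; ring) (by linarith) hlt
      linarith
    · right
      have := eq_zero_of_abs_lt (r := 2 * L) (x := X' - Y' + (V + X) - 2 * L)
        (zX' - zY' + zV + zX - 1)
        (by push_cast; rw [eX', eY', eV, eX]; ring) (by linarith) (by linarith)
      linarith
  rcases hz with hz | hz
  · have : V + X ≤ |X' - Y'| := by rw [hz, abs_neg]; exact le_abs_self _
    rcases le_abs.1 hc with h | h <;> linarith
  · have : 2 * L - (V + X) ≤ |X' - Y'| := by rw [hz]; exact le_abs_self _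
    rcases le_abs.1 hc with h | h <;> linarith

/-- The gap between the two representatives at level `i` is at least `2iη`, `η = 1 - r/4`. At level
`0` the vertices `k + i - 1` and `k - 1 - i` coincide and the gap may be `0`. -/
lemma lift_gap {n k : ℕ} {r : ℝ} (hr : 2 ≤ r) (hr4 : r < 4) {f : Fin n → ℝ}
    (hf : IsCircularColoring (bookGraph n k) bookSign r f) (hn : 2 * k ≤ n) (i : ℕ) :
    ∀ a b d : Fin n, a.val = k + i → b.val + 1 = k + i → d.val + 1 + i = k →
      ∃ (X Y : ℝ) (zX zY : ℤ),
        (1 - r / 4 ≤ X ∧ X ≤ r / 2 - (1 - r / 4)) ∧ (1 - r / 4 ≤ Y ∧ Y ≤ r / 2 - (1 - r / 4)) ∧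
        X = shifted r f a - shifted r f b + zX * (2 * (r / 2)) ∧
        Y = shifted r f a - shifted r f d + zY * (2 * (r / 2)) ∧
        i * (2 * (1 - r / 4)) ≤ |X - Y| := by
  have hL : 2 * (r / 2) = r := by ring
  rw [hL]
  induction i with
  | zero =>
    intro a b d ha hb hd
    have hbd : b = d := Fin.ext (by omega)
    subst hbd
    obtain ⟨z, h1, h2⟩ := exists_lift hr hf (u := b) (v := a) ⟨by omega, by omega, by omega⟩
    exact ⟨_, _, z, z, ⟨h1, h2⟩, ⟨h1, h2⟩, rfl, rfl, by simp⟩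
  | succ i ih =>
    intro s a t hs ha ht
    obtain ⟨b, hb⟩ : ∃ b : Fin n, b.val + 1 = k + i := ⟨⟨k + i - 1, by omega⟩, by simp; omega⟩
    obtain ⟨d, hd⟩ : ∃ d : Fin n, d.val + 1 + i = k := ⟨⟨k - 1 - i, by omega⟩, by simp; omega⟩
    obtain ⟨X, Y, zX, zY, hX, hY, eX, eY, hc⟩ := ih a b d (by omega) hb hd
    obtain ⟨zU, hU⟩ := exists_lift hr hf (u := t) (v := d) ⟨by omega, by omega, by omega⟩
    obtain ⟨zV, hV⟩ := exists_lift hr hf (u := t) (v := b) ⟨by omega, by omega, by omega⟩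
    obtain ⟨zX', hX'⟩ := exists_lift hr hf (u := a) (v := s) ⟨by omega, by omega, by omega⟩
    obtain ⟨zY', hY'⟩ := exists_lift hr hf (u := t) (v := s) ⟨by omega, by omega, by omega⟩
    refine ⟨_, _, zX', zY', hX', hY', rfl, rfl, ?_⟩
    have := lift_step (L := r / 2) (η := 1 - r / 4) (by linarith) hX hY hU hV hX' hY'
      zX zY zU zV zX' zY' (by rw [hL]; exact eX) (by rw [hL]; exact eY)
      (by rw [hL]) (by rw [hL]) (by rw [hL]) (by rw [hL]) hc
    push_cast
    linarith

lemma le_of_isCircularColoring {n k : ℕ} (hk : 1 ≤ k) {r : ℝ} (hr : 2 ≤ r) {f : Fin n → ℝ}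
    (hf : IsCircularColoring (bookGraph n k) bookSign r f) (hn : 2 * k ≤ n) :
    4 - 4 / ((k : ℝ) + 1) ≤ r := by
  have hpos : (0 : ℝ) < k + 1 := by positivity
  rcases le_or_gt 4 r with h4 | h4
  · have : 0 < 4 / ((k : ℝ) + 1) := by positivity
    linarith
  obtain ⟨i, rfl⟩ : ∃ i, k = i + 1 := ⟨k - 1, by omega⟩
  obtain ⟨X, Y, -, -, hX, hY, -, -, hc⟩ := lift_gap hr h4 hf hn i
    ⟨i + 1 + i, by omega⟩ ⟨i + i, by omega⟩ ⟨0, by omega⟩ rfl (by simp; omega) (by simp; omega)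
  have hXY : |X - Y| ≤ r / 2 - 2 * (1 - r / 4) := abs_le.2 ⟨by linarith, by linarith⟩
  rw [sub_le_comm, le_div_iff₀ hpos]
  push_cast
  nlinarith

/-- For every `n ≥ 4` there is a signed bipartite planar simple graph on `n` vertices whose
circular chromatic number is exactly `4 - 4/⌊(n+2)/2⌋`; i.e. the upper bound for signed
bipartite planar simple graphs on `n` vertices is tight. -/
theorem exists_bipartite_planar_circChrom_eq (n : ℕ) (hn : 4 ≤ n) :
    ∃ (G : SimpleGraph (Fin n)) (σ : Sym2 (Fin n) → Bool),
      IsBipartiteGraph G ∧ IsPlanar G ∧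
      circChrom G σ = ENNReal.ofReal (4 - 4 / (((n + 2) / 2 : ℕ) : ℝ)) := by
  obtain ⟨k, hk⟩ : ∃ k, k = n / 2 := ⟨_, rfl⟩
  have hm : (n + 2) / 2 = k + 1 := by omega
  have hk2 : (2 : ℝ) ≤ k := by
    have : 2 ≤ k := by omega
    exact_mod_cast this
  refine ⟨bookGraph n k, bookSign, isBipartite_bookGraph n k, isPlanar_bookGraph n k, ?_⟩
  rw [hm]
  push_cast
  have hval : (4 - 4 / ((k : ℝ) + 1)) = 4 * k / (k + 1) := by field_simp; ring
  apply le_antisymm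
  · refine sInf_le ⟨_, ⟨?_, ?_⟩, rfl⟩
    · rw [hval, le_div_iff₀ (by linarith)]
      linarith
    · rw [hval]
      exact hasCircularColoring_bookGraph n k (by omega) (by omega)
  · refine le_sInf ?_
    rintro _ ⟨r, ⟨hr, f, hf⟩, rfl⟩
    exact ENNReal.ofReal_le_ofReal (le_of_isCircularColoring (by omega) hr hf (by omega))
end
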